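/- Every planar simple graph with maximum degree at most 8 admits a planar octilinear drawing in which every edge has at most two bends. -/

import Mathlib

/-!
# Two-bend octilinear drawings of planar graphs of maximum degree eight

**From topology to combinatorics.** A generic shear turns the given planar drawing into a plane
straight-line graph in which distinct points have distinct abscissae. For two paths of such a graph,
count modulo two the pairs consisting of an endpoint of a segment of one path and a segment of the
other path below or above it. This parity depends only on the ends of the paths, and comparing the
three pairs of paths of a theta subgraph shows that the paths leave its two branch vertices in
opposite cyclic orders (`theta_plane`). This property of the cyclic orders of the neighbours is all
that is kept of the drawing (`Rotation`, `exists_rotation`).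

**An upward sweep.** From such a rotation system a sweep over each connected component is built by
induction (`exists_diag`). A sweep line is a word of *strands*, edges with a lower end already passed
and an upper end to come. Cut vertices are handled by splitting the graph and inserting one sweep
into another (`Diag.join`, `Diag.graft`). Without cut vertices, one starts at `c` with leftmost edge
`(c, u)`, picks the neighbour `t` of `u` next to `c`, sweeps the component `K` of `c` in the graph
minus `u` and `t` vertex by vertex (`exists_sweep`), and continues with the rest of the graph. That
the strands into the next vertex are consecutive in the word follows from the theta property, by
comparing the orientations of tripods below and above the sweep line (`no_both`). When only `u` and
`t` remain, they are passed together and the edge `ut` turns round above them, a *cap*. As a result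
every vertex, with the exception of the start and of vertices of degree one, has strands both below
and above it. A discharging argument on neighbouring strands with a common tail (`Run.twins_le`)
shows that the start can be chosen of degree at most seven.

**Columns and rows.** Each vertex gets a row of its own in the order of the sweep, with the edge of a
cap subdivided at a phantom vertex. Each strand gets a vertical column, such that the columns respect
the order of the sweep line. At every vertex one strand above, if there is any, and one strand below,
if there is any, lie in the column of the vertex, and at most three strands lie on either side of it,
because there are at most eight strands, and at most seven if they all go up or all go down
(`exists_layout`, `exists_plan`).

**The drawing.** With rows far apart, a strand is drawn as a *port* of slope `-1`, `0` or `1` from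
its lower end to its column, a vertical piece, and a port of slope `-1`, `0` or `1` to its upper end.
The slopes of the at most three strands on one side of a vertex are assigned so that they do not
cross (`Layout.exists_slopes`, `Frame.meet`). An ordinary edge has two bends. A cap consists of two
strands that leave their lower ends vertically; as one of them also enters the phantom vertex
vertically, the cap has two bends as well (`Frame.cap_poly`).
-/

/-!
Common definitions: polylines, octilinear drawings, planarity, triconnectivity.
-/

/-- A polyline: a sequence of `len + 1` points `pt 0, pt 1, …, pt len`,
consisting of `len ≥ 1` segments. (Values of `pt` beyond `len` are irrelevant.) -/
structure Polyline where
  len : ℕ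
  len_pos : 1 ≤ len
  pt : ℕ → ℝ × ℝ

namespace Polyline

/-- The number of bends of a polyline (its interior points `pt 1, …, pt (len-1)`). -/
def bends (P : Polyline) : ℕ := P.len - 1

/-- Piecewise-linear parametrization of the polyline on the interval `[0, len]`. -/
noncomputable def param (P : Polyline) (s : ℝ) : ℝ × ℝ :=
  P.pt ⌊s⌋.toNat + (s - (⌊s⌋.toNat : ℝ)) • (P.pt (⌊s⌋.toNat + 1) - P.pt ⌊s⌋.toNat)

/-- The image (trace) of the polyline in the plane. -/
noncomputable def image (P : Polyline) : Set (ℝ × ℝ) :=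
  P.param '' Set.Icc 0 (P.len : ℝ)

/-- The polyline is a simple curve. -/
def Simple (P : Polyline) : Prop :=
  Set.InjOn P.param (Set.Icc 0 (P.len : ℝ))

/-- Every segment is nondegenerate, and no two consecutive segments are collinear. -/
def Proper (P : Polyline) : Prop :=
  (∀ i < P.len, P.pt i ≠ P.pt (i + 1)) ∧
  (∀ i, i + 1 < P.len → ¬ Collinear ℝ ({P.pt i, P.pt (i + 1), P.pt (i + 2)} : Set (ℝ × ℝ)))

/-- The segment from `a` to `b` is horizontal, vertical, or diagonal at `45°`. -/
def OctiSeg (a b : ℝ × ℝ) : Prop :=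
  b.2 - a.2 = 0 ∨ b.1 - a.1 = 0 ∨ b.2 - a.2 = b.1 - a.1 ∨ b.2 - a.2 = -(b.1 - a.1)

/-- The polyline is octilinear: proper, with all segments in octilinear directions. -/
def Octilinear (P : Polyline) : Prop :=
  P.Proper ∧ ∀ i < P.len, OctiSeg (P.pt i) (P.pt (i + 1))

end Polyline

/-- Embedding of the integer grid into the real plane. -/
def toR (p : ℤ × ℤ) : ℝ × ℝ := ((p.1 : ℝ), (p.2 : ℝ))

/-- A polyline drawing of a simple graph `G` in the plane:
an injective placement of the vertices and, for each edge, a polyline whose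
endpoints are the points of the edge's endvertices, with nondegenerate segments
and no two consecutive segments collinear. -/
structure PolyDrawing {V : Type*} (G : SimpleGraph V) where
  pos : V → ℝ × ℝ
  inj : Function.Injective pos
  poly : Sym2 V → Polyline
  ends : ∀ u v, G.Adj u v →
    ({(poly s(u, v)).pt 0, (poly s(u, v)).pt (poly s(u, v)).len} : Set (ℝ × ℝ)) =
      {pos u, pos v}
  proper : ∀ e ∈ G.edgeSet, (poly e).Proper

/-- A polyline drawing is planar: every edge-polyline is a simple curve meeting the
vertex points exactly in its two endpoints, and polylines of distinct edges intersect
only in images of common endvertices. -/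
def PolyDrawing.IsPlanar {V : Type*} {G : SimpleGraph V} (D : PolyDrawing G) : Prop :=
  (∀ e ∈ G.edgeSet, (D.poly e).Simple) ∧
  (∀ u v, G.Adj u v →
    (D.poly s(u, v)).image ∩ Set.range D.pos = {D.pos u, D.pos v}) ∧
  (∀ e ∈ G.edgeSet, ∀ e' ∈ G.edgeSet, e ≠ e' →
    (D.poly e).image ∩ (D.poly e').image ⊆ D.pos '' {w | w ∈ e ∧ w ∈ e'})

/-- A simple graph is planar if it admits a planar polyline drawing in `ℝ²`. -/
def GraphPlanar {V : Type*} (G : SimpleGraph V) : Prop :=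
  ∃ D : PolyDrawing G, D.IsPlanar

/-- An octilinear drawing of a simple graph `G`: vertices are placed injectively on the
integer grid and each edge is drawn as an octilinear polyline between its endvertices. -/
structure OctiDrawing {V : Type*} (G : SimpleGraph V) where
  pos : V → ℤ × ℤ
  inj : Function.Injective pos
  poly : Sym2 V → Polyline
  ends : ∀ u v, G.Adj u v →
    ({(poly s(u, v)).pt 0, (poly s(u, v)).pt (poly s(u, v)).len} : Set (ℝ × ℝ)) =
      {toR (pos u), toR (pos v)}
  octi : ∀ e ∈ G.edgeSet, (poly e).Octilinear

/-- An octilinear drawing is planar: every edge-polyline is a simple curve meeting the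
vertex points exactly in its two endpoints, and polylines of distinct edges intersect
only in images of common endvertices. -/
def OctiDrawing.IsPlanar {V : Type*} {G : SimpleGraph V} (D : OctiDrawing G) : Prop :=
  (∀ e ∈ G.edgeSet, (D.poly e).Simple) ∧
  (∀ u v, G.Adj u v →
    (D.poly s(u, v)).image ∩ Set.range (fun w => toR (D.pos w)) =
      {toR (D.pos u), toR (D.pos v)}) ∧
  (∀ e ∈ G.edgeSet, ∀ e' ∈ G.edgeSet, e ≠ e' →
    (D.poly e).image ∩ (D.poly e').image ⊆
      (fun w => toR (D.pos w)) '' {w | w ∈ e ∧ w ∈ e'})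

/-- The total number of bends of an octilinear drawing. -/
noncomputable def OctiDrawing.totalBends {V : Type*} [Fintype V] {G : SimpleGraph V}
    (D : OctiDrawing G) : ℕ :=
  ∑ e ∈ G.edgeSet.toFinite.toFinset, (D.poly e).bends

/-- The union of the images of the polylines of a set `S` of edges. -/
noncomputable def edgesImage {V : Type*} {G : SimpleGraph V} (D : OctiDrawing G)
    (S : Set (Sym2 V)) : Set (ℝ × ℝ) :=
  ⋃ e ∈ S, (D.poly e).image

/-- The interior (in the drawing `D`) of the closed curve formed by the edges in `S`:
the union of the bounded connected components of the complement of the curve. -/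
noncomputable def interiorOf {V : Type*} {G : SimpleGraph V} (D : OctiDrawing G)
    (S : Set (Sym2 V)) : Set (ℝ × ℝ) :=
  {z | z ∉ edgesImage D S ∧ Bornology.IsBounded (connectedComponentIn (edgesImage D S)ᶜ z)}

/-- A graph is triconnected if it has at least `4` vertices and deleting
any at most `2` vertices leaves it connected. -/
def Triconnected {V : Type*} [Fintype V] (G : SimpleGraph V) : Prop :=
  4 ≤ Fintype.card V ∧ ∀ S : Set V, S.ncard ≤ 2 → (G.induce Sᶜ).Connected

/-- The maximum degree of `G` is at most `k`. -/
def MaxDegLE {V : Type*} (G : SimpleGraph V) (k : ℕ) : Prop :=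
  ∀ v, (G.neighborSet v).ncard ≤ k

/-! ### Parity of segment incidences and plane theta graphs -/

set_option linter.unusedSimpArgs false
set_option linter.unusedSectionVars false

/-- Indicator of a proposition with values in `ZMod 2`. -/
noncomputable def ind (P : Prop) : ZMod 2 := open Classical in if P then 1 else 0

/-- Slope of the line through two points (meaningful when the abscissae differ). -/
noncomputable def slp (p q : ℝ × ℝ) : ℝ := (q.2 - p.2) / (q.1 - p.1)

/-- Height at abscissa `x` of the line through `p` and `q`. -/
noncomputable def lnv (p q : ℝ × ℝ) (x : ℝ) : ℝ := p.2 + slp p q * (x - p.1)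

/-- `z` lies strictly below the segment `pq`. -/
noncomputable def blw (p q z : ℝ × ℝ) : ZMod 2 :=
  ind ((p.1 < z.1 ∧ z.1 < q.1 ∨ q.1 < z.1 ∧ z.1 < p.1) ∧ z.2 < lnv p q z.1)

/-- `p` lies strictly above the segment `zw`. -/
noncomputable def abv (z w p : ℝ × ℝ) : ZMod 2 :=
  ind ((z.1 < p.1 ∧ p.1 < w.1 ∨ w.1 < p.1 ∧ p.1 < z.1) ∧ lnv z w p.1 < p.2)

/-- The rays from `p` to `q` and `z` go to the same side and the ray to `z` is below. -/
noncomputable def tau (p q z : ℝ × ℝ) : ZMod 2 :=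
  ind ((p.1 < q.1 ∧ p.1 < z.1 ∧ slp p z < slp p q) ∨
    (q.1 < p.1 ∧ z.1 < p.1 ∧ slp p q < slp p z))

/-- `tau` summed over the common endpoints of the segments `pq` and `zw`. -/
noncomputable def tee (p q z w : ℝ × ℝ) : ZMod 2 := open Classical in
  (if p = z then tau p q w else 0) + (if p = w then tau p q z else 0) +
  (if q = z then tau q p w else 0) + (if q = w then tau q p z else 0)

/-- The parity of incidences of two segments `pq` and `zw`: ends of `zw` strictly below `pq`, and ends
of `pq` strictly above `zw`. -/
noncomputable def exx (p q z w : ℝ × ℝ) : ZMod 2 :=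
  blw p q z + blw p q w + abv z w p + abv z w q

theorem ind_congr {P Q : Prop} (h : P ↔ Q) : ind P = ind Q := by rw [propext h]

theorem slp_comm (p q : ℝ × ℝ) : slp p q = slp q p := by
  unfold slp; rw [← neg_sub p.2, ← neg_sub p.1, neg_div_neg_eq]

theorem lnv_comm {p q : ℝ × ℝ} (h : p.1 ≠ q.1) (x : ℝ) : lnv p q x = lnv q p x := by
  unfold lnv slp
  have h1 : q.1 - p.1 ≠ 0 := sub_ne_zero.2 h.symm
  have h2 : p.1 - q.1 ≠ 0 := sub_ne_zero.2 h
  rw [← neg_sub q.1 p.1, ← neg_sub q.2 p.2, neg_div_neg_eq]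
  field_simp
  ring

theorem blw_comm {p q : ℝ × ℝ} (h : p.1 ≠ q.1) (z) : blw p q z = blw q p z := by
  unfold blw; rw [lnv_comm h]; apply ind_congr; tauto

theorem abv_comm {p q : ℝ × ℝ} (h : p.1 ≠ q.1) (z) : abv p q z = abv q p z := by
  unfold abv; rw [lnv_comm h]; apply ind_congr; tauto

theorem lnv_left (p q : ℝ × ℝ) : lnv p q p.1 = p.2 := by simp [lnv]
theorem lnv_right {p q : ℝ × ℝ} (h : p.1 ≠ q.1) : lnv p q q.1 = q.2 := by
  rw [lnv_comm h, lnv_left]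

/-- Points of the segment `pq` are the points of its line over the interval of abscissae. -/
theorem mem_segment_lnv {p q : ℝ × ℝ} (h : p.1 < q.1) {x : ℝ} (h1 : p.1 ≤ x) (h2 : x ≤ q.1) :
    (x, lnv p q x) ∈ segment ℝ p q := by
  have hd : 0 < q.1 - p.1 := sub_pos.2 h
  refine ⟨(q.1 - x) / (q.1 - p.1), (x - p.1) / (q.1 - p.1), ?_, ?_, ?_, ?_⟩
  · exact div_nonneg (by linarith) hd.le
  · exact div_nonneg (by linarith) hd.le
  · field_simp; ring
  · ext
    · simp; field_simp; ring
    · simp [lnv, slp]; field_simp; ring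

/-- Two affine functions on an interval whose order at the ends differs agree somewhere. -/
theorem exists_lnv_eq {p q z w : ℝ × ℝ} {L R : ℝ} (hLR : L < R)
    (h1 : lnv p q L < lnv z w L) (h2 : lnv z w R < lnv p q R) :
    ∃ x, L ≤ x ∧ x ≤ R ∧ lnv p q x = lnv z w x := by
  have hc : ContinuousOn (fun x => lnv p q x - lnv z w x) (Set.Icc L R) := by
    unfold lnv; fun_prop
  have := intermediate_value_Icc hLR.le hc
  obtain ⟨x, hx, h⟩ := this (show (0:ℝ) ∈ _ from ⟨by simp; linarith, by simp; linarith⟩)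
  exact ⟨x, hx.1, hx.2, by simpa [sub_eq_zero] using h⟩

theorem lnv_iff_of_disjoint {p q z w : ℝ × ℝ} (hpq : p.1 < q.1) (hzw : z.1 < w.1)
    (hd : Disjoint (segment ℝ p q) (segment ℝ z w)) {L R : ℝ} (hLR : L < R)
    (h1 : p.1 ≤ L) (h2 : z.1 ≤ L) (h3 : R ≤ q.1) (h4 : R ≤ w.1) :
    (lnv z w L < lnv p q L ↔ lnv z w R < lnv p q R) := by
  have key : ∀ x, L ≤ x → x ≤ R → lnv p q x ≠ lnv z w x := by
    intro x hx1 hx2 he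
    have m1 := mem_segment_lnv hpq (x := x) (by linarith) (by linarith)
    have m2 := mem_segment_lnv hzw (x := x) (by linarith) (by linarith)
    rw [he] at m1
    exact Set.disjoint_left.1 hd m1 m2
  constructor
  · intro h
    by_contra h'
    have h'' := lt_of_le_of_ne (not_lt.1 h') (key R hLR.le le_rfl)
    obtain ⟨x, a, b, c⟩ := exists_lnv_eq hLR h h''
    exact key x a b c.symm
  · intro h
    by_contra h'
    have h'' := lt_of_le_of_ne (not_lt.1 h') (key L le_rfl hLR.le)
    obtain ⟨x, a, b, c⟩ := exists_lnv_eq hLR h'' h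
    exact key x a b c

theorem tee_swap_left (p q z w : ℝ × ℝ) : tee p q z w = tee q p z w := by
  unfold tee; ring

theorem tee_swap_right (p q z w : ℝ × ℝ) : tee p q z w = tee p q w z := by
  unfold tee; ring

theorem exx_swap_left {p q : ℝ × ℝ} (h : p.1 ≠ q.1) (z w) : exx p q z w = exx q p z w := by
  unfold exx; rw [blw_comm h, blw_comm h]; ring

theorem exx_swap_right {z w : ℝ × ℝ} (h : z.1 ≠ w.1) (p q) : exx p q z w = exx p q w z := by
  unfold exx; rw [abv_comm h, abv_comm h]; ring

theorem ind_false {P : Prop} (h : ¬ P) : ind P = 0 := if_neg h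
theorem ind_true {P : Prop} (h : P) : ind P = 1 := if_pos h
theorem ind_add_self (P : Prop) : ind P + ind P = 0 := CharTwo.add_self_eq_zero _

theorem exx_eq_tee_disjoint {p q z w : ℝ × ℝ} (hpq : p.1 < q.1) (hzw : z.1 < w.1)
    (hpz : p.1 ≠ z.1) (hpw : p.1 ≠ w.1) (hqz : q.1 ≠ z.1) (hqw : q.1 ≠ w.1)
    (hd : Disjoint (segment ℝ p q) (segment ℝ z w)) : exx p q z w = 0 := by
  have key := @lnv_iff_of_disjoint p q z w hpq hzw hd
  have n1 : ∀ x y : ℝ, x < y → ¬ y < x := fun x y => not_lt_of_gt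
  unfold exx blw abv
  have e1 := lnv_left p q
  have e2 := lnv_right hpq.ne
  have e3 := lnv_left z w
  have e4 := lnv_right hzw.ne
  rcases lt_or_gt_of_ne hpz with a | a <;> rcases lt_or_gt_of_ne hqw with b | b <;>
    rcases lt_or_gt_of_ne hpw with c | c <;> rcases lt_or_gt_of_ne hqz with d | d <;>
    try (exfalso; linarith)
  all_goals simp only [a, b, c, d, n1 _ _ a, n1 _ _ b, n1 _ _ c, n1 _ _ d, hpq, hzw, n1 _ _ hpq,
    n1 _ _ hzw, true_and, and_true, false_and, and_false, true_or, or_true, or_false, false_or,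
    ind_false not_false, add_zero, zero_add]
  · have := key (L := z.1) (R := q.1) d a.le le_rfl le_rfl b.le
    rw [e3, e2] at this
    rw [ind_congr this, ind_add_self]
  · have := key (L := z.1) (R := w.1) hzw a.le le_rfl b.le le_rfl
    rw [e3, e4] at this
    rw [ind_congr this, ind_add_self]
  · have := key (L := p.1) (R := q.1) hpq le_rfl a.le le_rfl b.le
    rw [e1, e2] at this
    rw [ind_congr this, ind_add_self]
  · have := key (L := p.1) (R := w.1) c le_rfl a.le b.le le_rfl
    rw [e1, e4] at this
    rw [ind_congr this, ind_add_self]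

theorem lt_lnv_iff {p q w : ℝ × ℝ} (h : p.1 < w.1) : w.2 < lnv p q w.1 ↔ slp p w < slp p q := by
  have hd : 0 < w.1 - p.1 := sub_pos.2 h
  rw [show slp p w = (w.2 - p.2) / (w.1 - p.1) from rfl, div_lt_iff₀ hd]
  unfold lnv; constructor <;> intro h <;> linarith

theorem lt_lnv_iff' {p q w : ℝ × ℝ} (h : w.1 < p.1) : w.2 < lnv p q w.1 ↔ slp p q < slp p w := by
  have hd : 0 < p.1 - w.1 := sub_pos.2 h
  rw [slp_comm p w, show slp w p = (p.2 - w.2) / (p.1 - w.1) from rfl, lt_div_iff₀ hd]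
  unfold lnv; constructor <;> intro h <;> linarith

theorem lnv_lt_iff {p q w : ℝ × ℝ} (h : p.1 < w.1) : lnv p q w.1 < w.2 ↔ slp p q < slp p w := by
  have hd : 0 < w.1 - p.1 := sub_pos.2 h
  rw [show slp p w = (w.2 - p.2) / (w.1 - p.1) from rfl, lt_div_iff₀ hd]
  unfold lnv; constructor <;> intro h <;> linarith

theorem lnv_lt_iff' {p q w : ℝ × ℝ} (h : w.1 < p.1) : lnv p q w.1 < w.2 ↔ slp p w < slp p q := by
  have hd : 0 < p.1 - w.1 := sub_pos.2 h
  rw [slp_comm p w, show slp w p = (p.2 - w.2) / (p.1 - w.1) from rfl, div_lt_iff₀ hd]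
  unfold lnv; constructor <;> intro h <;> linarith

theorem tau_self (p q : ℝ × ℝ) : tau p q q = 0 := by
  unfold tau; apply ind_false; simp

theorem exx_self (p q : ℝ × ℝ) : exx p q p q = 0 := by
  unfold exx blw abv; simp [ind_false not_false]

theorem exx_left {p q w : ℝ × ℝ} (hpq : p.1 < q.1) (hpw : p.1 < w.1) (hqw : q.1 ≠ w.1) :
    exx p q p w = tau p q w := by
  unfold exx blw abv tau
  rcases lt_or_gt_of_ne hqw with h | h
  · simp [h, hpq, hpw, hpq.le, hpw.le, not_lt_of_gt, h.le, not_lt_of_gt hpq, not_lt_of_gt hpw,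
      ind_false not_false, not_lt_of_gt h]
    exact ind_congr (lnv_lt_iff hpq)
  · simp [h, hpq, hpw, hpq.le, hpw.le, not_lt_of_gt, h.le, not_lt_of_gt hpq, not_lt_of_gt hpw,
      ind_false not_false, not_lt_of_gt h]
    exact ind_congr (lt_lnv_iff hpw)

theorem exx_right {p q z : ℝ × ℝ} (hpq : p.1 < q.1) (hpw : z.1 < q.1) (hqw : p.1 ≠ z.1) :
    exx p q z q = tau q p z := by
  unfold exx blw abv tau
  rcases lt_or_gt_of_ne hqw with h | h
  · simp [h, hpq, hpw, hpq.le, hpw.le, not_lt_of_gt, h.le, not_lt_of_gt hpq, not_lt_of_gt hpw,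
      ind_false not_false, not_lt_of_gt h]
    rw [lnv_comm hpq.ne]
    exact ind_congr (lt_lnv_iff' hpw)
  · simp [h, hpq, hpw, hpq.le, hpw.le, not_lt_of_gt, h.le, not_lt_of_gt hpq, not_lt_of_gt hpw,
      ind_false not_false, not_lt_of_gt h]
    rw [lnv_comm hpw.ne]
    exact ind_congr (lnv_lt_iff' hpq)

theorem exx_eq_tee_aux {p q z w : ℝ × ℝ} (hpq : p.1 < q.1) (hzw : z.1 < w.1)
    (hpz : p = z ∨ p.1 ≠ z.1) (hpw : p = w ∨ p.1 ≠ w.1)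
    (hqz : q = z ∨ q.1 ≠ z.1) (hqw : q = w ∨ q.1 ≠ w.1)
    (hd : p ≠ z → p ≠ w → q ≠ z → q ≠ w → Disjoint (segment ℝ p q) (segment ℝ z w)) :
    exx p q z w = tee p q z w := by
  have npq : p ≠ q := fun h => by simp [h] at hpq
  have nzw : z ≠ w := fun h => by simp [h] at hzw
  by_cases h1 : p = z
  · subst h1
    have n1 : q ≠ p := npq.symm
    by_cases h2 : q = w
    · subst h2; rw [exx_self]; simp [tee, tau_self, npq, n1]
    · rw [exx_left hpq hzw (hqw.resolve_left h2)]
      simp [tee, h2, n1, nzw]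
  by_cases h2 : q = w
  · subst h2
    rw [exx_right hpq hzw (hpz.resolve_left h1)]
    simp [tee, npq, h1, nzw.symm]
  by_cases h3 : p = w
  · subst h3
    have : q.1 ≠ z.1 := by intro h; linarith
    have n1 : q ≠ z := fun h => this (by rw [h])
    simp only [tee, h1, h2, n1, if_false, if_true, zero_add, add_zero]
    unfold exx blw abv tau
    simp [not_lt_of_gt hpq, not_lt_of_gt hzw, ind_false not_false, not_lt_of_gt (hzw.trans hpq)]
  by_cases h4 : q = z
  · subst h4
    simp only [tee, h1, h2, h3, if_false, if_true, zero_add, add_zero]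
    unfold exx blw abv tau
    simp [not_lt_of_gt hpq, not_lt_of_gt hzw, ind_false not_false, not_lt_of_gt (hpq.trans hzw)]
  rw [exx_eq_tee_disjoint hpq hzw (hpz.resolve_left h1) (hpw.resolve_left h3)
    (hqz.resolve_left h4) (hqw.resolve_left h2) (hd h1 h3 h4 h2)]
  simp [tee, h1, h2, h3, h4]

/-- The parity of the incidences (endpoint of one segment below or above the other) of two segments
that do not cross only depends on their local position at common endpoints. -/
theorem exx_eq_tee {p q z w : ℝ × ℝ} (hpq : p.1 ≠ q.1) (hzw : z.1 ≠ w.1)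
    (hpz : p = z ∨ p.1 ≠ z.1) (hpw : p = w ∨ p.1 ≠ w.1)
    (hqz : q = z ∨ q.1 ≠ z.1) (hqw : q = w ∨ q.1 ≠ w.1)
    (hd : p ≠ z → p ≠ w → q ≠ z → q ≠ w → Disjoint (segment ℝ p q) (segment ℝ z w)) :
    exx p q z w = tee p q z w := by
  rcases lt_or_gt_of_ne hpq with h1 | h1 <;> rcases lt_or_gt_of_ne hzw with h2 | h2
  · exact exx_eq_tee_aux h1 h2 hpz hpw hqz hqw hd
  · rw [exx_swap_right hzw, tee_swap_right]
    refine exx_eq_tee_aux h1 h2 hpw hpz hqw hqz fun a b c d => ?_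
    rw [segment_symm ℝ w z]; exact hd b a d c
  · rw [exx_swap_left hpq, tee_swap_left]
    refine exx_eq_tee_aux h1 h2 hqz hqw hpz hpw fun a b c d => ?_
    rw [segment_symm ℝ q p]; exact hd c d a b
  · rw [exx_swap_left hpq, tee_swap_left, exx_swap_right hzw, tee_swap_right]
    refine exx_eq_tee_aux h1 h2 hqw hqz hpw hpz fun a b c d => ?_
    rw [segment_symm ℝ q p, segment_symm ℝ w z]; exact hd d c b a

/-- A plane straight-line graph in general position: vertices on edges have distinct abscissae,
disjoint edges do not meet, and edges at a common vertex have different directions. -/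
structure PSLG (E : ℝ × ℝ → ℝ × ℝ → Prop) : Prop where
  symm : ∀ {p q}, E p q → E q p
  ne : ∀ {p q}, E p q → p.1 ≠ q.1
  gen : ∀ {p q z w}, E p q → E z w → p = z ∨ p.1 ≠ z.1
  disj : ∀ {p q z w}, E p q → E z w → p ≠ z → p ≠ w → q ≠ z → q ≠ w →
    Disjoint (segment ℝ p q) (segment ℝ z w)
  dir : ∀ {v p q}, E v p → E v q → p ≠ q → (v.1 < p.1 ↔ v.1 < q.1) → slp v p ≠ slp v q

/-- A simple path `γ 0, …, γ n` in `E` from `a` to `b` with second vertex `d`, last but one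
vertex `d'` and inner vertices in `X`. -/
structure PPath (E : ℝ × ℝ → ℝ × ℝ → Prop) (a d b d' : ℝ × ℝ) (X : Set (ℝ × ℝ))
    (n : ℕ) (γ : ℕ → ℝ × ℝ) : Prop where
  pos : 1 ≤ n
  fst : γ 0 = a
  snd : γ 1 = d
  lst : γ n = b
  pen : γ (n - 1) = d'
  inj : ∀ i ≤ n, ∀ j ≤ n, γ i = γ j → i = j
  adj : ∀ i < n, E (γ i) (γ (i + 1))
  mem : ∀ i, 0 < i → i < n → γ i ∈ X

/-- `tee` summed over all pairs of segments of two paths. -/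
noncomputable def teeS (n : ℕ) (γ : ℕ → ℝ × ℝ) (m : ℕ) (δ : ℕ → ℝ × ℝ) : ZMod 2 :=
  ∑ i ∈ Finset.range n, ∑ j ∈ Finset.range m, tee (γ i) (γ (i + 1)) (δ j) (δ (j + 1))

theorem sum_tele (f : ℕ → ZMod 2) (n : ℕ) :
    ∑ i ∈ Finset.range n, (f i + f (i + 1)) = f 0 + f n := by
  induction n with
  | zero => simp [CharTwo.add_self_eq_zero]
  | succ n ih =>
    rw [Finset.sum_range_succ, ih]
    linear_combination CharTwo.add_self_eq_zero (f n)

theorem teeS_eq {E : ℝ × ℝ → ℝ × ℝ → Prop} (hE : PSLG E) {n m : ℕ} {γ δ : ℕ → ℝ × ℝ} (h1 : ∀ i < n, E (γ i) (γ (i + 1)))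
    (h2 : ∀ i < m, E (δ i) (δ (i + 1))) :
    teeS n γ m δ = ∑ i ∈ Finset.range n, (blw (γ i) (γ (i + 1)) (δ 0) +
      blw (γ i) (γ (i + 1)) (δ m)) + ∑ j ∈ Finset.range m, (abv (δ j) (δ (j + 1)) (γ 0) +
      abv (δ j) (δ (j + 1)) (γ n)) := by
  have : teeS n γ m δ = ∑ i ∈ Finset.range n, ∑ j ∈ Finset.range m,
      ((blw (γ i) (γ (i + 1)) (δ j) + blw (γ i) (γ (i + 1)) (δ (j + 1))) +
       (abv (δ j) (δ (j + 1)) (γ i) + abv (δ j) (δ (j + 1)) (γ (i + 1)))) := by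
    refine Finset.sum_congr rfl fun i hi => Finset.sum_congr rfl fun j hj => ?_
    have a := h1 i (Finset.mem_range.1 hi)
    have b := h2 j (Finset.mem_range.1 hj)
    rw [← exx_eq_tee (hE.ne a) (hE.ne b) (hE.gen a b) (hE.gen a (hE.symm b))
      (hE.gen (hE.symm a) b) (hE.gen (hE.symm a) (hE.symm b)) (hE.disj a b)]
    unfold exx; ring
  rw [this]
  simp only [Finset.sum_add_distrib (s := Finset.range m)]
  rw [Finset.sum_add_distrib]
  congr 1
  · refine Finset.sum_congr rfl fun i _ => ?_
    rw [← Finset.sum_add_distrib, sum_tele]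
  · simp only [← Finset.sum_add_distrib (s := Finset.range m)]
    rw [Finset.sum_comm]
    refine Finset.sum_congr rfl fun i _ => ?_
    rw [sum_tele (fun k => abv (δ i) (δ (i + 1)) (γ k))]

/-- Contribution of the half-edge `(p, q)` against all half-edges of the path `δ`. -/
noncomputable def teeH (m : ℕ) (δ : ℕ → ℝ × ℝ) (p q : ℝ × ℝ) : ZMod 2 :=
  open Classical in
  ∑ j ∈ Finset.range m, ((if p = δ j then tau p q (δ (j + 1)) else 0) +
    (if p = δ (j + 1) then tau p q (δ j) else 0))

theorem teeS_eq_teeH (n : ℕ) (γ : ℕ → ℝ × ℝ) (m : ℕ) (δ : ℕ → ℝ × ℝ) :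
    teeS n γ m δ = ∑ i ∈ Finset.range n, (teeH m δ (γ i) (γ (i + 1)) +
      teeH m δ (γ (i + 1)) (γ i)) := by
  unfold teeS teeH
  refine Finset.sum_congr rfl fun i _ => ?_
  rw [← Finset.sum_add_distrib]
  refine Finset.sum_congr rfl fun j _ => ?_
  unfold tee; ring

theorem teeH_zero {m : ℕ} {δ : ℕ → ℝ × ℝ} {p : ℝ × ℝ} (h : ∀ j ≤ m, p ≠ δ j) (q : ℝ × ℝ) :
    teeH m δ p q = 0 := by
  unfold teeH
  refine Finset.sum_eq_zero fun j hj => ?_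
  have := Finset.mem_range.1 hj
  rw [if_neg (h j (by omega)), if_neg (h (j + 1) (by omega)), add_zero]

theorem teeH_fst {m : ℕ} {δ : ℕ → ℝ × ℝ} (hm : 1 ≤ m)
    (h : ∀ i ≤ m, ∀ j ≤ m, δ i = δ j → i = j) (q : ℝ × ℝ) :
    teeH m δ (δ 0) q = tau (δ 0) q (δ 1) := by
  unfold teeH
  rw [Finset.sum_eq_single_of_mem 0 (Finset.mem_range.2 hm)]
  · rw [if_pos rfl, if_neg, add_zero]
    intro h'; have := h 0 (by omega) (0 + 1) (by omega) h'; omega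
  · intro j hj hj0
    have := Finset.mem_range.1 hj
    rw [if_neg, if_neg, add_zero]
    · intro h'; have := h 0 (by omega) (j + 1) (by omega) h'; omega
    · intro h'; have := h 0 (by omega) j (by omega) h'; omega

theorem teeH_lst {m : ℕ} {δ : ℕ → ℝ × ℝ} (hm : 1 ≤ m)
    (h : ∀ i ≤ m, ∀ j ≤ m, δ i = δ j → i = j) (q : ℝ × ℝ) :
    teeH m δ (δ m) q = tau (δ m) q (δ (m - 1)) := by
  unfold teeH
  rw [Finset.sum_eq_single_of_mem (m - 1) (Finset.mem_range.2 (by omega))]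
  · rw [if_neg, if_pos (by congr 1; omega), zero_add]
    intro h'; have := h m (by omega) (m - 1) (by omega) h'; omega
  · intro j hj hj0
    have := Finset.mem_range.1 hj
    rw [if_neg, if_neg, add_zero]
    · intro h'; have := h m (by omega) (j + 1) (by omega) h'; omega
    · intro h'; have := h m (by omega) j (by omega) h'; omega

theorem teeS_disjoint {E : ℝ × ℝ → ℝ × ℝ → Prop} {a b d1 d1' d2 d2' : ℝ × ℝ} {X Y : Set (ℝ × ℝ)}
    {n m : ℕ} {γ δ : ℕ → ℝ × ℝ} (hγ : PPath E a d1 b d1' X n γ) (hδ : PPath E a d2 b d2' Y m δ)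
    (hXY : Disjoint X Y) (haX : a ∉ X) (hbX : b ∉ X) :
    teeS n γ m δ = tau a d1 d2 + tau b d1' d2' := by
  have hn := hγ.pos
  have hz : ∀ i, 0 < i → i < n → ∀ q, teeH m δ (γ i) q = 0 := by
    intro i h1 h2 q
    have hi := hγ.mem i h1 h2
    refine teeH_zero (fun j hj h => ?_) q
    rcases Nat.eq_zero_or_pos j with rfl | hj0
    · rw [h, hδ.fst] at hi; exact haX hi
    rcases hj.lt_or_eq with hj1 | rfl
    · exact Set.disjoint_left.1 hXY hi (h ▸ hδ.mem j hj0 hj1)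
    · rw [h, hδ.lst] at hi; exact hbX hi
  rw [teeS_eq_teeH, Finset.sum_add_distrib,
    Finset.sum_eq_single_of_mem 0 (Finset.mem_range.2 hn),
    Finset.sum_eq_single_of_mem (n - 1) (Finset.mem_range.2 (by omega))]
  · congr 1
    · have := teeH_fst hδ.pos hδ.inj (γ 1)
      rw [hδ.fst, hδ.snd, hγ.snd] at this
      rw [hγ.fst, hγ.snd, this]
    · have := teeH_lst hδ.pos hδ.inj (γ (n - 1))
      rw [hδ.lst, hδ.pen, hγ.pen] at this
      rw [hγ.pen, show n - 1 + 1 = n by omega, hγ.lst, this]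
  · intro j hj h
    exact hz _ (by omega) (by have := Finset.mem_range.1 hj; omega) _
  · intro j hj h
    exact hz _ (by omega) (by have := Finset.mem_range.1 hj; omega) _

/-- At an inner vertex `p` of a path, the two tau's detect whether the path folds back in the
horizontal direction. -/
theorem tau_fold {E : ℝ × ℝ → ℝ × ℝ → Prop} (hE : PSLG E) {p q r : ℝ × ℝ} (h1 : E p q)
    (h2 : E p r) (h : q ≠ r) :
    tau p q r + tau p r q = ind (p.1 < q.1) + ind (p.1 < r.1) + 1 := by
  have n1 := hE.ne h1
  have n2 := hE.ne h2
  have hd := hE.dir h1 h2 h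
  have o : (1 : ZMod 2) + 1 = 0 := by decide
  unfold tau
  rcases lt_or_gt_of_ne n1 with a | a <;> rcases lt_or_gt_of_ne n2 with b | b
  · have := hd (by simp [a, b])
    rcases lt_or_gt_of_ne this with c | c <;>
    simp [a, b, c, not_lt_of_gt a, not_lt_of_gt b, not_lt_of_gt c, ind_false not_false, ind_true,
      o]
  · simp [a, b, not_lt_of_gt a, not_lt_of_gt b, ind_false not_false, ind_true, o]
  · simp [a, b, not_lt_of_gt a, not_lt_of_gt b, ind_false not_false, ind_true, o]
  · have := hd (by simp [not_lt_of_gt a, not_lt_of_gt b])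
    rcases lt_or_gt_of_ne this with c | c <;>
    simp [a, b, c, not_lt_of_gt a, not_lt_of_gt b, not_lt_of_gt c, ind_false not_false, ind_true,
      o]

theorem teeS_self {E : ℝ × ℝ → ℝ × ℝ → Prop} (hE : PSLG E) {γ : ℕ → ℝ × ℝ} (n : ℕ)
    (hinj : ∀ i ≤ n + 1, ∀ j ≤ n + 1, γ i = γ j → i = j) (hadj : ∀ i < n + 1, E (γ i) (γ (i + 1))) :
    teeS (n + 1) γ (n + 1) γ = ind ((γ 0).1 < (γ 1).1) + ind ((γ (n + 1)).1 < (γ n).1) + 1 := by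
  have o : (1 : ZMod 2) + 1 = 0 := by decide
  have flip : ∀ i < n + 1, ind ((γ i).1 < (γ (i + 1)).1) + ind ((γ (i + 1)).1 < (γ i).1) = 1 := by
    intro i hi
    rcases lt_or_gt_of_ne (hE.ne (hadj i hi)) with h | h <;>
      simp [h, not_lt_of_gt h, ind_false not_false, ind_true]
  induction n with
  | zero =>
    have := flip 0 (by omega)
    have h01 : γ 0 ≠ γ 1 := fun h => by have := hinj 0 (by omega) 1 (by omega) h; omega
    simp only [zero_add] at this
    simp only [zero_add]
    rw [this, o]
    simp [teeS, tee, tau_self, h01, h01.symm]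
  | succ n ih =>
    have ih' := ih (fun i hi j hj => hinj i (by omega) j (by omega)) (fun i hi => hadj i (by omega))
      (fun i hi => flip i (by omega))
    have ne : ∀ i ≤ n + 2, ∀ j ≤ n + 2, i ≠ j → γ i ≠ γ j := fun i hi j hj h e => h (hinj i hi j hj e)
    have split : teeS (n + 1 + 1) γ (n + 1 + 1) γ = teeS (n + 1) γ (n + 1) γ +
        ∑ i ∈ Finset.range (n + 1), (tee (γ i) (γ (i + 1)) (γ (n + 1)) (γ (n + 1 + 1)) +
          tee (γ (n + 1)) (γ (n + 1 + 1)) (γ i) (γ (i + 1))) +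
        tee (γ (n + 1)) (γ (n + 1 + 1)) (γ (n + 1)) (γ (n + 1 + 1)) := by
      unfold teeS
      rw [Finset.sum_range_succ _ (n + 1), Finset.sum_range_succ _ (n + 1), Finset.sum_add_distrib]
      simp only [Finset.sum_range_succ _ (n + 1)]
      rw [Finset.sum_add_distrib]
      ring
    have z : tee (γ (n + 1)) (γ (n + 1 + 1)) (γ (n + 1)) (γ (n + 1 + 1)) = 0 := by
      have h01 := ne (n + 1) (by omega) (n + 2) (by omega) (by omega)
      simp [tee, tau_self, h01, h01.symm]
    rw [split, ih', z, Finset.sum_eq_single_of_mem n (Finset.mem_range.2 (by omega))]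
    · have h1 := ne n (by omega) (n + 1) (by omega) (by omega)
      have h2 := ne n (by omega) (n + 1 + 1) (by omega) (by omega)
      have h3 := ne (n + 1) (by omega) (n + 1 + 1) (by omega) (by omega)
      have f := tau_fold hE (hE.symm (hadj n (by omega))) (hadj (n + 1) (by omega)) h2
      have g := flip (n + 1) (by omega)
      have e : tee (γ n) (γ (n + 1)) (γ (n + 1)) (γ (n + 1 + 1)) +
          tee (γ (n + 1)) (γ (n + 1 + 1)) (γ n) (γ (n + 1)) =
          tau (γ (n + 1)) (γ n) (γ (n + 1 + 1)) + tau (γ (n + 1)) (γ (n + 1 + 1)) (γ n) := by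
        simp [tee, h1, h2, h3, h1.symm, h2.symm, h3.symm]
      rw [e, f]
      linear_combination g + CharTwo.add_self_eq_zero (ind ((γ (n + 1)).1 < (γ n).1)) + o -
        CharTwo.add_self_eq_zero (ind ((γ (n + 1 + 1)).1 < (γ (n + 1)).1))
    · intro i hi hin
      have hi' := Finset.mem_range.1 hi
      have h1 := ne i (by omega) (n + 1) (by omega) (by omega)
      have h2 := ne i (by omega) (n + 1 + 1) (by omega) (by omega)
      have h3 := ne (i + 1) (by omega) (n + 1) (by omega) (by omega)
      have h4 := ne (i + 1) (by omega) (n + 1 + 1) (by omega) (by omega)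
      simp [tee, h1, h2, h3, h4, h1.symm, h2.symm, h3.symm, h4.symm]

/-- Counterclockwise angular coordinate of the direction from `v` to `d`: the side (right half
plane first), then the slope. -/
noncomputable def ang (v d : ℝ × ℝ) : ℕ ×ₗ ℝ :=
  open Classical in toLex (if v.1 < d.1 then 0 else 1, slp v d)

/-- `a, b, c` are in cyclic order. -/
def Cyc {α : Type*} [LT α] (a b c : α) : Prop := a < b ∧ b < c ∨ b < c ∧ c < a ∨ c < a ∧ a < b

theorem ang_lt (v d e : ℝ × ℝ) : ang v d < ang v e ↔
    (v.1 < d.1 ∧ ¬ v.1 < e.1) ∨ ((v.1 < d.1 ↔ v.1 < e.1) ∧ slp v d < slp v e) := by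
  unfold ang
  rw [Prod.Lex.toLex_lt_toLex]
  by_cases h1 : v.1 < d.1 <;> by_cases h2 : v.1 < e.1 <;> simp [h1, h2]

theorem cyc_parity {v d1 d2 d3 : ℝ × ℝ} (n1 : v.1 ≠ d1.1) (n2 : v.1 ≠ d2.1) (n3 : v.1 ≠ d3.1)
    (h : Cyc (ang v d1) (ang v d2) (ang v d3)) :
    tau v d1 d3 + tau v d2 d3 + tau v d2 d1 + ind (v.1 < d1.1) = 0 := by
  have o : (1 : ZMod 2) + 1 = 0 := by decide
  unfold Cyc at h
  simp only [ang_lt] at h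
  unfold tau
  rcases lt_or_gt_of_ne n1 with a | a <;> rcases lt_or_gt_of_ne n2 with b | b <;>
  rcases lt_or_gt_of_ne n3 with c | c <;>
  simp only [a, b, c, not_lt_of_gt a, not_lt_of_gt b, not_lt_of_gt c, true_and, and_true, not_true,
    not_false_iff, false_and, and_false, or_false, false_or, iff_self, iff_true, iff_false, or_self,
    ind_false not_false, ind_true trivial, add_zero, zero_add, and_self] at h ⊢
  all_goals first
    | done
    | (rcases h with h | h | h <;>
        simp [h.1, h.2, not_lt_of_gt h.1, not_lt_of_gt h.2, h.1.trans h.2,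
          not_lt_of_gt (h.1.trans h.2), ind_false not_false, ind_true, o])
    | (simp [h, not_lt_of_gt h, ind_false not_false, ind_true, o])

/-- In a plane theta graph, the three paths leave `a` and `b` in opposite cyclic orders. -/
theorem theta_plane {E : ℝ × ℝ → ℝ × ℝ → Prop} (hE : PSLG E)
    {a b d1 d1' d2 d2' d3 d3' : ℝ × ℝ} {X1 X2 X3 : Set (ℝ × ℝ)}
    {n1 n2 n3 : ℕ} {γ1 γ2 γ3 : ℕ → ℝ × ℝ} (h1 : PPath E a d1 b d1' X1 n1 γ1)
    (h2 : PPath E a d2 b d2' X2 n2 γ2) (h3 : PPath E a d3 b d3' X3 n3 γ3)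
    (h12 : Disjoint X1 X2) (h13 : Disjoint X1 X3) (h23 : Disjoint X2 X3)
    (a1 : a ∉ X1) (b1 : b ∉ X1) (a2 : a ∉ X2) (b2 : b ∉ X2)
    (ca : Cyc (ang a d1) (ang a d2) (ang a d3)) (cb : Cyc (ang b d1') (ang b d2') (ang b d3')) :
    False := by
  have o : (1 : ZMod 2) + 1 = 0 := by decide
  have neA : ∀ {d d' X n γ}, PPath E a d b d' X n γ → a.1 ≠ d.1 := by
    intro d d' X n γ h
    have := hE.ne (h.adj 0 h.pos)
    rwa [h.fst, zero_add, h.snd] at this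
  have neB : ∀ {d d' X n γ}, PPath E a d b d' X n γ → b.1 ≠ d'.1 := by
    intro d d' X n γ h
    have hp := h.pos
    have := hE.ne (h.adj (n - 1) (by omega))
    rw [show n - 1 + 1 = n by omega, h.lst, h.pen] at this
    exact this.symm
  have pa := cyc_parity (neA h1) (neA h2) (neA h3) ca
  have pb := cyc_parity (neB h1) (neB h2) (neB h3) cb
  have t13 := teeS_disjoint h1 h3 h13 a1 b1
  have t23 := teeS_disjoint h2 h3 h23 a2 b2
  have t21 := teeS_disjoint h2 h1 h12.symm a2 b2
  have t11 : teeS n1 γ1 n1 γ1 = ind (a.1 < d1.1) + ind (b.1 < d1'.1) + 1 := by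
    obtain ⟨k, rfl⟩ : ∃ k, n1 = k + 1 := ⟨n1 - 1, by have := h1.pos; omega⟩
    have := teeS_self hE k h1.inj h1.adj
    rw [h1.fst, h1.snd, h1.lst] at this
    have hp := h1.pen
    rw [Nat.add_sub_cancel] at hp
    rwa [hp] at this
  rw [teeS_eq hE h1.adj h3.adj] at t13
  rw [teeS_eq hE h2.adj h3.adj] at t23
  rw [teeS_eq hE h2.adj h1.adj] at t21
  rw [teeS_eq hE h1.adj h1.adj] at t11
  simp only [h1.fst, h2.fst, h3.fst, h1.lst, h2.lst, h3.lst] at t13 t23 t21 t11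
  have dbl := fun x : ZMod 2 => CharTwo.add_self_eq_zero x
  generalize (∑ i ∈ Finset.range n1, (blw (γ1 i) (γ1 (i + 1)) a + blw (γ1 i) (γ1 (i + 1)) b)) = B1 at *
  generalize (∑ i ∈ Finset.range n2, (blw (γ2 i) (γ2 (i + 1)) a + blw (γ2 i) (γ2 (i + 1)) b)) = B2 at *
  generalize (∑ i ∈ Finset.range n1, (abv (γ1 i) (γ1 (i + 1)) a + abv (γ1 i) (γ1 (i + 1)) b)) = A1 at *
  generalize (∑ i ∈ Finset.range n3, (abv (γ3 i) (γ3 (i + 1)) a + abv (γ3 i) (γ3 (i + 1)) b)) = A3 at *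
  have : (1 : ZMod 2) = 0 := by
    linear_combination (-1 : ZMod 2) * (t13 + t23 + t21 + t11) - pa - pb +
      dbl B1 + dbl B2 + dbl A1 + dbl A3
  exact absurd this (by decide)

/-! ### Polylines, shears and paths -/

namespace Polyline

theorem param_add (P : Polyline) (i : ℕ) {t : ℝ} (h0 : 0 ≤ t) (h1 : t ≤ 1) :
    P.param (i + t) = P.pt i + t • (P.pt (i + 1) - P.pt i) := by
  rcases h1.lt_or_eq with h | rfl
  · have : ⌊(i : ℝ) + t⌋ = (i : ℤ) := by
      rw [Int.floor_eq_iff]; push_cast; constructor <;> linarith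
    simp [param, this]
  · have : ⌊(i : ℝ) + 1⌋ = ((i + 1 : ℕ) : ℤ) := by
      rw [Int.floor_eq_iff]; push_cast; constructor <;> linarith
    unfold param
    rw [this]
    simp

theorem param_nat (P : Polyline) (i : ℕ) : P.param i = P.pt i := by
  have := P.param_add i le_rfl zero_le_one
  simpa using this

theorem mem_segment_iff (P : Polyline) (i : ℕ) (z : ℝ × ℝ) :
    z ∈ segment ℝ (P.pt i) (P.pt (i + 1)) ↔ ∃ t : ℝ, 0 ≤ t ∧ t ≤ 1 ∧ P.param (i + t) = z := by
  rw [segment_eq_image']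
  constructor
  · rintro ⟨t, ⟨h0, h1⟩, rfl⟩
    exact ⟨t, h0, h1, P.param_add i h0 h1⟩
  · rintro ⟨t, h0, h1, rfl⟩
    exact ⟨t, ⟨h0, h1⟩, (P.param_add i h0 h1).symm⟩

theorem mem_image_iff (P : Polyline) (z : ℝ × ℝ) :
    z ∈ P.image ↔ ∃ i < P.len, z ∈ segment ℝ (P.pt i) (P.pt (i + 1)) := by
  constructor
  · rintro ⟨s, ⟨h0, h1⟩, rfl⟩
    rcases h1.lt_or_eq with h | rfl
    · have hf : ⌊s⌋₊ < P.len := by rw [Nat.floor_lt h0]; exact h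
      refine ⟨⌊s⌋₊, hf, (P.mem_segment_iff _ _).2 ⟨s - ⌊s⌋₊, ?_, ?_, by congr 1; ring⟩⟩
      · linarith [Nat.floor_le h0]
      · linarith [Nat.lt_floor_add_one s]
    · have := P.len_pos
      refine ⟨P.len - 1, by omega, (P.mem_segment_iff _ _).2 ⟨1, by simp, le_rfl, ?_⟩⟩
      congr 1
      push_cast [Nat.cast_sub this]; ring
  · rintro ⟨i, hi, hz⟩
    obtain ⟨t, h0, h1, rfl⟩ := (P.mem_segment_iff _ _).1 hz
    have : (i : ℝ) + 1 ≤ P.len := by exact_mod_cast hi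
    exact ⟨_, ⟨by positivity, by linarith⟩, rfl⟩

theorem pt_mem_image (P : Polyline) {i : ℕ} (h : i ≤ P.len) : P.pt i ∈ P.image :=
  ⟨i, ⟨by positivity, by exact_mod_cast h⟩, P.param_nat i⟩

theorem Simple.pt_inj {P : Polyline} (hs : P.Simple) {i j : ℕ} (hi : i ≤ P.len) (hj : j ≤ P.len)
    (h : P.pt i = P.pt j) : i = j := by
  have := hs (x₁ := (i : ℝ)) (x₂ := (j : ℝ)) ⟨by positivity, by exact_mod_cast hi⟩
    ⟨by positivity, by exact_mod_cast hj⟩ (by rw [param_nat, param_nat, h])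
  exact_mod_cast this

/-- In a simple polyline, a vertex lying on a segment is an end of that segment. -/
theorem Simple.pt_mem {P : Polyline} (hs : P.Simple) {i j : ℕ} (hi : i < P.len) (hj : j ≤ P.len)
    (h : P.pt j ∈ segment ℝ (P.pt i) (P.pt (i + 1))) : j = i ∨ j = i + 1 := by
  obtain ⟨t, h0, h1, ht⟩ := (P.mem_segment_iff _ _).1 h
  have hi' : (i : ℝ) + 1 ≤ P.len := by exact_mod_cast hi
  have := hs (x₁ := (i : ℝ) + t) (x₂ := (j : ℝ)) ⟨by positivity, by linarith⟩
    ⟨by positivity, by exact_mod_cast hj⟩ (by rw [ht, param_nat])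
  have a : (i : ℝ) ≤ j := by linarith
  have b : (j : ℝ) ≤ (i + 1 : ℕ) := by push_cast; linarith
  have a' : i ≤ j := by exact_mod_cast a
  have b' : j ≤ i + 1 := by exact_mod_cast b
  omega

/-- Distinct segments of a simple polyline meet only in common ends. -/
theorem Simple.seg_inter {P : Polyline} (hs : P.Simple) {i j : ℕ} (hij : i < j) (hj : j < P.len)
    {z : ℝ × ℝ} (h1 : z ∈ segment ℝ (P.pt i) (P.pt (i + 1)))
    (h2 : z ∈ segment ℝ (P.pt j) (P.pt (j + 1))) : j = i + 1 ∧ z = P.pt j := by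
  obtain ⟨t, h0, h1, ht⟩ := (P.mem_segment_iff _ _).1 h1
  obtain ⟨s, g0, g1, hs'⟩ := (P.mem_segment_iff _ _).1 h2
  have hj' : (j : ℝ) + 1 ≤ P.len := by exact_mod_cast hj
  have hi' : (i : ℝ) + 1 ≤ j := by exact_mod_cast hij
  have := hs (x₁ := (i : ℝ) + t) (x₂ := (j : ℝ) + s) ⟨by positivity, by linarith⟩
    ⟨by positivity, by linarith⟩ (by rw [ht, hs'])
  have b : (j : ℝ) ≤ (i + 1 : ℕ) := by push_cast; linarith
  have b' : j ≤ i + 1 := by exact_mod_cast b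
  have e : j = i + 1 := by omega
  have s0 : s = 0 := by subst e; push_cast at this; linarith
  refine ⟨e, ?_⟩
  rw [← hs', s0, add_zero, param_nat]

end Polyline

/-- The shear `(x, y) ↦ (x + κ y, y)`. -/
def shear (κ : ℝ) : (ℝ × ℝ) →ₗ[ℝ] (ℝ × ℝ) where
  toFun p := (p.1 + κ * p.2, p.2)
  map_add' p q := by ext <;> simp; ring
  map_smul' c p := by ext <;> simp; ring

theorem shear_inj (κ : ℝ) : Function.Injective (shear κ) := by
  intro p q h
  have h1 : p.1 + κ * p.2 = q.1 + κ * q.2 := congrArg Prod.fst h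
  have h2 : (shear κ p).2 = (shear κ q).2 := congrArg Prod.snd h
  have h2 : p.2 = q.2 := h2
  rw [h2] at h1
  exact Prod.ext (by linarith) h2

theorem mem_segment_shear {κ : ℝ} {p q z : ℝ × ℝ} (h : z ∈ segment ℝ (shear κ p) (shear κ q)) :
    ∃ y ∈ segment ℝ p q, shear κ y = z := by
  have := image_segment ℝ (shear κ).toAffineMap p q
  simp only [LinearMap.coe_toAffineMap] at this
  rwa [← this] at h

/-- Some shear gives distinct abscissae to all points of a finite set. -/
theorem exists_shear {F : Set (ℝ × ℝ)} (hF : F.Finite) :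
    ∃ κ : ℝ, ∀ p ∈ F, ∀ q ∈ F, (shear κ p).1 = (shear κ q).1 → p = q := by
  have hB : ((fun pq : (ℝ × ℝ) × (ℝ × ℝ) => -(pq.1.1 - pq.2.1) / (pq.1.2 - pq.2.2)) ''
      (F ×ˢ F)).Finite := (hF.prod hF).image _
  obtain ⟨κ, hκ⟩ := hB.infinite_compl.nonempty
  refine ⟨κ, fun p hp q hq h => ?_⟩
  have h1 : p.1 + κ * p.2 = q.1 + κ * q.2 := h
  by_cases h2 : p.2 = q.2
  · rw [h2] at h1; exact Prod.ext (by linarith) h2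
  · exfalso; apply hκ
    refine ⟨(p, q), ⟨hp, hq⟩, ?_⟩
    have : p.2 - q.2 ≠ 0 := sub_ne_zero.2 h2
    simp only
    rw [div_eq_iff this]; linarith

theorem PPath.append {E : ℝ × ℝ → ℝ × ℝ → Prop} {a d b d' c e e' : ℝ × ℝ} {X Y : Set (ℝ × ℝ)}
    {n m : ℕ} {γ δ : ℕ → ℝ × ℝ} (h1 : PPath E a d b d' X n γ) (h2 : PPath E b e c e' Y m δ)
    (haY : a ∉ Y) (hcX : c ∉ X) (hac : a ≠ c) (hXY : Disjoint X Y) :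
    PPath E a d c e' (X ∪ Y ∪ {b}) (n + m) (fun i => if i ≤ n then γ i else δ (i - n)) := by
  have p1 := h1.pos
  have p2 := h2.pos
  have cross : ∀ i ≤ n, ∀ j, 0 < j → j ≤ m → γ i ≠ δ j := by
    intro i hi j hj0 hj h
    rcases Nat.eq_zero_or_pos i with rfl | hi0
    · rw [h1.fst] at h
      rcases hj.lt_or_eq with hj' | rfl
      · exact haY (h ▸ h2.mem j hj0 hj')
      · exact hac (h.trans h2.lst)
    rcases hi.lt_or_eq with hi' | rfl
    · have hx := h1.mem i hi0 hi'
      rcases hj.lt_or_eq with hj' | rfl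
      · exact Set.disjoint_left.1 hXY hx (h ▸ h2.mem j hj0 hj')
      · exact hcX (by rw [← h2.lst, ← h]; exact hx)
    · rw [h1.lst, ← h2.fst] at h
      have := h2.inj 0 (by omega) j hj h
      omega
  refine ⟨by omega, ?_, ?_, ?_, ?_, ?_, ?_, ?_⟩
  · simp [h1.fst]
  · rw [if_pos p1, h1.snd]
  · rw [if_neg (by omega), Nat.add_sub_cancel_left, h2.lst]
  · by_cases hm : m = 1
    · subst hm
      have q := h2.pen
      rw [if_pos (by omega), Nat.add_sub_cancel, h1.lst, ← q]
      simp [h2.fst]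
    · rw [if_neg (by omega), show n + m - 1 - n = m - 1 by omega, h2.pen]
  · intro i hi j hj h
    by_cases hin : i ≤ n <;> by_cases hjn : j ≤ n
    · simp only [hin, hjn, if_true] at h; exact h1.inj i hin j hjn h
    · simp only [hin, hjn, if_true, if_false] at h
      exact absurd h (cross i hin _ (by omega) (by omega))
    · simp only [hin, hjn, if_true, if_false] at h
      exact absurd h.symm (cross j hjn _ (by omega) (by omega))
    · simp only [hin, hjn, if_false] at h
      have := h2.inj _ (by omega) _ (by omega) h
      omega
  · intro i hi
    rcases lt_trichotomy i n with h | h | h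
    · simp only [show i ≤ n by omega, show i + 1 ≤ n by omega, if_true]
      exact h1.adj i h
    · subst h
      simp only [le_refl, if_true, show ¬ i + 1 ≤ i by omega, if_false, Nat.add_sub_cancel_left]
      rw [h1.lst, ← h2.fst]
      exact h2.adj 0 (by omega)
    · simp only [show ¬ i ≤ n by omega, show ¬ i + 1 ≤ n by omega, if_false]
      rw [show i + 1 - n = i - n + 1 by omega]
      exact h2.adj _ (by omega)
  · intro i hi0 hi
    rcases lt_trichotomy i n with h | h | h
    · simp only [show i ≤ n by omega, if_true]
      exact Or.inl (Or.inl (h1.mem i hi0 h))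
    · subst h; simp [h1.lst]
    · simp only [show ¬ i ≤ n by omega, if_false]
      exact Or.inl (Or.inr (h2.mem _ (by omega) (by omega)))

theorem PPath.mono {E : ℝ × ℝ → ℝ × ℝ → Prop} {a d b d' : ℝ × ℝ} {X Y : Set (ℝ × ℝ)}
    {n : ℕ} {γ : ℕ → ℝ × ℝ} (h : PPath E a d b d' X n γ) (hXY : X ⊆ Y) :
    PPath E a d b d' Y n γ :=
  ⟨h.pos, h.fst, h.snd, h.lst, h.pen, h.inj, h.adj, fun i a b => hXY (h.mem i a b)⟩

/-! ### The rotation system of a planar drawing -/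

section Drawing

variable {V : Type*} {G : SimpleGraph V}

theorem PolyDrawing.ends_cases (D : PolyDrawing G) {u v : V} (h : G.Adj u v) :
    ((D.poly s(u, v)).pt 0 = D.pos u ∧ (D.poly s(u, v)).pt (D.poly s(u, v)).len = D.pos v) ∨
    ((D.poly s(u, v)).pt 0 = D.pos v ∧ (D.poly s(u, v)).pt (D.poly s(u, v)).len = D.pos u) := by
  have := D.ends u v h
  rwa [Set.pair_eq_pair_iff] at this

theorem PolyDrawing.exists_end (D : PolyDrawing G) {e : Sym2 V} (he : e ∈ G.edgeSet) {w : V}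
    (hw : w ∈ e) : ∃ k, (k = 0 ∨ k = (D.poly e).len) ∧ (D.poly e).pt k = D.pos w := by
  induction e using Sym2.ind with
  | _ u v =>
    rcases D.ends_cases he with ⟨h1, h2⟩ | ⟨h1, h2⟩ <;> rcases Sym2.mem_iff.1 hw with rfl | rfl
    exacts [⟨0, Or.inl rfl, h1⟩, ⟨_, Or.inr rfl, h2⟩, ⟨_, Or.inr rfl, h2⟩, ⟨0, Or.inl rfl, h1⟩]

/-- Distinct segments of a planar drawing meet only in common ends. -/
theorem PolyDrawing.piece_inter {D : PolyDrawing G} (hD : D.IsPlanar) {e e' : Sym2 V}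
    (he : e ∈ G.edgeSet) (he' : e' ∈ G.edgeSet) {i j : ℕ} (hi : i < (D.poly e).len)
    (hj : j < (D.poly e').len) (hne : e = e' → i ≠ j) {z : ℝ × ℝ}
    (h1 : z ∈ segment ℝ ((D.poly e).pt i) ((D.poly e).pt (i + 1)))
    (h2 : z ∈ segment ℝ ((D.poly e').pt j) ((D.poly e').pt (j + 1))) :
    (z = (D.poly e).pt i ∨ z = (D.poly e).pt (i + 1)) ∧
    (z = (D.poly e').pt j ∨ z = (D.poly e').pt (j + 1)) := by
  by_cases h : e = e'
  · subst h
    rcases lt_or_gt_of_ne (hne rfl) with h | h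
    · obtain ⟨rfl, hz⟩ := (hD.1 e he).seg_inter h hj h1 h2
      exact ⟨Or.inr hz, Or.inl hz⟩
    · obtain ⟨rfl, hz⟩ := (hD.1 e he).seg_inter h hi h2 h1
      exact ⟨Or.inl hz, Or.inr hz⟩
  · have z1 := ((D.poly e).mem_image_iff z).2 ⟨i, hi, h1⟩
    have z2 := ((D.poly e').mem_image_iff z).2 ⟨j, hj, h2⟩
    obtain ⟨w, ⟨w1, w2⟩, rfl⟩ := hD.2.2 e he e' he' h ⟨z1, z2⟩
    obtain ⟨k, hk, hkw⟩ := D.exists_end he w1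
    obtain ⟨l, hl, hlw⟩ := D.exists_end he' w2
    constructor
    · rw [← hkw] at h1 ⊢
      rcases (hD.1 e he).pt_mem hi (by omega) h1 with rfl | rfl <;> simp
    · rw [← hlw] at h2 ⊢
      rcases (hD.1 e' he').pt_mem hj (by omega) h2 with rfl | rfl <;> simp

/-- Segments of the sheared drawing. -/
def PolyDrawing.dseg (D : PolyDrawing G) (κ : ℝ) (p q : ℝ × ℝ) : Prop :=
  ∃ e ∈ G.edgeSet, ∃ i < (D.poly e).len,
    (p = shear κ ((D.poly e).pt i) ∧ q = shear κ ((D.poly e).pt (i + 1))) ∨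
    (q = shear κ ((D.poly e).pt i) ∧ p = shear κ ((D.poly e).pt (i + 1)))

/-- The shear `κ` separates the abscissae of all polyline points. -/
def PolyDrawing.Generic (D : PolyDrawing G) (κ : ℝ) : Prop :=
  ∀ e ∈ G.edgeSet, ∀ e' ∈ G.edgeSet, ∀ i ≤ (D.poly e).len, ∀ j ≤ (D.poly e').len,
    (shear κ ((D.poly e).pt i)).1 = (shear κ ((D.poly e').pt j)).1 →
      (D.poly e).pt i = (D.poly e').pt j

theorem PolyDrawing.exists_generic [Finite V] (D : PolyDrawing G) : ∃ κ, D.Generic κ := by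
  have hF : (⋃ e : Sym2 V, (D.poly e).pt '' Set.Iic (D.poly e).len).Finite :=
    Set.finite_iUnion fun e => (Set.finite_Iic _).image _
  obtain ⟨κ, h⟩ := exists_shear hF
  refine ⟨κ, fun e _ e' _ i hi j hj hx => h _ ?_ _ ?_ hx⟩
  · exact Set.mem_iUnion.2 ⟨e, i, hi, rfl⟩
  · exact Set.mem_iUnion.2 ⟨e', j, hj, rfl⟩

theorem mem_segment_of_slp {v p q : ℝ × ℝ} (hv : v.1 ≠ p.1) (hs : v.1 < p.1 ↔ v.1 < q.1)
    (hsl : slp v p = slp v q) (hle : |p.1 - v.1| ≤ |q.1 - v.1|) : p ∈ segment ℝ v q := by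
  have key : lnv v q p.1 = p.2 := by
    rw [lnv, ← hsl]; exact lnv_right hv
  rcases lt_or_gt_of_ne hv with h | h
  · have h' := hs.1 h
    have e := mem_segment_lnv h' h.le (by
      rw [abs_of_pos (by linarith), abs_of_pos (by linarith)] at hle; linarith)
    rwa [key] at e
  · have h0 : q.1 ≤ v.1 := not_lt.1 fun h1 => not_lt_of_gt h (hs.2 h1)
    rw [abs_of_neg (by linarith), abs_of_nonpos (by linarith)] at hle
    have h' : q.1 < v.1 := by linarith
    have e := mem_segment_lnv h' (x := p.1) (by linarith) h.le
    rwa [lnv_comm h'.ne, key, segment_symm] at e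

theorem PolyDrawing.pslg {D : PolyDrawing G} (hD : D.IsPlanar) {κ : ℝ} (hκ : D.Generic κ) :
    PSLG (D.dseg κ) := by
  have symm : ∀ {p q}, D.dseg κ p q → D.dseg κ q p := by
    rintro p q ⟨e, he, i, hi, h⟩
    exact ⟨e, he, i, hi, h.symm⟩
  -- Each segment is `dseg` in the direction of its index after possibly exchanging its ends.
  have inter : ∀ {p q z w}, D.dseg κ p q → D.dseg κ z w →
      ({p, q} : Set (ℝ × ℝ)) = {z, w} ∨ ∀ y ∈ segment ℝ p q, y ∈ segment ℝ z w →
        (y = p ∨ y = q) ∧ (y = z ∨ y = w) := by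
    rintro p q z w ⟨e, he, i, hi, h⟩ ⟨e', he', j, hj, h'⟩
    by_cases hne : e = e' → i ≠ j
    · right
      intro y y1 y2
      have y1' : y ∈ segment ℝ (shear κ ((D.poly e).pt i)) (shear κ ((D.poly e).pt (i + 1))) := by
        rcases h with ⟨rfl, rfl⟩ | ⟨rfl, rfl⟩
        · exact y1
        · rwa [segment_symm]
      have y2' : y ∈ segment ℝ (shear κ ((D.poly e').pt j)) (shear κ ((D.poly e').pt (j + 1))) := by
        rcases h' with ⟨rfl, rfl⟩ | ⟨rfl, rfl⟩
        · exact y2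
        · rwa [segment_symm]
      obtain ⟨x, x1, rfl⟩ := mem_segment_shear y1'
      obtain ⟨x', x2, hx⟩ := mem_segment_shear y2'
      obtain rfl := shear_inj κ hx
      obtain ⟨r1, r2⟩ := D.piece_inter hD he he' hi hj hne x1 x2
      constructor
      · rcases h with ⟨rfl, rfl⟩ | ⟨rfl, rfl⟩ <;> rcases r1 with rfl | rfl <;> simp
      · rcases h' with ⟨rfl, rfl⟩ | ⟨rfl, rfl⟩ <;> rcases r2 with rfl | rfl <;> simp
    · push Not at hne
      obtain ⟨rfl, rfl⟩ := hne
      left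
      rcases h with ⟨rfl, rfl⟩ | ⟨rfl, rfl⟩ <;> rcases h' with ⟨rfl, rfl⟩ | ⟨rfl, rfl⟩ <;>
        simp [Set.pair_comm]
  have ne : ∀ {p q}, D.dseg κ p q → p.1 ≠ q.1 := by
    rintro p q ⟨e, he, i, hi, h⟩ hx
    have : (D.poly e).pt i = (D.poly e).pt (i + 1) := by
      rcases h with ⟨rfl, rfl⟩ | ⟨rfl, rfl⟩
      · exact hκ e he e he i (by omega) (i + 1) (by omega) hx
      · exact (hκ e he e he i (by omega) (i + 1) (by omega) hx.symm)
    exact (D.proper e he).1 i hi this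
  refine ⟨symm, ne, ?_, ?_, ?_⟩
  · rintro p q z w ⟨e, he, i, hi, h⟩ ⟨e', he', j, hj, h'⟩
    by_cases hx : p.1 = z.1
    · left
      rcases h with ⟨rfl, rfl⟩ | ⟨rfl, rfl⟩ <;> rcases h' with ⟨rfl, rfl⟩ | ⟨rfl, rfl⟩ <;>
        exact congrArg _ (hκ e he e' he' _ (by omega) _ (by omega) hx)
    · exact Or.inr hx
  · intro p q z w h h' a b c d
    rcases inter h h' with r | r
    · exfalso
      have : p ∈ ({z, w} : Set (ℝ × ℝ)) := by rw [← r]; simp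
      simp [a, b] at this
    · rw [Set.disjoint_left]
      intro y y1 y2
      obtain ⟨rfl | rfl, h | h⟩ := r y y1 y2 <;> contradiction
  · intro v p q h h' hpq hs hsl
    have n1 := ne h
    have n2 := ne h'
    have nv1 : p ≠ v := fun e => n1 (by rw [e])
    have nv2 : q ≠ v := fun e => n2 (by rw [e])
    rcases inter h h' with r | r
    · have : p ∈ ({v, q} : Set (ℝ × ℝ)) := by rw [← r]; simp
      simp [nv1, hpq] at this
    · rcases le_total |p.1 - v.1| |q.1 - v.1| with hle | hle
      · have := r p (right_mem_segment ℝ _ _) (mem_segment_of_slp n1 hs hsl hle)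
        tauto
      · have := r q (mem_segment_of_slp n2 hs.symm hsl.symm hle) (right_mem_segment ℝ _ _)
        have := hpq.symm
        tauto

/-- The second point of the polyline of `uv` when traversed from `u`, after shearing. -/
noncomputable def PolyDrawing.first (D : PolyDrawing G) (κ : ℝ) (u v : V) : ℝ × ℝ :=
  open Classical in
  shear κ (if (D.poly s(u, v)).pt 0 = D.pos u then (D.poly s(u, v)).pt 1
    else (D.poly s(u, v)).pt ((D.poly s(u, v)).len - 1))

/-- Inner points of the sheared polyline of `e`. -/
def PolyDrawing.inner (D : PolyDrawing G) (κ : ℝ) (e : Sym2 V) : Set (ℝ × ℝ) :=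
  {z | ∃ i, 0 < i ∧ i < (D.poly e).len ∧ z = shear κ ((D.poly e).pt i)}

theorem PolyDrawing.edge_path {D : PolyDrawing G} (hD : D.IsPlanar) (κ : ℝ) {u v : V}
    (h : G.Adj u v) : ∃ n γ, PPath (D.dseg κ) (shear κ (D.pos u)) (D.first κ u v)
      (shear κ (D.pos v)) (D.first κ v u) (D.inner κ s(u, v)) n γ := by
  have hp := (D.poly s(u, v)).len_pos
  have hs := hD.1 s(u, v) h
  have huv : D.pos u ≠ D.pos v := fun e => h.ne (D.inj e)
  have sw : s(v, u) = s(u, v) := Sym2.eq_swap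
  rcases D.ends_cases h with ⟨h1, h2⟩ | ⟨h1, h2⟩
  · refine ⟨(D.poly s(u, v)).len, fun i => shear κ ((D.poly s(u, v)).pt i), hp, ?_, ?_, ?_, ?_, ?_,
      ?_, ?_⟩
    · simp [h1]
    · simp [PolyDrawing.first, h1]
    · simp [h2]
    · rw [PolyDrawing.first, sw, if_neg (by rw [h1]; exact huv)]
    · intro i hi j hj e
      exact hs.pt_inj hi hj (shear_inj κ e)
    · exact fun i hi => ⟨_, h, i, hi, Or.inl ⟨rfl, rfl⟩⟩
    · exact fun i h0 hi => ⟨i, h0, hi, rfl⟩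
  · refine ⟨(D.poly s(u, v)).len,
      fun i => shear κ ((D.poly s(u, v)).pt ((D.poly s(u, v)).len - i)), hp, ?_, ?_, ?_, ?_, ?_,
      ?_, ?_⟩
    · simp [h2]
    · rw [PolyDrawing.first, if_neg (by rw [h1]; exact huv.symm)]
    · simp [h1]
    · rw [PolyDrawing.first, sw, if_pos h1]; congr 2; omega
    · intro i hi j hj e
      have := hs.pt_inj (by omega) (by omega) (shear_inj κ e)
      omega
    · refine fun i hi => ⟨_, h, (D.poly s(u, v)).len - (i + 1), by omega, Or.inr ⟨rfl, ?_⟩⟩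
      congr 2; omega
    · exact fun i h0 hi => ⟨_, by omega, by omega, rfl⟩

theorem PolyDrawing.inner_pos {D : PolyDrawing G} (hD : D.IsPlanar) (κ : ℝ) {e : Sym2 V}
    (he : e ∈ G.edgeSet) (w : V) : shear κ (D.pos w) ∉ D.inner κ e := by
  rintro ⟨i, h0, h1, h⟩
  have h := shear_inj κ h
  have hm : (D.poly e).pt i ∈ (D.poly e).image := (D.poly e).pt_mem_image h1.le
  induction e using Sym2.ind with
  | _ u v =>
    have : (D.poly s(u, v)).pt i ∈ (D.poly s(u, v)).image ∩ Set.range D.pos := ⟨hm, w, h⟩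
    rw [hD.2.1 u v he, ← D.ends u v he] at this
    rcases this with h | h
    · have := (hD.1 _ he).pt_inj h1.le (Nat.zero_le _) h; omega
    · have := (hD.1 _ he).pt_inj h1.le le_rfl h; omega

theorem PolyDrawing.inner_disjoint {D : PolyDrawing G} (hD : D.IsPlanar) (κ : ℝ) {e e' : Sym2 V}
    (he : e ∈ G.edgeSet) (he' : e' ∈ G.edgeSet) (hne : e ≠ e') :
    Disjoint (D.inner κ e) (D.inner κ e') := by
  rw [Set.disjoint_left]
  rintro z ⟨i, i0, i1, rfl⟩ ⟨j, j0, j1, h⟩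
  have h := shear_inj κ h
  have : (D.poly e).pt i ∈ (D.poly e).image ∩ (D.poly e').image :=
    ⟨(D.poly e).pt_mem_image i1.le, h ▸ (D.poly e').pt_mem_image j1.le⟩
  obtain ⟨w, -, hw⟩ := hD.2.2 e he e' he' hne this
  exact D.inner_pos hD κ he w ⟨i, i0, i1, by rw [hw]⟩

/-- Inner points of the sheared drawing of a walk from `a` to `b`. -/
def PolyDrawing.winner (D : PolyDrawing G) (κ : ℝ) {a b : V} (p : G.Walk a b) : Set (ℝ × ℝ) :=
  {z | (∃ w ∈ p.support, w ≠ a ∧ w ≠ b ∧ z = shear κ (D.pos w)) ∨ ∃ e ∈ p.edges, z ∈ D.inner κ e}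

theorem PolyDrawing.pos_notMem_winner {D : PolyDrawing G} (hD : D.IsPlanar) (κ : ℝ) {a b : V}
    (p : G.Walk a b) (w : V) (h : w ∉ p.support ∨ w = a ∨ w = b) :
    shear κ (D.pos w) ∉ D.winner κ p := by
  rintro (⟨x, hx, xa, xb, e⟩ | ⟨e, he, hz⟩)
  · obtain rfl := D.inj (shear_inj κ e)
    tauto
  · exact D.inner_pos hD κ (p.edges_subset_edgeSet he) w hz

theorem PolyDrawing.walk_path {D : PolyDrawing G} (hD : D.IsPlanar) (κ : ℝ) {a b : V}
    (p : G.Walk a b) (hp : p.IsPath) (hab : a ≠ b) :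
    ∃ n γ, PPath (D.dseg κ) (shear κ (D.pos a)) (D.first κ a p.snd)
      (shear κ (D.pos b)) (D.first κ b p.penultimate) (D.winner κ p) n γ := by
  induction p with
  | nil => exact absurd rfl hab
  | @cons u v w h p ih =>
    by_cases hvw : v = w
    · subst hvw
      have : p = SimpleGraph.Walk.nil := by
        have := (SimpleGraph.Walk.cons_isPath_iff h p).1 hp
        exact SimpleGraph.Walk.eq_nil_iff_nil.2 (SimpleGraph.Walk.isPath_iff_nil.1 this.1)
      subst this
      obtain ⟨n, γ, hγ⟩ := D.edge_path hD κ h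
      exact ⟨n, γ, hγ.mono fun z hz => Or.inr ⟨s(u, v), by simp, hz⟩⟩
    · have hp' := (SimpleGraph.Walk.cons_isPath_iff h p).1 hp
      obtain ⟨n, γ, hγ⟩ := ih hp'.1 hvw
      obtain ⟨m, δ, hδ⟩ := D.edge_path hD κ h
      have hnil : ¬ p.Nil := fun hn => hvw hn.eq
      rw [SimpleGraph.Walk.snd_cons, SimpleGraph.Walk.penultimate_cons_of_not_nil _ _ hnil]
      refine ⟨_, _, (hδ.append hγ ?_ ?_ ?_ ?_).mono ?_⟩
      · exact D.pos_notMem_winner hD κ p u (Or.inl hp'.2)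
      · exact D.inner_pos hD κ h w
      · exact fun e => hab (D.inj (shear_inj κ e))
      · rw [Set.disjoint_left]
        rintro z hz (⟨x, hx, xa, xb, rfl⟩ | ⟨e, he, hz'⟩)
        · exact D.inner_pos hD κ h x hz
        · refine Set.disjoint_left.1 (D.inner_disjoint hD κ h (p.edges_subset_edgeSet he) ?_) hz hz'
          rintro rfl
          exact hp'.2 (p.fst_mem_support_of_mem_edges he)
      · rintro z ((hz | ⟨x, hx, xa, xb, rfl⟩ | ⟨e, he, hz'⟩) | rfl)
        · exact Or.inr ⟨s(u, v), by simp, hz⟩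
        · exact Or.inl ⟨x, by simp [hx], fun e => hp'.2 (e ▸ hx), xb, rfl⟩
        · exact Or.inr ⟨e, by simp [he], hz'⟩
        · exact Or.inl ⟨v, by simp, h.ne.symm, hvw, rfl⟩

theorem snd_of_mem_edges {a b : V} {p : G.Walk a b} (hp : p.IsPath) (h : s(a, b) ∈ p.edges) :
    p.snd = b := by
  cases p with
  | nil => simp at h
  | @cons _ v _ hadj q =>
    have hp' := (SimpleGraph.Walk.cons_isPath_iff hadj q).1 hp
    rw [SimpleGraph.Walk.edges_cons, List.mem_cons] at h
    rcases h with h | h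
    · rw [SimpleGraph.Walk.snd_cons]
      rcases Sym2.eq_iff.1 h with ⟨_, h⟩ | ⟨h, h'⟩
      · exact h.symm
      · rw [h', ← h]
    · exact absurd (q.fst_mem_support_of_mem_edges h) hp'.2

theorem PolyDrawing.winner_disjoint {D : PolyDrawing G} (hD : D.IsPlanar) (κ : ℝ) {a b : V}
    {p q : G.Walk a b} (hp : p.IsPath) (hq : q.IsPath) (hsnd : p.snd ≠ q.snd)
    (hpq : ∀ x ∈ p.support, x ∈ q.support → x = a ∨ x = b) :
    Disjoint (D.winner κ p) (D.winner κ q) := by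
  rw [Set.disjoint_left]
  rintro z (⟨x, hx, xa, xb, rfl⟩ | ⟨e, he, hz⟩) hz'
  · refine D.pos_notMem_winner hD κ q x ?_ hz'
    left; intro h
    rcases hpq x hx h with h | h <;> contradiction
  · rcases hz' with (⟨x, hx, xa, xb, rfl⟩ | ⟨e', he', hz'⟩)
    · exact D.inner_pos hD κ (p.edges_subset_edgeSet he) x hz
    · refine Set.disjoint_left.1 (D.inner_disjoint hD κ (p.edges_subset_edgeSet he)
        (q.edges_subset_edgeSet he') ?_) hz hz'
      rintro rfl
      induction e using Sym2.ind with
      | _ x y =>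
        have hxy : G.Adj x y := p.adj_of_mem_edges he
        have := hpq x (p.fst_mem_support_of_mem_edges he) (q.fst_mem_support_of_mem_edges he')
        have := hpq y (p.snd_mem_support_of_mem_edges he) (q.snd_mem_support_of_mem_edges he')
        have hne := hxy.ne
        have : s(x, y) = s(a, b) := by rw [Sym2.eq_iff]; grind
        rw [this] at he he'
        exact hsnd ((snd_of_mem_edges hp he).trans (snd_of_mem_edges hq he').symm)

/-- A rotation system of a plane graph: at every vertex, the neighbours receive distinct angles,
and the three paths of a theta subgraph never leave both of its branch vertices in the same cyclic
order. -/
structure Rotation (G : SimpleGraph V) (Θ : V → V → ℕ ×ₗ ℝ) : Prop where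
  inj : ∀ v x y, G.Adj v x → G.Adj v y → Θ v x = Θ v y → x = y
  theta : ∀ {a b : V}, a ≠ b → ∀ p q r : G.Walk a b, p.IsPath → q.IsPath → r.IsPath →
    (∀ x ∈ p.support, x ∈ q.support → x = a ∨ x = b) →
    (∀ x ∈ p.support, x ∈ r.support → x = a ∨ x = b) →
    (∀ x ∈ q.support, x ∈ r.support → x = a ∨ x = b) →
    Cyc (Θ a p.snd) (Θ a q.snd) (Θ a r.snd) →
    Cyc (Θ b p.penultimate) (Θ b q.penultimate) (Θ b r.penultimate) → False

theorem Cyc.ne {α : Type*} [Preorder α] {a b c : α} (h : Cyc a b c) : a ≠ b ∧ a ≠ c ∧ b ≠ c := by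
  rcases h with ⟨h, h'⟩ | ⟨h, h'⟩ | ⟨h, h'⟩
  · exact ⟨h.ne, (h.trans h').ne, h'.ne⟩
  · exact ⟨(h.trans h').ne', h'.ne', h.ne⟩
  · exact ⟨h'.ne, h.ne', (h.trans h').ne'⟩

/-- The directions in which the sheared edges leave their ends form a rotation system, by
`theta_plane`. -/
theorem exists_rotation [Finite V] (hG : GraphPlanar G) : ∃ Θ, Rotation G Θ := by
  obtain ⟨D, hD⟩ := hG
  obtain ⟨κ, hκ⟩ := D.exists_generic
  have hE := D.pslg hD hκ
  refine ⟨fun v w => ang (shear κ (D.pos v)) (D.first κ v w), ?_, ?_⟩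
  · intro v x y hx hy h
    by_contra hxy
    obtain ⟨n, γ, hγ⟩ := D.edge_path hD κ hx
    obtain ⟨m, δ, hδ⟩ := D.edge_path hD κ hy
    have e1 := hγ.adj 0 hγ.pos
    have e2 := hδ.adj 0 hδ.pos
    rw [hγ.fst, zero_add, hγ.snd] at e1
    rw [hδ.fst, zero_add, hδ.snd] at e2
    by_cases hf : D.first κ v x = D.first κ v y
    · -- The common second point would be a common point of two edges other than `v`.
      have mem : ∀ {y m} {δ : ℕ → ℝ × ℝ}, PPath (D.dseg κ) (shear κ (D.pos v)) (D.first κ v y)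
          (shear κ (D.pos y)) (D.first κ y v) (D.inner κ s(v, y)) m δ →
          D.first κ v y = shear κ (D.pos y) ∨ D.first κ v y ∈ D.inner κ s(v, y) := by
        intro y m δ h
        rcases h.pos.eq_or_lt with h1 | h1
        · left; rw [← h.snd, ← h.lst, ← h1]
        · right; rw [← h.snd]; exact h.mem 1 one_pos h1
      have hne : s(v, x) ≠ s(v, y) := by
        intro h; rw [Sym2.congr_right] at h; exact hxy h
      rcases mem hγ with h1 | h1 <;> rcases mem hδ with h2 | h2
      · rw [h1, h2] at hf; exact hxy (D.inj (shear_inj κ hf))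
      · rw [← hf, h1] at h2; exact D.inner_pos hD κ hy x h2
      · rw [hf, h2] at h1; exact D.inner_pos hD κ hx y h1
      · rw [hf] at h1
        exact Set.disjoint_left.1 (D.inner_disjoint hD κ hx hy hne) h1 h2
    · have h' := Prod.ext_iff.1 (toLex_inj.1 h)
      refine hE.dir e1 e2 hf ?_ h'.2
      have h1 := h'.1
      by_cases a1 : (shear κ (D.pos v)).1 < (D.first κ v x).1 <;>
      by_cases a2 : (shear κ (D.pos v)).1 < (D.first κ v y).1 <;>
      simp [a1, a2] at h1 ⊢
  · intro a b hab p q r hp hq hr hpq hpr hqr ca cb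
    obtain ⟨n1, γ1, h1⟩ := D.walk_path hD κ p hp hab
    obtain ⟨n2, γ2, h2⟩ := D.walk_path hD κ q hq hab
    obtain ⟨n3, γ3, h3⟩ := D.walk_path hD κ r hr hab
    obtain ⟨c1, c2, c3⟩ := ca.ne
    have ne : ∀ {x y}, ang (shear κ (D.pos a)) (D.first κ a x) ≠
        ang (shear κ (D.pos a)) (D.first κ a y) → x ≠ y := fun h e => h (by rw [e])
    exact theta_plane hE h1 h2 h3 (D.winner_disjoint hD κ hp hq (ne c1) hpq)
      (D.winner_disjoint hD κ hp hr (ne c2) hpr) (D.winner_disjoint hD κ hq hr (ne c3) hqr)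
      (D.pos_notMem_winner hD κ p a (by simp)) (D.pos_notMem_winner hD κ p b (by simp))
      (D.pos_notMem_winner hD κ q a (by simp)) (D.pos_notMem_winner hD κ q b (by simp)) ca cb

end Drawing

/-! ### Connectivity of induced subgraphs -/

section Connectivity

variable {V : Type*} [DecidableEq V] {G : SimpleGraph V}

/-- `a` and `b` are joined by a walk of `G` inside `S`. -/
def Linked (G : SimpleGraph V) (S : Finset V) (a b : V) : Prop :=
  ∃ p : G.Walk a b, ∀ x ∈ p.support, x ∈ S

/-- The subgraph induced on `S` is connected (or empty). -/
def Conn (G : SimpleGraph V) (S : Finset V) : Prop := ∀ a ∈ S, ∀ b ∈ S, Linked G S a b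

theorem Linked.refl {S : Finset V} {a : V} (h : a ∈ S) : Linked G S a a :=
  ⟨SimpleGraph.Walk.nil, by simpa using h⟩

theorem Linked.symm {S : Finset V} {a b : V} (h : Linked G S a b) : Linked G S b a := by
  obtain ⟨p, hp⟩ := h
  exact ⟨p.reverse, by simpa using hp⟩

theorem Linked.trans {S : Finset V} {a b c : V} (h : Linked G S a b) (h' : Linked G S b c) :
    Linked G S a c := by
  obtain ⟨p, hp⟩ := h
  obtain ⟨q, hq⟩ := h'
  refine ⟨p.append q, fun x hx => ?_⟩
  rw [SimpleGraph.Walk.mem_support_append_iff] at hx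
  exact hx.elim (hp x) (hq x)

theorem Linked.mono {S T : Finset V} {a b : V} (h : Linked G S a b) (hST : S ⊆ T) :
    Linked G T a b := by
  obtain ⟨p, hp⟩ := h
  exact ⟨p, fun x hx => hST (hp x hx)⟩

theorem Linked.mem_left {S : Finset V} {a b : V} (h : Linked G S a b) : a ∈ S := by
  obtain ⟨p, hp⟩ := h
  exact hp a p.start_mem_support

theorem Linked.mem_right {S : Finset V} {a b : V} (h : Linked G S a b) : b ∈ S := h.symm.mem_left

theorem Linked.of_adj {S : Finset V} {a b : V} (ha : a ∈ S) (hb : b ∈ S) (h : G.Adj a b) :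
    Linked G S a b :=
  ⟨SimpleGraph.Walk.cons h SimpleGraph.Walk.nil, by simp [ha, hb]⟩

theorem Linked.exists_path {S : Finset V} {a b : V} (h : Linked G S a b) :
    ∃ p : G.Walk a b, p.IsPath ∧ ∀ x ∈ p.support, x ∈ S := by
  obtain ⟨p, hp⟩ := h
  exact ⟨p.bypass, p.bypass_isPath, fun x hx => hp x (p.support_bypass_subset_support hx)⟩

/-- A walk inside `S` leaving the set `T` uses an edge leaving `T`. -/
theorem Linked.boundary {S : Finset V} {a b : V} (h : Linked G S a b) (T : Set V) (ha : a ∈ T)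
    (hb : b ∉ T) : ∃ x y, x ∈ S ∧ y ∈ S ∧ x ∈ T ∧ y ∉ T ∧ G.Adj x y := by
  obtain ⟨p, hp⟩ := h
  induction p with
  | nil => exact absurd ha hb
  | @cons u v w hadj p ih =>
    by_cases hv : v ∈ T
    · exact ih hv hb fun x hx => hp x (by simp [hx])
    · exact ⟨u, v, hp u (by simp), hp v (by simp), ha, hv, hadj⟩

open Classical in
/-- The connected component of `a` in the subgraph induced on `S`. -/
noncomputable def comp (G : SimpleGraph V) (S : Finset V) (a : V) : Finset V :=
  S.filter (Linked G S a)

theorem mem_comp {S : Finset V} {a b : V} : b ∈ comp G S a ↔ Linked G S a b := by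
  classical
  unfold comp
  rw [Finset.mem_filter]
  exact ⟨fun h => h.2, fun h => ⟨h.mem_right, h⟩⟩

theorem comp_subset (S : Finset V) (a : V) : comp G S a ⊆ S := by
  intro x hx; exact (mem_comp.1 hx).mem_right

theorem self_mem_comp {S : Finset V} {a : V} (h : a ∈ S) : a ∈ comp G S a :=
  mem_comp.2 (Linked.refl h)

theorem adj_comp {S : Finset V} {a x y : V} (hx : x ∈ comp G S a) (hy : y ∈ S) (h : G.Adj x y) :
    y ∈ comp G S a :=
  mem_comp.2 ((mem_comp.1 hx).trans (Linked.of_adj (comp_subset S a hx) hy h))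

theorem joined_comp {S : Finset V} {a b : V} (h : Linked G S a b) : Linked G (comp G S a) a b := by
  by_contra hb
  obtain ⟨x, y, -, hy, hx, hny, hadj⟩ := h.boundary {z | Linked G (comp G S a) a z}
    (Linked.refl (self_mem_comp h.mem_left)) hb
  have hx' : Linked G (comp G S a) a x := hx
  exact hny (hx'.trans (Linked.of_adj hx'.mem_right (adj_comp hx'.mem_right hy hadj) hadj))

theorem conn_comp (S : Finset V) (a : V) : Conn G (comp G S a) := fun _ hx _ hy =>
  (joined_comp (mem_comp.1 hx)).symm.trans (joined_comp (mem_comp.1 hy))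

theorem Conn.of_joined {S : Finset V} {a : V} (h : ∀ b ∈ S, Linked G S a b) : Conn G S :=
  fun _ hx _ hy => (h _ hx).symm.trans (h _ hy)

theorem Conn.subset_comp {S T : Finset V} {a : V} (h : Conn G T) (hTS : T ⊆ S) (ha : a ∈ T) :
    T ⊆ comp G S a := fun x hx => mem_comp.2 ((h a ha x hx).mono hTS)

theorem Conn.insert {S : Finset V} {v x : V} (h : Conn G S) (hx : x ∈ S) (hadj : G.Adj x v) :
    Conn G (insert v S) := by
  refine Conn.of_joined (a := x) fun b hb => ?_
  rcases Finset.mem_insert.1 hb with rfl | hb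
  · exact Linked.of_adj (Finset.mem_insert_of_mem hx) (Finset.mem_insert_self _ _) hadj
  · exact (h x hx b hb).mono (Finset.subset_insert _ _)

/-- A vertex order from one connected part to another: while `A ⊂ K` and both `A` and `S \ A` are
connected, some vertex of `K` can be moved to `A`, if `S` has no cut vertex. -/
theorem exists_next {S K A : Finset V} {c u : V} (hcut : ∀ v ∈ S, Conn G (S.erase v))
    (hKS : K ⊆ S) (hK : Conn G K) (hZ : Conn G (S \ K)) (hu : u ∈ S \ K) (hA : A ⊆ K) (hc : c ∈ A)
    (hAK : A ≠ K) (hSA : Conn G (S \ A)) :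
    ∃ v ∈ K \ A, (∃ x ∈ A, G.Adj x v) ∧ Conn G ((S \ A).erase v) := by
  classical
  have hne : ((K \ A).filter fun v => ∃ x ∈ A, G.Adj x v).Nonempty := by
    obtain ⟨y, hyK, hyA⟩ := Finset.exists_of_ssubset (hA.ssubset_of_ne hAK)
    obtain ⟨x, z, hx, hz, hxA, hzA, h⟩ := (hK c (hA hc) y hyK).boundary (A : Set V) hc hyA
    exact ⟨z, by simp at hzA hxA ⊢; exact ⟨⟨hz, hzA⟩, x, hxA, h⟩⟩
  obtain ⟨v, hv, hmax⟩ := Finset.exists_max_image _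
    (fun v => (comp G ((S \ A).erase v) u).card) hne
  rw [Finset.mem_filter, Finset.mem_sdiff] at hv
  obtain ⟨⟨hvK, hvA⟩, hadj⟩ := hv
  refine ⟨v, by simp [hvK, hvA], hadj, ?_⟩
  have huS := Finset.mem_sdiff.1 hu
  have hZsub : ∀ v ∈ K, S \ K ⊆ (S \ A).erase v := by
    intro v hv y hy
    rw [Finset.mem_sdiff] at hy
    rw [Finset.mem_erase, Finset.mem_sdiff]
    exact ⟨fun e => hy.2 (e ▸ hv), hy.1, fun h => hy.2 (hA h)⟩
  have hZC : ∀ v ∈ K, S \ K ⊆ comp G ((S \ A).erase v) u := fun v hv =>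
    hZ.subset_comp (hZsub v hv) hu
  have huB : u ∈ (S \ A).erase v := hZsub v hvK hu
  refine Conn.of_joined (a := u) fun y hy => ?_
  by_contra hyC
  have hyv := Finset.mem_erase.1 hy
  have hyS := Finset.mem_sdiff.1 hyv.2
  have huv : u ≠ v := (Finset.mem_erase.1 huB).1
  -- The component `C'` of `y` must reach `u` through `A`.
  obtain ⟨x, z, hxS, hzS, hx, hz, hxz⟩ := (hcut v (hKS hvK) y (by simp [hyv.1, hyS.1]) u
    (by simp [huv, huS.1])).boundary (comp G ((S \ A).erase v) y : Set V)
    (self_mem_comp hy) (fun h => hyC (mem_comp.1 h).symm)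
  have hx : x ∈ comp G ((S \ A).erase v) y := hx
  have hz : z ∉ comp G ((S \ A).erase v) y := hz
  rw [Finset.mem_erase] at hzS
  have hzA : z ∈ A := by
    by_contra hzA
    exact hz (adj_comp hx (by simp [hzS.1, hzS.2, hzA]) hxz)
  have hxB := comp_subset _ _ hx
  rw [Finset.mem_erase, Finset.mem_sdiff] at hxB
  have hxu : x ∉ comp G ((S \ A).erase v) u := fun h =>
    hyC ((mem_comp.1 h).trans (mem_comp.1 hx).symm)
  have hxK : x ∈ K := by
    by_contra hxK
    exact hxu (hZC v hvK (by simp [hxB.2.1, hxK]))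
  have hle := hmax x (by simp [hxK, hxB.2.2]; exact ⟨z, hzA, hxz.symm⟩)
  -- The component of `u` avoiding `x` contains `v` and the component of `u` avoiding `v`.
  obtain ⟨r, s, hrS, hsS, hr, hs, hrs⟩ := (hSA u (by simp [huS.1]; exact fun h => huS.2 (hA h)) v
    (by simp [hKS hvK, hvA])).boundary (comp G ((S \ A).erase v) u : Set V)
    (self_mem_comp huB) (fun h => by simpa using comp_subset _ _ h)
  have hr : r ∈ comp G ((S \ A).erase v) u := hr
  have hs : s ∉ comp G ((S \ A).erase v) u := hs
  have hsv : s = v := by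
    by_contra h
    exact hs (adj_comp hr (Finset.mem_erase.2 ⟨h, hsS⟩) hrs)
  subst hsv
  have hsub : insert s (comp G ((S \ A).erase s) u) ⊆ comp G ((S \ A).erase x) u := by
    refine ((conn_comp _ _).insert hr hrs).subset_comp ?_ (Finset.mem_insert_of_mem
      (self_mem_comp huB))
    intro w hw
    rcases Finset.mem_insert.1 hw with rfl | hw
    · exact Finset.mem_erase.2 ⟨hxB.1.symm, hsS⟩
    · refine Finset.mem_erase.2 ⟨fun e => hxu (e ▸ hw), (Finset.mem_erase.1 (comp_subset _ _ hw)).2⟩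
  have := Finset.card_le_card hsub
  rw [Finset.card_insert_of_notMem (fun h => by simpa using comp_subset _ _ h)] at this
  omega

end Connectivity

/-! ### Tripods and their orientation -/

section Tripods

variable {V : Type*} [DecidableEq V] {G : SimpleGraph V} {Θ : V → V → ℕ ×ₗ ℝ}

/-- First step of the walk obtained from `p` by appending a step to `y`. -/
def fstep {a b : V} (p : G.Walk a b) (y : V) : V :=
  match p with
  | .nil => y
  | .cons (v := v) _ _ => v

theorem snd_append_cons {a b c d : V} (p : G.Walk a b) (h : G.Adj b c) (q : G.Walk c d) :
    (p.append (.cons h q)).snd = fstep p c := by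
  cases p <;> simp [fstep]

theorem fstep_concat {a b c : V} (p : G.Walk a b) (h : G.Adj b c) (y : V) :
    fstep (p.concat h) y = fstep p c := by
  cases p <;> rfl

theorem fstep_adj {a b y : V} (p : G.Walk a b) (h : G.Adj b y) : G.Adj a (fstep p y) := by
  cases p with
  | nil => exact h
  | cons h' _ => exact h'

theorem fstep_mem {a b : V} (p : G.Walk a b) (y : V) :
    (a = b ∧ fstep p y = y) ∨ fstep p y ∈ p.support := by
  cases p <;> simp [fstep]

theorem fstep_mem_of_ne {a b : V} (p : G.Walk a b) (y : V) (h : a ≠ b) :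
    fstep p y ∈ p.support := (fstep_mem p y).resolve_left fun e => h e.1

/-- Three paths inside `A` from a common centre `a` to the tails of the strands `e₁ e₂ e₃`,
pairwise disjoint except for the centre. -/
structure IsTri (A : Finset V) (e₁ e₂ e₃ : V × V) {a : V} (p₁ : G.Walk a e₁.1) (p₂ : G.Walk a e₂.1)
    (p₃ : G.Walk a e₃.1) : Prop where
  adj₁ : G.Adj e₁.1 e₁.2
  adj₂ : G.Adj e₂.1 e₂.2
  adj₃ : G.Adj e₃.1 e₃.2
  path₁ : p₁.IsPath
  path₂ : p₂.IsPath
  path₃ : p₃.IsPath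
  sub₁ : ∀ x ∈ p₁.support, x ∈ A
  sub₂ : ∀ x ∈ p₂.support, x ∈ A
  sub₃ : ∀ x ∈ p₃.support, x ∈ A
  meet₁₂ : ∀ x ∈ p₁.support, x ∈ p₂.support → x = a
  meet₁₃ : ∀ x ∈ p₁.support, x ∈ p₃.support → x = a
  meet₂₃ : ∀ x ∈ p₂.support, x ∈ p₃.support → x = a

/-- Some tripod inside `A` ending with the strands `e₁ e₂ e₃` has its legs in this cyclic order. -/
def PosTri (G : SimpleGraph V) (Θ : V → V → ℕ ×ₗ ℝ) (A : Finset V) (e₁ e₂ e₃ : V × V) : Prop :=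
  ∃ (a : V) (p₁ : G.Walk a e₁.1) (p₂ : G.Walk a e₂.1) (p₃ : G.Walk a e₃.1),
    IsTri A e₁ e₂ e₃ p₁ p₂ p₃ ∧
    Cyc (Θ a (fstep p₁ e₁.2)) (Θ a (fstep p₂ e₂.2)) (Θ a (fstep p₃ e₃.2))

theorem PosTri.mono {A B : Finset V} (hAB : A ⊆ B) {e₁ e₂ e₃ : V × V} (h : PosTri G Θ A e₁ e₂ e₃) :
    PosTri G Θ B e₁ e₂ e₃ := by
  obtain ⟨a, p₁, p₂, p₃, t, c⟩ := h
  exact ⟨a, p₁, p₂, p₃, { t with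
    sub₁ := fun x hx => hAB (t.sub₁ x hx)
    sub₂ := fun x hx => hAB (t.sub₂ x hx)
    sub₃ := fun x hx => hAB (t.sub₃ x hx) }, c⟩

theorem Cyc.rot {α : Type*} [LT α] {a b c : α} (h : Cyc a b c) : Cyc b c a := by
  unfold Cyc at *; tauto

theorem PosTri.rot {A : Finset V} {e₁ e₂ e₃ : V × V} (h : PosTri G Θ A e₁ e₂ e₃) :
    PosTri G Θ A e₂ e₃ e₁ := by
  obtain ⟨a, p₁, p₂, p₃, t, c⟩ := h
  exact ⟨a, p₂, p₃, p₁, ⟨t.adj₂, t.adj₃, t.adj₁, t.path₂, t.path₃, t.path₁, t.sub₂, t.sub₃, t.sub₁,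
    t.meet₂₃, fun x h h' => t.meet₁₂ x h' h, fun x h h' => t.meet₁₃ x h' h⟩, c.rot⟩

/-- Prolong the first leg of a tripod through a new vertex `v`. -/
theorem PosTri.extend {A : Finset V} {x v y : V} {e₂ e₃ : V × V} (hv : v ∉ A)
    (h : PosTri G Θ A (x, v) e₂ e₃) (hy : G.Adj v y) : PosTri G Θ (insert v A) (v, y) e₂ e₃ := by
  obtain ⟨a, p₁, p₂, p₃, t, c⟩ := h
  have hs : ∀ z, z ∈ (p₁.concat t.adj₁).support ↔ z ∈ p₁.support ∨ z = v := by
    intro z; simp [SimpleGraph.Walk.support_concat, List.mem_append]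
  refine ⟨a, p₁.concat t.adj₁, p₂, p₃, ⟨hy, t.adj₂, t.adj₃, ?_, t.path₂, t.path₃, ?_, ?_, ?_, ?_, ?_,
    t.meet₂₃⟩, ?_⟩
  · exact t.path₁.concat (fun h => hv (t.sub₁ _ h)) t.adj₁
  · intro z hz
    rcases (hs z).1 hz with h | rfl
    · exact Finset.mem_insert_of_mem (t.sub₁ z h)
    · exact Finset.mem_insert_self _ _
  · exact fun z hz => Finset.mem_insert_of_mem (t.sub₂ z hz)
  · exact fun z hz => Finset.mem_insert_of_mem (t.sub₃ z hz)
  · intro z hz hz'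
    rcases (hs z).1 hz with h | rfl
    · exact t.meet₁₂ z h hz'
    · exact absurd (t.sub₂ _ hz') hv
  · intro z hz hz'
    rcases (hs z).1 hz with h | rfl
    · exact t.meet₁₃ z h hz'
    · exact absurd (t.sub₃ _ hz') hv
  · rw [fstep_concat]; exact c

theorem theta_walk {A B : Finset V} (hAB : Disjoint A B) {a b x y : V} {p : G.Walk a x}
    {q : G.Walk b y} (h : G.Adj x y) (hp : p.IsPath) (hq : q.IsPath) (hpA : ∀ z ∈ p.support, z ∈ A)
    (hqB : ∀ z ∈ q.support, z ∈ B) :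
    (p.append (.cons h q.reverse)).IsPath ∧
    (p.append (.cons h q.reverse)).snd = fstep p y ∧
    (p.append (.cons h q.reverse)).penultimate = fstep q x ∧
    ∀ z, z ∈ (p.append (.cons h q.reverse)).support ↔ z ∈ p.support ∨ z ∈ q.support := by
  have hsup : (p.append (.cons h q.reverse)).support = p.support ++ q.support.reverse := by
    rw [SimpleGraph.Walk.support_append]; simp
  refine ⟨?_, snd_append_cons _ _ _, ?_, ?_⟩
  · rw [SimpleGraph.Walk.isPath_def, hsup, List.nodup_append]
    refine ⟨hp.support_nodup, List.nodup_reverse.2 hq.support_nodup, ?_⟩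
    rintro z hz w hw rfl
    exact Finset.disjoint_left.1 hAB (hpA z hz) (hqB z (List.mem_reverse.1 hw))
  · rw [← SimpleGraph.Walk.snd_reverse, SimpleGraph.Walk.reverse_append,
      SimpleGraph.Walk.reverse_cons, SimpleGraph.Walk.reverse_reverse, ← SimpleGraph.Walk.append_assoc,
      SimpleGraph.Walk.cons_append, SimpleGraph.Walk.nil_append, snd_append_cons]
  · intro z; rw [hsup]; simp

/-- Disjoint sets cannot both contain a positively oriented tripod for the same three strands. -/
theorem no_both (hR : Rotation G Θ) {A B : Finset V} (hAB : Disjoint A B) {e₁ e₂ e₃ : V × V}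
    (hA : PosTri G Θ A e₁ e₂ e₃) (hB : PosTri G Θ B e₁.swap e₂.swap e₃.swap) : False := by
  obtain ⟨a, p₁, p₂, p₃, t, c⟩ := hA
  obtain ⟨b, q₁, q₂, q₃, s, d⟩ := hB
  obtain ⟨i₁, f₁, l₁, m₁⟩ := theta_walk hAB t.adj₁ t.path₁ s.path₁ t.sub₁ s.sub₁
  obtain ⟨i₂, f₂, l₂, m₂⟩ := theta_walk hAB t.adj₂ t.path₂ s.path₂ t.sub₂ s.sub₂
  obtain ⟨i₃, f₃, l₃, m₃⟩ := theta_walk hAB t.adj₃ t.path₃ s.path₃ t.sub₃ s.sub₃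
  have dj : ∀ {z}, z ∈ A → z ∈ B → False := fun h h' => Finset.disjoint_left.1 hAB h h'
  have hab : a ≠ b := fun e => dj (t.sub₁ a p₁.start_mem_support) (e ▸ s.sub₁ b q₁.start_mem_support)
  refine hR.theta hab _ _ _ i₁ i₂ i₃ ?_ ?_ ?_ (by rw [f₁, f₂, f₃]; exact c)
    (by rw [l₁, l₂, l₃]; exact d)
  · intro x hx hx'
    rcases (m₁ x).1 hx with h | h <;> rcases (m₂ x).1 hx' with h' | h'
    · exact Or.inl (t.meet₁₂ x h h')
    · exact (dj (t.sub₁ x h) (s.sub₂ x h')).elim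
    · exact (dj (t.sub₂ x h') (s.sub₁ x h)).elim
    · exact Or.inr (s.meet₁₂ x h h')
  · intro x hx hx'
    rcases (m₁ x).1 hx with h | h <;> rcases (m₃ x).1 hx' with h' | h'
    · exact Or.inl (t.meet₁₃ x h h')
    · exact (dj (t.sub₁ x h) (s.sub₃ x h')).elim
    · exact (dj (t.sub₃ x h') (s.sub₁ x h)).elim
    · exact Or.inr (s.meet₁₃ x h h')
  · intro x hx hx'
    rcases (m₂ x).1 hx with h | h <;> rcases (m₃ x).1 hx' with h' | h'
    · exact Or.inl (t.meet₂₃ x h h')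
    · exact (dj (t.sub₂ x h) (s.sub₃ x h')).elim
    · exact (dj (t.sub₃ x h') (s.sub₂ x h)).elim
    · exact Or.inr (s.meet₂₃ x h h')

theorem exists_first_hit {a b : V} (p : G.Walk a b) (hp : p.IsPath) (X : Set V) (hb : b ∈ X) :
    ∃ c ∈ X, ∃ q : G.Walk a c, q.IsPath ∧ (∀ x ∈ q.support, x ∈ p.support) ∧
      ∀ x ∈ q.support, x ∈ X → x = c := by
  induction p with
  | nil => exact ⟨_, hb, .nil, by simp⟩
  | @cons u v w h p ih =>
    by_cases hu : u ∈ X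
    · exact ⟨u, hu, .nil, by simp⟩
    · have hp' := (SimpleGraph.Walk.cons_isPath_iff h p).1 hp
      obtain ⟨c, hc, q, hq, hqs, hqX⟩ := ih hp'.1 hb
      refine ⟨c, hc, .cons h q, ?_, ?_, ?_⟩
      · rw [SimpleGraph.Walk.cons_isPath_iff]; exact ⟨hq, fun h => hp'.2 (hqs _ h)⟩
      · intro x hx; simp at hx ⊢; exact hx.imp id (hqs x)
      · intro x hx hX
        simp at hx
        rcases hx with rfl | hx
        · exact absurd hX hu
        · exact hqX x hx hX

/-- Three vertices of a connected set `B`, two of which are joined avoiding the third, are the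
feet of a tripod whose centre is not the third one. -/
theorem exists_tripod {B : Finset V} {u v f : V} (huf : Linked G (B.erase v) u f)
    (hvu : Linked G B v u) :
    ∃ (b : V) (q₁ : G.Walk b u) (q₂ : G.Walk b v) (q₃ : G.Walk b f), b ≠ v ∧
      q₁.IsPath ∧ q₂.IsPath ∧ q₃.IsPath ∧ (∀ x ∈ q₁.support, x ∈ B) ∧ (∀ x ∈ q₂.support, x ∈ B) ∧
      (∀ x ∈ q₃.support, x ∈ B) ∧ (∀ x ∈ q₁.support, x ∈ q₂.support → x = b) ∧
      (∀ x ∈ q₁.support, x ∈ q₃.support → x = b) ∧ (∀ x ∈ q₂.support, x ∈ q₃.support → x = b) := by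
  obtain ⟨P, hP, hPB⟩ := huf.exists_path
  obtain ⟨R, hR, hRB⟩ := hvu.exists_path
  obtain ⟨b, hb, q, hq, hqs, hqX⟩ := exists_first_hit R hR {x | x ∈ P.support} P.start_mem_support
  have hb : b ∈ P.support := hb
  refine ⟨b, (P.takeUntil b hb).reverse, q.reverse, P.dropUntil b hb, ?_, ?_, ?_, ?_, ?_, ?_, ?_, ?_,
    ?_, ?_⟩
  · rintro rfl; simpa using hPB _ hb
  · exact (hP.takeUntil hb).reverse
  · exact hq.reverse
  · exact hP.dropUntil hb
  · intro x hx
    rw [SimpleGraph.Walk.support_reverse, List.mem_reverse] at hx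
    exact Finset.mem_of_mem_erase (hPB x (P.support_takeUntil_subset_support hb hx))
  · intro x hx
    rw [SimpleGraph.Walk.support_reverse, List.mem_reverse] at hx
    exact hRB x (hqs x hx)
  · intro x hx
    exact Finset.mem_of_mem_erase (hPB x (P.support_dropUntil_subset_support hb hx))
  · intro x hx hx'
    rw [SimpleGraph.Walk.support_reverse, List.mem_reverse] at hx hx'
    exact hqX x hx' (P.support_takeUntil_subset_support hb hx)
  · intro x hx hx'
    rw [SimpleGraph.Walk.support_reverse, List.mem_reverse] at hx
    by_contra hne
    have hnd := hP.support_nodup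
    rw [← P.take_spec hb, SimpleGraph.Walk.support_append, List.nodup_append] at hnd
    refine hnd.2.2 x hx x ?_ rfl
    rw [← SimpleGraph.Walk.cons_tail_support, List.mem_cons] at hx'
    exact hx'.resolve_left hne
  · intro x hx hx'
    rw [SimpleGraph.Walk.support_reverse, List.mem_reverse] at hx
    exact hqX x hx (P.support_dropUntil_subset_support hb hx')

theorem cyc_or {α : Type*} [LinearOrder α] {a b c : α} (h1 : a ≠ b) (h2 : a ≠ c) (h3 : b ≠ c) :
    Cyc a b c ∨ Cyc a c b := by
  unfold Cyc
  rcases lt_or_gt_of_ne h1 with h1 | h1 <;> rcases lt_or_gt_of_ne h2 with h2 | h2 <;>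
  rcases lt_or_gt_of_ne h3 with h3 | h3 <;> tauto

/-- The strands entering `v` are consecutive: no foreign strand `f` runs between two of them. -/
theorem no_separation (hR : Rotation G Θ) {A B : Finset V} (hAB : Disjoint A B) {e f : V × V}
    {i i' v : V} (hB : Conn G B) (hBv : Conn G (B.erase v)) (he : e.2 ∈ B) (hf : f.2 ∈ B)
    (hv : v ∈ B) (hev : e.2 ≠ v) (hfv : f.2 ≠ v) (heA : e.1 ∈ A) (hfA : f.1 ∈ A) (hef : e ≠ f)
    (h1 : PosTri G Θ A e (i, v) f) (h2 : PosTri G Θ A e f (i', v)) : False := by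
  obtain ⟨b, q₁, q₂, q₃, hbv, P₁, P₂, P₃, S₁, S₂, S₃, M₁₂, M₁₃, M₂₃⟩ := exists_tripod
    (hBv e.2 (by simp [hev, he]) f.2 (by simp [hfv, hf])) (hB v hv e.2 he)
  obtain ⟨-, -, -, -, ⟨ae, ai, af, -⟩, -⟩ := id h1
  obtain ⟨-, -, -, -, ⟨-, -, ai', -⟩, -⟩ := id h2
  have dj : ∀ {z}, z ∈ A → z ∈ B → False := fun h h' => Finset.disjoint_left.1 hAB h h'
  have g₁ := fstep_adj q₁ ae.symm
  have g₂ : ∀ y, fstep q₂ y ∈ q₂.support := fun y => fstep_mem_of_ne q₂ y hbv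
  have g₂' : ∀ y y', fstep q₂ y = fstep q₂ y' := by
    cases q₂ with
    | nil => exact absurd rfl hbv
    | cons _ _ => intro _ _; rfl
  have a₂ : ∀ y, G.Adj b (fstep q₂ y) := by
    intro y; rw [g₂' y i]; exact fstep_adj q₂ ai.symm
  have g₃ := fstep_adj q₃ af.symm
  have n₁₂ : fstep q₁ e.1 ≠ fstep q₂ i := by
    intro h
    rcases fstep_mem q₁ e.1 with h' | h'
    · exact dj heA (by rw [← h'.2, h]; exact S₂ _ (g₂ i))
    · exact g₁.ne (M₁₂ _ h' (h ▸ g₂ i)).symm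
  have n₂₃ : fstep q₂ i ≠ fstep q₃ f.1 := by
    intro h
    rcases fstep_mem q₃ f.1 with h' | h'
    · exact dj hfA (by rw [← h'.2, ← h]; exact S₂ _ (g₂ i))
    · exact g₃.ne (M₂₃ _ (h ▸ g₂ i) h').symm
  have n₁₃ : fstep q₁ e.1 ≠ fstep q₃ f.1 := by
    intro h
    rcases fstep_mem q₁ e.1 with h1 | h1 <;> rcases fstep_mem q₃ f.1 with h3 | h3
    · exact hef (Prod.ext (by rw [← h1.2, ← h3.2, h]) (by rw [← h1.1, ← h3.1]))
    · exact dj heA (by rw [← h1.2, h]; exact S₃ _ h3)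
    · exact dj hfA (by rw [← h3.2, ← h]; exact S₁ _ h1)
    · exact g₁.ne (M₁₃ _ h1 (h ▸ h3)).symm
  have inj : ∀ {x y}, G.Adj b x → G.Adj b y → x ≠ y → Θ b x ≠ Θ b y :=
    fun hx hy h e => h (hR.inj b _ _ hx hy e)
  rcases cyc_or (inj g₁ (a₂ i) n₁₂) (inj g₁ g₃ n₁₃) (inj (a₂ i) g₃ n₂₃) with c | c
  · exact no_both hR hAB h1 ⟨b, q₁, q₂, q₃,
      ⟨ae.symm, ai.symm, af.symm, P₁, P₂, P₃, S₁, S₂, S₃, M₁₂, M₁₃, M₂₃⟩, c⟩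
  · refine no_both hR hAB h2 ⟨b, q₁, q₃, q₂, ⟨ae.symm, af.symm, ai'.symm, P₁, P₃, P₂, S₁, S₃, S₂, M₁₃,
      M₁₂, fun x h h' => M₂₃ x h' h⟩, ?_⟩
    rw [g₂' i i'] at c
    exact c

end Tripods

/-! ### Sweep lines and sweeps -/

section Words

variable {V : Type*} [DecidableEq V] {G : SimpleGraph V} {Θ : V → V → ℕ ×ₗ ℝ}

/-- Elementary moves of an upward sweep over a plane drawing. A *strand* `(x, y)` is an edge leaving
`x` upwards and heading for `y`; the sweep line is a word of strands, read from left to right.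
`vert v ins outs` passes the vertex `v`, whose lower neighbours are `ins` and whose upper neighbours
are `outs`, both from left to right. `cap u t insu inst` passes two adjacent vertices `u`, `t` without
further upper neighbours, joined by an edge that turns round above them. -/
inductive Ev (V : Type*) where
  | vert (v : V) (ins outs : List V)
  | cap (u t : V) (insu inst : List V)

/-- The vertices passed by a move. -/
def Ev.verts : Ev V → List V
  | .vert v _ _ => [v]
  | .cap u t _ _ => [u, t]

/-- The strands consumed by a move. -/
def Ev.dom : Ev V → List (V × V)
  | .vert v ins _ => ins.map fun x => (x, v)
  | .cap u t insu inst => (insu.map fun x => (x, u)) ++ inst.map fun x => (x, t)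

/-- The strands produced by a move. -/
def Ev.cod : Ev V → List (V × V)
  | .vert v _ outs => outs.map fun y => (v, y)
  | .cap _ _ _ _ => []

/-- The move mentions exactly the edges of `G` inside `S` at its vertices, and its vertices have
ports below and above, except that a top vertex may have a single port. -/
def Ev.OK (G : SimpleGraph V) (S : Finset V) : Ev V → Prop
  | .vert v ins outs => ins ≠ [] ∧ (outs ≠ [] ∨ ins.length = 1) ∧ (ins ++ outs).Nodup ∧
      ∀ y, y ∈ ins ++ outs ↔ G.Adj v y ∧ y ∈ S
  | .cap u t insu inst => G.Adj u t ∧ insu ≠ [] ∧ inst ≠ [] ∧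
      ((insu ++ [t]).Nodup ∧ ∀ y, y ∈ insu ++ [t] ↔ G.Adj u y ∧ y ∈ S) ∧
      ((inst ++ [u]).Nodup ∧ ∀ y, y ∈ inst ++ [u] ↔ G.Adj t y ∧ y ∈ S)

/-- `evs` transforms the word `w` into the word `w'`. -/
def Run : List (V × V) → List (Ev V) → List (V × V) → Prop
  | w, [], w' => w = w'
  | w, e :: es, w' => ∃ l r, w = l ++ e.dom ++ r ∧ Run (l ++ e.cod ++ r) es w'

theorem Run.append {w w' w'' : List (V × V)} {es es' : List (Ev V)} (h : Run w es w')
    (h' : Run w' es' w'') : Run w (es ++ es') w'' := by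
  induction es generalizing w with
  | nil => cases h; exact h'
  | cons e es ih =>
    obtain ⟨l, r, rfl, h⟩ := h
    exact ⟨l, r, rfl, ih h⟩

theorem Run.context {w w' : List (V × V)} {es : List (Ev V)} (h : Run w es w')
    (l r : List (V × V)) : Run (l ++ w ++ r) es (l ++ w' ++ r) := by
  induction es generalizing w with
  | nil => cases h; rfl
  | cons e es ih =>
    obtain ⟨l', r', rfl, h⟩ := h
    refine ⟨l ++ l', r' ++ r, by simp, ?_⟩
    have := ih h
    simpa using this

theorem Run.split {w w' : List (V × V)} {es es' : List (Ev V)} (h : Run w (es ++ es') w') :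
    ∃ m, Run w es m ∧ Run m es' w' := by
  induction es generalizing w with
  | nil => exact ⟨w, rfl, h⟩
  | cons e es ih =>
    obtain ⟨l, r, rfl, h⟩ := h
    obtain ⟨m, h1, h2⟩ := ih h
    exact ⟨m, ⟨l, r, rfl, h1⟩, h2⟩

theorem Run.one (e : Ev V) : Run e.dom [e] e.cod := ⟨[], [], by simp, by simp [Run]⟩

/-- A move may be replaced by any sequence of moves with the same effect. -/
theorem Run.replace {w w' : List (V × V)} {es es' fs : List (Ev V)} {e : Ev V}
    (h : Run w (es ++ e :: es') w') (hf : Run e.dom fs e.cod) :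
    Run w (es ++ fs ++ es') w' := by
  obtain ⟨m, h1, l, r, rfl, h2⟩ := h.split
  exact (h1.append (hf.context l r)).append h2

/-- The vertices passed by a sequence of moves. -/
def evVerts (es : List (Ev V)) : List V := es.flatMap Ev.verts

theorem exists_sorted {α : Type*} [LinearOrder α] (N : Finset V) (f : V → α)
    (hf : ∀ a ∈ N, ∀ b ∈ N, f a = f b → a = b) :
    ∃ L : List V, L.Nodup ∧ (∀ y, y ∈ L ↔ y ∈ N) ∧ L.Pairwise fun a b => f a < f b := by
  let r : V → V → Prop := fun a b => f a ≤ f b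
  have : DecidableRel r := fun a b => inferInstanceAs (Decidable (f a ≤ f b))
  have : Std.Total r := ⟨fun a b => le_total (f a) (f b)⟩
  have : IsTrans V r := ⟨fun a b c h h' => le_trans h h'⟩
  have hp := List.perm_insertionSort r N.toList
  refine ⟨N.toList.insertionSort r, hp.nodup_iff.2 N.nodup_toList, fun y => ?_, ?_⟩
  · rw [hp.mem_iff, Finset.mem_toList]
  · have h1 := List.pairwise_insertionSort r N.toList
    have h2 : (N.toList.insertionSort r).Nodup := hp.nodup_iff.2 N.nodup_toList
    refine (h1.and h2).imp_of_mem ?_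
    rintro a b ha hb ⟨hab, hne⟩
    rw [hp.mem_iff, Finset.mem_toList] at ha hb
    exact lt_of_le_of_ne hab fun e => hne (hf a ha b hb e)

/-- List a finite set in cyclic order, starting after `i`. -/
theorem exists_cyc_sorted {α : Type*} [LinearOrder α] (N : Finset V) (f : V → α) (i : V)
    (hf : ∀ a ∈ insert i N, ∀ b ∈ insert i N, f a = f b → a = b) (hi : i ∉ N) :
    ∃ L : List V, L.Nodup ∧ (∀ y, y ∈ L ↔ y ∈ N) ∧
      L.Pairwise fun a b => Cyc (f i) (f a) (f b) := by
  classical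
  have hinj : ∀ (P : V → Prop) [DecidablePred P], ∀ a ∈ N.filter P, ∀ b ∈ N.filter P, f a = f b → a = b := by
    intro P _ a ha b hb h
    exact hf a (Finset.mem_insert_of_mem (Finset.mem_filter.1 ha).1) b
      (Finset.mem_insert_of_mem (Finset.mem_filter.1 hb).1) h
  obtain ⟨L1, n1, m1, p1⟩ := exists_sorted (N.filter fun a => f i < f a) f (hinj _)
  obtain ⟨L2, n2, m2, p2⟩ := exists_sorted (N.filter fun a => f a < f i) f (hinj _)
  simp only [Finset.mem_filter] at m1 m2
  refine ⟨L1 ++ L2, ?_, ?_, ?_⟩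
  · rw [List.nodup_append]
    refine ⟨n1, n2, ?_⟩
    rintro a ha b hb rfl
    exact lt_asymm ((m1 a).1 ha).2 ((m2 a).1 hb).2
  · intro y
    rw [List.mem_append, m1, m2]
    refine ⟨fun h => h.elim And.left And.left, fun h => ?_⟩
    rcases lt_trichotomy (f i) (f y) with h' | h' | h'
    · exact Or.inl ⟨h, h'⟩
    · exact absurd h (hf i (Finset.mem_insert_self _ _) y (Finset.mem_insert_of_mem h) h' ▸ hi)
    · exact Or.inr ⟨h, h'⟩
  · rw [List.pairwise_append]
    refine ⟨p1.imp_of_mem ?_, p2.imp_of_mem ?_, ?_⟩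
    · intro a b ha hb hab; exact Or.inl ⟨((m1 a).1 ha).2, hab⟩
    · intro a b ha hb hab; exact Or.inr (Or.inl ⟨hab, ((m2 b).1 hb).2⟩)
    · intro a ha b hb; exact Or.inr (Or.inr ⟨((m2 b).1 hb).2, ((m1 a).1 ha).2⟩)

/-- If no element outside `P` separates two elements of `P`, then those of `P` are consecutive. -/
theorem exists_block {α : Type*} (P : α → Prop) (R : α → α → Prop) (w : List α) (hw : w.Pairwise R)
    (hsep : ∀ i ∈ w, ∀ f ∈ w, ∀ i' ∈ w, P i → ¬ P f → P i' → R i f → R f i' → False) :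
    ∃ l m r, w = l ++ m ++ r ∧ (∀ x ∈ l, ¬ P x) ∧ (∀ x ∈ m, P x) ∧ ∀ x ∈ r, ¬ P x := by
  induction w with
  | nil => exact ⟨[], [], [], by simp⟩
  | cons a w ih =>
    rw [List.pairwise_cons] at hw
    obtain ⟨l, m, r, rfl, hl, hm, hr⟩ := ih hw.2 fun i hi f hf i' hi' =>
      hsep i (List.mem_cons_of_mem _ hi) f (List.mem_cons_of_mem _ hf) i' (List.mem_cons_of_mem _ hi')
    by_cases ha : P a
    · cases l with
      | nil => exact ⟨[], a :: m, r, by simp, by simp, by simpa [ha] using hm, hr⟩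
      | cons f l =>
        cases m with
        | nil =>
          refine ⟨[], [a], f :: l ++ r, by simp, by simp, by simp [ha], ?_⟩
          intro x hx
          rcases List.mem_append.1 hx with hx | hx
          · exact hl x hx
          · exact hr x hx
        | cons i m =>
          refine (hsep a (by simp) f (by simp) i (by simp) ha (hl f (by simp)) (hm i (by simp))
            (hw.1 f (by simp)) ?_).elim
          have := hw.2
          simp only [List.cons_append, List.pairwise_cons] at this
          exact this.1 i (by simp)
    · exact ⟨a :: l, m, r, by simp, by simpa [ha] using hl, hm, hr⟩

/-- The sweep line `e₀ :: w` between `A` (below) and `S \ A` (above): it lists the edges between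
them, in the cyclic order seen from `A`. -/
structure WInv (G : SimpleGraph V) (Θ : V → V → ℕ ×ₗ ℝ) (S A : Finset V) (e₀ : V × V)
    (w : List (V × V)) : Prop where
  nodup : (e₀ :: w).Nodup
  mem : ∀ e, e ∈ e₀ :: w ↔ e.1 ∈ A ∧ e.2 ∈ S \ A ∧ G.Adj e.1 e.2
  pos : w.Pairwise (PosTri G Θ A e₀)
  connA : Conn G A
  connB : Conn G (S \ A)

theorem WInv.base (hR : Rotation G Θ) {S : Finset V} {c u : V} (hc : c ∈ S) (hu : u ∈ S)
    (hcu : G.Adj c u) (hS : Conn G (S.erase c)) : ∃ outs : List V, (u :: outs).Nodup ∧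
      (∀ y, y ∈ u :: outs ↔ G.Adj c y ∧ y ∈ S) ∧
      WInv G Θ S {c} (c, u) (outs.map fun y => (c, y)) := by
  classical
  obtain ⟨L, hn, hm, hp⟩ := exists_cyc_sorted ((S.erase u).filter (G.Adj c)) (Θ c) u (by
    intro a ha b hb h
    have : ∀ a ∈ insert u ((S.erase u).filter (G.Adj c)), G.Adj c a := by
      intro a ha; simp at ha; rcases ha with rfl | ha; exacts [hcu, ha.2]
    exact hR.inj c a b (this a ha) (this b hb) h) (by simp)
  have hnd : (u :: L).Nodup := by
    rw [List.nodup_cons, hm]; exact ⟨by simp, hn⟩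
  have hmem : ∀ y, y ∈ u :: L ↔ G.Adj c y ∧ y ∈ S := by
    intro y
    rw [List.mem_cons, hm, Finset.mem_filter, Finset.mem_erase]
    by_cases h : y = u
    · subst h; simp [hcu, hu]
    · simp [h, and_comm]
  refine ⟨L, hnd, hmem, ⟨?_, ?_, ?_, ?_, ?_⟩⟩
  · have := hnd.map (f := fun y => (c, y)) (fun a b h => (Prod.ext_iff.1 h).2)
    simpa using this
  · rintro ⟨x, y⟩
    have := hmem y
    rw [List.mem_cons] at this
    simp only [List.mem_cons, List.mem_map, Prod.mk.injEq, Finset.mem_singleton, Finset.mem_sdiff]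
    constructor
    · rintro (⟨rfl, rfl⟩ | ⟨z, hz, rfl, rfl⟩)
      · exact ⟨rfl, ⟨hu, hcu.ne.symm⟩, hcu⟩
      · have := this.1 (Or.inr hz); exact ⟨rfl, ⟨this.2, this.1.ne.symm⟩, this.1⟩
    · rintro ⟨rfl, ⟨hy, -⟩, hxy⟩
      rcases this.2 ⟨hxy, hy⟩ with h | h
      · exact Or.inl ⟨rfl, h⟩
      · exact Or.inr ⟨y, h, rfl, rfl⟩
  · rw [List.pairwise_map]
    refine hp.imp_of_mem ?_
    intro a b ha hb hab
    have ha' := ((hmem a).1 (List.mem_cons_of_mem _ ha)).1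
    have hb' := ((hmem b).1 (List.mem_cons_of_mem _ hb)).1
    exact ⟨c, .nil, .nil, .nil, ⟨hcu, ha', hb', by simp, by simp, by simp, by simp, by simp, by simp,
      by simp, by simp, by simp⟩, hab⟩
  · intro a ha b hb
    simp at ha hb; subst ha; subst hb
    exact Linked.refl (by simp)
  · rwa [Finset.sdiff_singleton_eq_erase]

/-- Sweep past one more vertex `v`. -/
theorem WInv.step (hR : Rotation G Θ) {S A : Finset V} {e₀ : V × V} {w : List (V × V)}
    (h : WInv G Θ S A e₀ w) {v : V} (hv : v ∈ S \ A) (hve : v ≠ e₀.2) (hx : ∃ x ∈ A, G.Adj x v)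
    (hAS : A ⊆ S) (hconn : Conn G ((S \ A).erase v)) : ∃ ins outs w',
      Run w [.vert v ins outs] w' ∧ WInv G Θ S (insert v A) e₀ w' ∧
      (Ev.vert v ins outs).OK G S := by
  classical
  have hvS := Finset.mem_sdiff.1 hv
  have he₀ := (h.mem e₀).1 (by simp)
  have hdisj : Disjoint A (S \ A) := Finset.disjoint_sdiff
  have hmemw : ∀ e, e ∈ w → e.1 ∈ A ∧ e.2 ∈ S \ A ∧ G.Adj e.1 e.2 := fun e he =>
    (h.mem e).1 (List.mem_cons_of_mem _ he)
  have hnd := List.nodup_cons.1 h.nodup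
  obtain ⟨l, m, r, rfl, hl, hm, hr⟩ := exists_block (fun e : V × V => e.2 = v) _ w h.pos (by
    rintro ⟨i, v'⟩ hi f hf ⟨i', v''⟩ hi' h1 h2 h3 h4 h5
    simp only at h1 h3
    subst h1; subst h3
    exact no_separation hR hdisj h.connB hconn he₀.2.1 (hmemw f hf).2.1 hv (Ne.symm hve) h2 he₀.1
      (hmemw f hf).1 (fun e => hnd.1 (e ▸ hf)) h4 h5)
  obtain ⟨ins, rfl⟩ : ∃ ins : List V, m = ins.map fun x => (x, v) := by
    refine ⟨m.map Prod.fst, ?_⟩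
    rw [List.map_map]
    conv_lhs => rw [← List.map_id m]
    exact List.map_congr_left fun e he => by simp [← hm e he]
  have hins : ∀ x, x ∈ ins ↔ x ∈ A ∧ G.Adj x v := by
    intro x
    constructor
    · intro hxi
      have := hmemw (x, v) (by simp [hxi])
      exact ⟨this.1, this.2.2⟩
    · rintro ⟨h1, h2⟩
      have := (h.mem (x, v)).2 ⟨h1, hv, h2⟩
      rw [List.mem_cons, List.mem_append, List.mem_append] at this
      rcases this with h' | (h' | h') | h'
      · exact absurd (congrArg Prod.snd h') hve
      · exact absurd rfl (hl _ h')
      · simpa using h'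
      · exact absurd rfl (hr _ h')
  obtain ⟨x₀, hx₀A, hx₀v⟩ := hx
  have hx₀ : x₀ ∈ ins := (hins x₀).2 ⟨hx₀A, hx₀v⟩
  obtain ⟨outs, hno, hmo, hpo⟩ := exists_cyc_sorted (((S \ A).erase v).filter (G.Adj v)) (Θ v) x₀ (by
    intro a ha b hb h
    have : ∀ a ∈ insert x₀ (((S \ A).erase v).filter (G.Adj v)), G.Adj v a := by
      intro a ha
      rcases Finset.mem_insert.1 ha with rfl | ha
      · exact hx₀v.symm
      · exact (Finset.mem_filter.1 ha).2
    exact hR.inj v a b (this a ha) (this b hb) h) (by simp [hx₀A])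
  have hmo' : ∀ y, y ∈ outs ↔ y ∈ S ∧ y ∉ A ∧ G.Adj v y := by
    intro y
    rw [hmo, Finset.mem_filter, Finset.mem_erase, Finset.mem_sdiff]
    exact ⟨fun h => ⟨h.1.2.1, h.1.2.2, h.2⟩, fun h => ⟨⟨h.2.2.ne.symm, h.1, h.2.1⟩, h.2.2⟩⟩
  have hnw := hnd.2
  rw [List.nodup_append, List.nodup_append] at hnw
  have hpos := h.pos
  rw [List.pairwise_append, List.pairwise_append] at hpos
  obtain ⟨⟨pl, -, plm⟩, pr, pr'⟩ := hpos
  have hsub : A ⊆ insert v A := Finset.subset_insert _ _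
  have hl1 : ∀ e ∈ l, e.1 ∈ A := fun e he => (hmemw e (by simp [he])).1
  have hr1 : ∀ e ∈ r, e.1 ∈ A := fun e he => (hmemw e (by simp [he])).1
  refine ⟨ins, outs, l ++ (outs.map fun y => (v, y)) ++ r, ⟨l, r, rfl, rfl⟩, ⟨?_, ?_, ?_, ?_, ?_⟩,
    ?_, ?_, ?_, ?_⟩
  · rw [List.nodup_cons]
    constructor
    · intro h'
      rw [List.mem_append, List.mem_append] at h'
      rcases h' with (h' | h') | h'
      · exact hnd.1 (by simp [h'])
      · rw [List.mem_map] at h'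
        obtain ⟨y, -, e⟩ := h'
        exact hvS.2 (by rw [← e] at he₀; exact he₀.1)
      · exact hnd.1 (by simp [h'])
    · rw [List.nodup_append, List.nodup_append]
      refine ⟨⟨hnw.1.1, hno.map fun a b h => (Prod.ext_iff.1 h).2, ?_⟩, hnw.2.1, ?_⟩
      · intro a ha b hb e
        obtain ⟨y, -, rfl⟩ := List.mem_map.1 hb
        exact hvS.2 (by have := hl1 a ha; rwa [e] at this)
      · intro a ha b hb e
        rcases List.mem_append.1 ha with ha | ha
        · exact hnw.2.2 a (by simp [ha]) b hb e
        · obtain ⟨y, -, rfl⟩ := List.mem_map.1 ha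
          exact hvS.2 (by have := hr1 b hb; rwa [← e] at this)
  · rintro ⟨x, y⟩
    simp only
    constructor
    · intro h'
      rw [List.mem_cons, List.mem_append, List.mem_append] at h'
      have key : (x, y) ∈ e₀ :: (l ++ List.map (fun x => (x, v)) ins ++ r) → y ≠ v →
          x ∈ insert v A ∧ y ∈ S \ insert v A ∧ G.Adj x y := by
        intro h1 h2
        have := (h.mem (x, y)).1 h1
        simp only [Finset.mem_sdiff, Finset.mem_insert] at this ⊢
        tauto
      rcases h' with h' | (h' | h') | h'
      · exact key (by simp [h']) (by rw [← h'] at hve; exact Ne.symm hve)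
      · exact key (by simp [h']) (hl _ h')
      · obtain ⟨z, hz, e⟩ := List.mem_map.1 h'
        obtain ⟨rfl, rfl⟩ := Prod.mk.inj e
        have := (hmo' z).1 hz
        simp only [Finset.mem_sdiff, Finset.mem_insert]
        exact ⟨by simp, ⟨this.1, not_or.2 ⟨this.2.2.ne.symm, this.2.1⟩⟩, this.2.2⟩
      · exact key (by simp [h']) (hr _ h')
    · rintro ⟨h1, h2, h3⟩
      simp only [Finset.mem_sdiff, Finset.mem_insert, not_or] at h1 h2
      rw [List.mem_cons, List.mem_append, List.mem_append]
      rcases h1 with rfl | h1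
      · exact Or.inr (Or.inl (Or.inr (List.mem_map.2 ⟨y, (hmo' y).2 ⟨h2.1, h2.2.2, h3⟩, rfl⟩)))
      · have := (h.mem (x, y)).2 ⟨h1, Finset.mem_sdiff.2 ⟨h2.1, h2.2.2⟩, h3⟩
        rw [List.mem_cons, List.mem_append, List.mem_append, List.mem_map] at this
        rcases this with h' | (h' | ⟨z, -, h'⟩) | h'
        · exact Or.inl h'
        · exact Or.inr (Or.inl (Or.inl h'))
        · exact absurd (Prod.mk.inj h').2.symm h2.2.1
        · exact Or.inr (Or.inr h')
  · rw [List.pairwise_append, List.pairwise_append]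
    have hx₀m : (x₀, v) ∈ List.map (fun x => (x, v)) ins := List.mem_map.2 ⟨x₀, hx₀, rfl⟩
    refine ⟨⟨pl.imp fun h => h.mono hsub, ?_, ?_⟩, pr.imp fun h => h.mono hsub, ?_⟩
    · rw [List.pairwise_map]
      refine hpo.imp_of_mem ?_
      intro a b ha hb hab
      obtain ⟨p, hp, hpA⟩ := (h.connA x₀ hx₀A e₀.1 he₀.1).exists_path
      refine ⟨v, .cons hx₀v.symm p, .nil, .nil, ⟨he₀.2.2, ((hmo' a).1 ha).2.2, ((hmo' b).1 hb).2.2, ?_,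
        by simp, by simp, ?_, by simp, by simp, ?_, ?_, by simp⟩, hab⟩
      · exact (SimpleGraph.Walk.cons_isPath_iff _ _).2 ⟨hp, fun h => hvS.2 (hpA v h)⟩
      · intro z hz
        rw [SimpleGraph.Walk.support_cons, List.mem_cons] at hz
        rcases hz with rfl | hz
        · simp
        · exact hsub (hpA z hz)
      · intro z _ hz; simpa using hz
      · intro z _ hz; simpa using hz
    · intro e he f hf
      obtain ⟨y, hy, rfl⟩ := List.mem_map.1 hf
      exact ((plm e he _ hx₀m).rot.rot.extend hvS.2 ((hmo' y).1 hy).2.2).rot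
    · intro e he f hf
      rcases List.mem_append.1 he with he | he
      · exact (pr' e (List.mem_append_left _ he) f hf).mono hsub
      · obtain ⟨y, hy, rfl⟩ := List.mem_map.1 he
        exact ((pr' _ (List.mem_append_right _ hx₀m) f hf).rot.extend hvS.2
          ((hmo' y).1 hy).2.2).rot.rot
  · exact h.connA.insert hx₀A hx₀v
  · have : S \ insert v A = (S \ A).erase v := by
      ext y; simp only [Finset.mem_sdiff, Finset.mem_insert, Finset.mem_erase]; tauto
    rwa [this]
  · exact List.ne_nil_of_mem hx₀
  · left
    obtain ⟨x, y, -, hy, hxv, hyv, hadj⟩ := (h.connB v hv e₀.2 he₀.2.1).boundary {v} rfl (Ne.symm hve)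
    obtain rfl : x = v := hxv
    have hy := Finset.mem_sdiff.1 hy
    exact List.ne_nil_of_mem ((hmo' y).2 ⟨hy.1, hy.2, hadj⟩)
  · rw [List.nodup_append]
    refine ⟨List.Nodup.of_map _ hnw.1.2.1, hno, ?_⟩
    rintro a ha b hb rfl
    exact ((hmo' a).1 hb).2.1 ((hins a).1 ha).1
  · intro y
    rw [List.mem_append, hins, hmo']
    constructor
    · rintro (h | h)
      · exact ⟨h.2.symm, hAS h.1⟩
      · exact ⟨h.2.2, h.1⟩
    · rintro ⟨h1, h2⟩
      by_cases hy : y ∈ A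
      · exact Or.inl ⟨hy, h1.symm⟩
      · exact Or.inr ⟨h2, hy, h1⟩

/-- Sweep past the remaining vertices of `K`. -/
theorem WInv.sweep (hR : Rotation G Θ) {S K : Finset V} {e₀ : V × V}
    (hcut : ∀ v ∈ S, Conn G (S.erase v)) (hKS : K ⊆ S) (hK : Conn G K) (hZ : Conn G (S \ K))
    (hu : e₀.2 ∈ S \ K) (n : ℕ) : ∀ (A : Finset V) (w : List (V × V)), (K \ A).card = n → A ⊆ K →
      WInv G Θ S A e₀ w → ∃ evs wK, Run w evs wK ∧ WInv G Θ S K e₀ wK ∧ (evVerts evs).Nodup ∧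
        (∀ v, v ∈ evVerts evs ↔ v ∈ K \ A) ∧ ∀ e ∈ evs, e.OK G S := by
  induction n with
  | zero =>
    intro A w hn hA h
    have : A = K := hA.antisymm (Finset.sdiff_eq_empty_iff_subset.1 (Finset.card_eq_zero.1 hn))
    subst this
    exact ⟨[], w, rfl, h, by simp [evVerts], by simp [evVerts], by simp⟩
  | succ n ih =>
    intro A w hn hA h
    have hAK : A ≠ K := by rintro rfl; simp at hn
    have he₀ := (h.mem e₀).1 (by simp)
    obtain ⟨v, hv, hx, hc⟩ := exists_next hcut hKS hK hZ hu hA he₀.1 hAK h.connB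
    have hv' := Finset.mem_sdiff.1 hv
    obtain ⟨ins, outs, w', r1, i1, o1⟩ := h.step hR (v := v)
      (Finset.mem_sdiff.2 ⟨hKS hv'.1, hv'.2⟩)
      (by rintro rfl; exact (Finset.mem_sdiff.1 hu).2 hv'.1) hx (hA.trans hKS) hc
    have hKA : K \ insert v A = (K \ A).erase v := by
      ext y; simp only [Finset.mem_sdiff, Finset.mem_insert, Finset.mem_erase]; tauto
    obtain ⟨evs, wK, r2, i2, n2, m2, o2⟩ := ih (insert v A) w'
      (by rw [hKA, Finset.card_erase_of_mem hv, hn]; rfl)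
      (Finset.insert_subset hv'.1 hA) i1
    have hvs : evVerts (Ev.vert v ins outs :: evs) = v :: evVerts evs := by simp [evVerts, Ev.verts]
    refine ⟨.vert v ins outs :: evs, wK, r1.append r2, i2, ?_, ?_, ?_⟩
    · rw [hvs, List.nodup_cons, m2]; exact ⟨by simp, n2⟩
    · intro y
      rw [hvs, List.mem_cons, m2, hKA, Finset.mem_erase]
      by_cases hy : y = v
      · subst hy; simp [hv]
      · simp [hy]
    · intro e he
      rcases List.mem_cons.1 he with rfl | he
      exacts [o1, o2 e he]

end Words

/-! ### Composing sweeps at cut vertices -/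

section Main

variable {V : Type*} [DecidableEq V] {G : SimpleGraph V} {Θ : V → V → ℕ ×ₗ ℝ}

/-- The mirror image of a move. -/
def Ev.mirror : Ev V → Ev V
  | .vert v ins outs => .vert v ins.reverse outs.reverse
  | .cap u t insu inst => .cap t u inst.reverse insu.reverse

theorem Ev.dom_mirror (e : Ev V) : e.mirror.dom = e.dom.reverse := by
  cases e <;> simp [Ev.mirror, Ev.dom]

theorem Ev.cod_mirror (e : Ev V) : e.mirror.cod = e.cod.reverse := by
  cases e <;> simp [Ev.mirror, Ev.cod]

theorem Ev.verts_mirror (e : Ev V) : e.mirror.verts = e.verts.reverse := by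
  cases e <;> simp [Ev.mirror, Ev.verts]

theorem Ev.OK.mirror {S : Finset V} {e : Ev V} (h : e.OK G S) : e.mirror.OK G S := by
  cases e with
  | vert v ins outs =>
    obtain ⟨h1, h2, h3, h4⟩ := h
    refine ⟨by simpa using h1, by simpa using h2, ?_, by simpa using h4⟩
    rw [← List.reverse_append, List.nodup_reverse]
    exact List.nodup_append_comm.1 h3
  | cap u t insu inst =>
    obtain ⟨h1, h2, h3, ⟨h4, h5⟩, h6, h7⟩ := h
    refine ⟨h1.symm, by simpa using h3, by simpa using h2, ⟨?_, by simpa using h7⟩, ?_,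
      by simpa using h5⟩
    · rw [List.nodup_append] at h6 ⊢; simpa using h6
    · rw [List.nodup_append] at h4 ⊢; simpa using h4

theorem Run.mirror {w w' : List (V × V)} {es : List (Ev V)} (h : Run w es w') :
    Run w.reverse (es.map Ev.mirror) w'.reverse := by
  induction es generalizing w with
  | nil => cases h; rfl
  | cons e es ih =>
    obtain ⟨l, r, rfl, h⟩ := h
    refine ⟨r.reverse, l.reverse, by simp [Ev.dom_mirror], ?_⟩
    have := ih h
    simpa [Ev.cod_mirror] using this

theorem mem_evVerts {es : List (Ev V)} {v : V} : v ∈ evVerts es ↔ ∃ e ∈ es, v ∈ e.verts :=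
  List.mem_flatMap

theorem evVerts_cons (e : Ev V) (es : List (Ev V)) : evVerts (e :: es) = e.verts ++ evVerts es := rfl

theorem evVerts_append (es es' : List (Ev V)) : evVerts (es ++ es') = evVerts es ++ evVerts es' :=
  List.flatMap_append

theorem evVerts_mirror (es : List (Ev V)) : (evVerts (es.map Ev.mirror)).Perm (evVerts es) := by
  induction es with
  | nil => exact List.Perm.refl _
  | cons e es ih =>
    rw [List.map_cons, evVerts_cons, evVerts_cons, Ev.verts_mirror]
    exact (List.reverse_perm _).append ih

/-- The rightmost vertex of a move. -/
def Ev.last : Ev V → V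
  | .vert v _ _ => v
  | .cap _ t _ _ => t

/-- Additional strands arriving from the right at the rightmost vertex of a move. -/
def Ev.app (ts : List V) : Ev V → Ev V
  | .vert v ins outs => .vert v (ins ++ ts) outs
  | .cap u t insu inst => .cap u t insu (inst ++ ts)

theorem Ev.dom_app (ts : List V) (e : Ev V) : (e.app ts).dom = e.dom ++ ts.map fun x => (x, e.last) := by
  cases e <;> simp [Ev.app, Ev.dom, Ev.last]

theorem Ev.cod_app (ts : List V) (e : Ev V) : (e.app ts).cod = e.cod := by cases e <;> rfl

theorem Ev.verts_app (ts : List V) (e : Ev V) : (e.app ts).verts = e.verts := by cases e <;> rfl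

theorem Ev.OK.dom_last {S : Finset V} {e : Ev V} (h : e.OK G S) : ∃ d x, e.dom = d ++ [(x, e.last)] := by
  have key : ∀ (L : List V) (v : V), L ≠ [] → ∃ d x, (L.map fun x => (x, v)) = d ++ [(x, v)] := by
    intro L v hL
    refine ⟨L.dropLast.map fun x => (x, v), L.getLast hL, ?_⟩
    conv_lhs => rw [← List.dropLast_append_getLast hL]
    simp
  cases e with
  | vert v ins outs => exact key ins v h.1
  | cap u t insu inst =>
    obtain ⟨d, x, e⟩ := key inst t h.2.2.1
    exact ⟨(insu.map fun x => (x, u)) ++ d, x, by simp [Ev.dom, Ev.last, e]⟩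

/-- Strands parallel to the rightmost strand can be added to a run: they join the move that consumes
the rightmost strand. -/
theorem Run.tail {S : Finset V} {u t : V} {evs : List (Ev V)} (hok : ∀ e ∈ evs, e.OK G S)
    {w : List (V × V)} (h : Run (w ++ [(u, t)]) evs []) : ∃ e₁ E e₂, evs = e₁ ++ E :: e₂ ∧ E.last = t ∧
      ∀ ts, Run (w ++ (u :: ts).map fun x => (x, t)) (e₁ ++ E.app ts :: e₂) [] := by
  induction evs generalizing w with
  | nil => exact absurd h (by simp [Run])
  | cons e es ih =>
    obtain ⟨l, r, hw, h⟩ := h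
    rcases List.eq_nil_or_concat r with rfl | ⟨r', z, rfl⟩
    · obtain ⟨d, x, hd⟩ := (hok e (by simp)).dom_last
      rw [hd, List.append_nil, ← List.append_assoc] at hw
      obtain ⟨hw1, hw2⟩ := List.append_inj' hw rfl
      simp only [List.cons.injEq, Prod.mk.injEq, and_true] at hw2
      refine ⟨[], e, es, rfl, hw2.2.symm, fun ts => ⟨l, [], ?_, by simpa [Ev.cod_app] using h⟩⟩
      rw [Ev.dom_app, hd, hw1, ← hw2.1, ← hw2.2]
      simp
    · simp only [List.concat_eq_append] at hw h
      rw [← List.append_assoc] at hw h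
      obtain ⟨hw1, hw2⟩ := List.append_inj' hw rfl
      rw [← hw2] at h
      obtain ⟨e₁, E, e₂, rfl, hE, hts⟩ := ih (fun e he => hok e (List.mem_cons_of_mem _ he)) h
      refine ⟨e :: e₁, E, e₂, rfl, hE, fun ts => ⟨l, r' ++ (u :: ts).map fun x => (x, t), ?_, ?_⟩⟩
      · rw [hw1]; simp
      · have := hts ts
        simpa using this

theorem Ev.OK.mono {S S' : Finset V} {e : Ev V} (h : e.OK G S) (hS : S ⊆ S')
    (hn : ∀ v ∈ e.verts, ∀ y ∈ S', G.Adj v y → y ∈ S) : e.OK G S' := by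
  have key : ∀ v ∈ e.verts, ∀ y, (G.Adj v y ∧ y ∈ S) ↔ (G.Adj v y ∧ y ∈ S') := fun v hv y =>
    ⟨fun h => ⟨h.1, hS h.2⟩, fun h => ⟨h.1, hn v hv y h.2 h.1⟩⟩
  cases e with
  | vert v ins outs =>
    exact ⟨h.1, h.2.1, h.2.2.1, fun y => (h.2.2.2 y).trans (key v (by simp [Ev.verts]) y)⟩
  | cap u t insu inst =>
    exact ⟨h.1, h.2.1, h.2.2.1, ⟨h.2.2.2.1.1, fun y => (h.2.2.2.1.2 y).trans
      (key u (by simp [Ev.verts]) y)⟩, ⟨h.2.2.2.2.1, fun y => (h.2.2.2.2.2 y).trans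
      (key t (by simp [Ev.verts]) y)⟩⟩

/-- A complete sweep over the subgraph induced on `S`, starting at the vertex `c` whose neighbours
are, from left to right, `outs`. -/
structure Diag (G : SimpleGraph V) (S : Finset V) (c : V) (outs : List V) (evs : List (Ev V)) :
    Prop where
  run : Run (outs.map fun y => (c, y)) evs []
  outs_nodup : outs.Nodup
  mem_outs : ∀ y, y ∈ outs ↔ G.Adj c y ∧ y ∈ S
  nodup : (evVerts evs).Nodup
  mem : ∀ v, v ∈ evVerts evs ↔ v ∈ S.erase c
  ok : ∀ e ∈ evs, e.OK G S

theorem Conn.exists_adj {S : Finset V} (h : Conn G S) {a b : V} (ha : a ∈ S) (hb : b ∈ S) (hab : a ≠ b) :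
    ∃ y ∈ S, G.Adj a y := by
  obtain ⟨x, y, -, hy, hx, -, hadj⟩ := (h a ha b hb).boundary {a} rfl (Ne.symm hab)
  obtain rfl : x = a := hx
  exact ⟨y, hy, hadj⟩

theorem conn_sdiff_comp {S : Finset V} (h : Conn G S) {v a : V} (hv : v ∈ S) :
    Conn G (S \ comp G (S.erase v) a) := by
  have hvC : v ∉ comp G (S.erase v) a := fun h => by simpa using comp_subset _ _ h
  refine Conn.of_joined (a := v) fun b hb => Linked.symm ?_
  by_contra hb'
  obtain ⟨x, y, hx, hy, hxT, hyT, hadj⟩ := (h b (Finset.mem_sdiff.1 hb).1 v hv).boundary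
    {z | Linked G (S \ comp G (S.erase v) a) b z} (Linked.refl hb) hb'
  have hxT : Linked G _ b x := hxT
  have hxC := Finset.mem_sdiff.1 hxT.mem_right
  by_cases hyC : y ∈ comp G (S.erase v) a
  · refine hxC.2 (adj_comp hyC (Finset.mem_erase.2 ⟨?_, hx⟩) hadj.symm)
    rintro rfl; exact hb' hxT
  · exact hyT (hxT.trans (Linked.of_adj hxT.mem_right (Finset.mem_sdiff.2 ⟨hy, hyC⟩) hadj))

theorem conn_insert_comp {S : Finset V} (h : Conn G S) {v a : V} (hv : v ∈ S) (ha : a ∈ S.erase v) :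
    Conn G (insert v (comp G (S.erase v) a)) := by
  have hvC : v ∉ comp G (S.erase v) a := fun h => by simpa using comp_subset _ _ h
  obtain ⟨x, y, -, hy, hx, hyC, hadj⟩ := (h a (Finset.mem_of_mem_erase ha) v hv).boundary
    (comp G (S.erase v) a : Set V) (self_mem_comp ha) hvC
  have : y = v := by
    by_contra hne
    exact hyC (adj_comp hx (Finset.mem_erase.2 ⟨hne, hy⟩) hadj)
  subst this
  exact (conn_comp _ _).insert hx hadj

/-- Split a connected graph at a cut vertex `v`. -/
theorem exists_split {S : Finset V} (h : Conn G S) {v a : V} (hv : v ∈ S) (ha : a ∈ S.erase v)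
    (hcut : ¬ Conn G (S.erase v)) : ∃ S₁ S₂ : Finset V, S₁ ∪ S₂ = S ∧ S₁ ∩ S₂ = {v} ∧ Conn G S₁ ∧
      Conn G S₂ ∧ a ∈ S₁ ∧ S₁.card < S.card ∧ S₂.card < S.card ∧ (∃ x ∈ S₂, G.Adj v x) ∧
      (∀ x ∈ S₁, x ≠ v → ∀ y ∈ S, G.Adj x y → y ∈ S₁) ∧
      (∀ x ∈ S₂, x ≠ v → ∀ y ∈ S, G.Adj x y → y ∈ S₂) := by
  have hvC : v ∉ comp G (S.erase v) a := fun h => by simpa using comp_subset _ _ h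
  have hC : comp G (S.erase v) a ⊆ S := (comp_subset _ _).trans (Finset.erase_subset _ _)
  have haC : a ∈ comp G (S.erase v) a := self_mem_comp ha
  obtain ⟨d, hd, hdC⟩ : ∃ d ∈ S.erase v, d ∉ comp G (S.erase v) a := by
    by_contra! hall
    exact hcut ((Finset.Subset.antisymm hall (comp_subset _ _)) ▸ conn_comp _ _)
  have hd' := Finset.mem_erase.1 hd
  have c2 := conn_sdiff_comp h hv (a := a)
  refine ⟨insert v (comp G (S.erase v) a), S \ comp G (S.erase v) a, ?_, ?_, conn_insert_comp h hv ha,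
    c2, by simp [haC], ?_, ?_, ?_, ?_, ?_⟩
  · ext y; simp only [Finset.mem_union, Finset.mem_insert, Finset.mem_sdiff]
    constructor
    · rintro ((rfl | h) | h)
      exacts [hv, hC h, h.1]
    · intro h; tauto
  · ext y; simp only [Finset.mem_inter, Finset.mem_insert, Finset.mem_sdiff, Finset.mem_singleton]
    constructor
    · tauto
    · rintro rfl; tauto
  · apply Finset.card_lt_card
    rw [Finset.ssubset_iff_of_subset (Finset.insert_subset hv hC)]
    exact ⟨d, hd'.2, by simp [hd'.1, hdC]⟩
  · apply Finset.card_lt_card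
    rw [Finset.ssubset_iff_of_subset Finset.sdiff_subset]
    exact ⟨a, hC haC, by simp [haC]⟩
  · exact c2.exists_adj (Finset.mem_sdiff.2 ⟨hv, hvC⟩) (Finset.mem_sdiff.2 ⟨hd'.2, hdC⟩) (Ne.symm hd'.1)
  · intro x hx hxv y hy hadj
    have hx := (Finset.mem_insert.1 hx).resolve_left hxv
    by_cases hyv : y = v
    · simp [hyv]
    · exact Finset.mem_insert_of_mem (adj_comp hx (by simp [hyv, hy]) hadj)
  · intro x hx hxv y hy hadj
    have hx := Finset.mem_sdiff.1 hx
    exact Finset.mem_sdiff.2 ⟨hy, fun hyC => hx.2 (adj_comp hyC (by simp [hxv, hx.1]) hadj.symm)⟩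

theorem Diag.notMem {S : Finset V} {c : V} {outs : List V} {evs : List (Ev V)} (h : Diag G S c outs evs)
    {e : Ev V} (he : e ∈ evs) {v : V} (hv : v ∈ e.verts) : v ∈ S ∧ v ≠ c := by
  have := (h.mem v).1 (mem_evVerts.2 ⟨e, he, hv⟩)
  rw [Finset.mem_erase] at this
  exact this.symm

/-- Two diagrams with a common root. -/
theorem Diag.join {S S₁ S₂ : Finset V} {c : V} {L₁ L₂ : List V} {E₁ E₂ : List (Ev V)}
    (h₁ : Diag G S₁ c L₁ E₁) (h₂ : Diag G S₂ c L₂ E₂) (hu : S₁ ∪ S₂ = S) (hi : S₁ ∩ S₂ = {c})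
    (n₁ : ∀ x ∈ S₁, x ≠ c → ∀ y ∈ S, G.Adj x y → y ∈ S₁)
    (n₂ : ∀ x ∈ S₂, x ≠ c → ∀ y ∈ S, G.Adj x y → y ∈ S₂) :
    Diag G S c (L₁ ++ L₂) (E₁ ++ E₂) := by
  have hi' : ∀ y, y ∈ S₁ → y ∈ S₂ → y = c := fun y h h' => by
    have : y ∈ S₁ ∩ S₂ := Finset.mem_inter.2 ⟨h, h'⟩
    rwa [hi, Finset.mem_singleton] at this
  have s₁ : S₁ ⊆ S := hu ▸ Finset.subset_union_left
  have s₂ : S₂ ⊆ S := hu ▸ Finset.subset_union_right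
  refine ⟨?_, ?_, ?_, ?_, ?_, ?_⟩
  · rw [List.map_append]
    have := h₁.run.context [] (L₂.map fun y => (c, y))
    simp only [List.nil_append] at this
    exact this.append h₂.run
  · rw [List.nodup_append]
    refine ⟨h₁.outs_nodup, h₂.outs_nodup, ?_⟩
    rintro a ha b hb rfl
    have h1 := (h₁.mem_outs a).1 ha
    exact h1.1.ne (hi' a h1.2 ((h₂.mem_outs a).1 hb).2).symm
  · intro y
    rw [List.mem_append, h₁.mem_outs, h₂.mem_outs, ← hu, Finset.mem_union]; tauto
  · rw [evVerts_append, List.nodup_append]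
    refine ⟨h₁.nodup, h₂.nodup, ?_⟩
    rintro a ha b hb rfl
    have h1 := Finset.mem_erase.1 ((h₁.mem a).1 ha)
    exact h1.1 (hi' a h1.2 (Finset.mem_erase.1 ((h₂.mem a).1 hb)).2)
  · intro v
    rw [evVerts_append, List.mem_append, h₁.mem, h₂.mem, ← hu]
    simp only [Finset.mem_erase, Finset.mem_union]; tauto
  · intro e he
    rcases List.mem_append.1 he with he | he
    · exact (h₁.ok e he).mono s₁ fun v hv => n₁ v (h₁.notMem he hv).1 (h₁.notMem he hv).2
    · exact (h₂.ok e he).mono s₂ fun v hv => n₂ v (h₂.notMem he hv).1 (h₂.notMem he hv).2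

/-- Insert a diagram rooted at `v` into a diagram passing `v`. -/
theorem Diag.graft {S S₁ S₂ : Finset V} {c v : V} {L₁ L₂ : List V} {E₁ E₂ : List (Ev V)}
    (h₁ : Diag G S₁ c L₁ E₁) (h₂ : Diag G S₂ v L₂ E₂) (hu : S₁ ∪ S₂ = S) (hi : S₁ ∩ S₂ = {v})
    (hc : c ∈ S₁) (hcv : c ≠ v) (hL₂ : L₂ ≠ [])
    (n₁ : ∀ x ∈ S₁, x ≠ v → ∀ y ∈ S, G.Adj x y → y ∈ S₁)
    (n₂ : ∀ x ∈ S₂, x ≠ v → ∀ y ∈ S, G.Adj x y → y ∈ S₂) :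
    ∃ E, Diag G S c L₁ E := by
  have hv : v ∈ S₁ ∩ S₂ := by rw [hi]; simp
  have hv := Finset.mem_inter.1 hv
  have hi' : ∀ y, y ∈ S₁ → y ∈ S₂ → y = v := fun y h h' => by
    have : y ∈ S₁ ∩ S₂ := Finset.mem_inter.2 ⟨h, h'⟩
    rwa [hi, Finset.mem_singleton] at this
  have s₁ : S₁ ⊆ S := hu ▸ Finset.subset_union_left
  have s₂ : S₂ ⊆ S := hu ▸ Finset.subset_union_right
  obtain ⟨E, hE, hvE⟩ := mem_evVerts.1 ((h₁.mem v).2 (Finset.mem_erase.2 ⟨Ne.symm hcv, hv.1⟩))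
  obtain ⟨e₁, e₂, rfl⟩ := List.append_of_mem hE
  -- it suffices to provide moves replacing `E`
  suffices ∃ fs, Run E.dom fs E.cod ∧ (evVerts fs).Perm (E.verts ++ evVerts E₂) ∧
      ∀ f ∈ fs, f.OK G S by
    obtain ⟨fs, hrun, hperm, hok⟩ := this
    have hp : (evVerts (e₁ ++ fs ++ e₂)).Perm (evVerts (e₁ ++ E :: e₂) ++ evVerts E₂) := by
      rw [evVerts_append, evVerts_append, evVerts_append, evVerts_cons]
      refine ((hperm.append_left _).append_right _).trans ?_
      simp only [List.append_assoc]
      refine List.Perm.append_left _ (List.Perm.append_left _ ?_)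
      exact List.perm_append_comm
    have hnd2 := h₁.nodup
    rw [evVerts_append, evVerts_cons, List.nodup_append, List.nodup_append] at hnd2
    refine ⟨e₁ ++ fs ++ e₂, ⟨h₁.run.replace hrun, h₁.outs_nodup, ?_, ?_, ?_, ?_⟩⟩
    · intro y
      rw [h₁.mem_outs]
      exact ⟨fun h => ⟨h.1, s₁ h.2⟩, fun h => ⟨h.1, n₁ c hc hcv y h.2 h.1⟩⟩
    · rw [hp.nodup_iff, List.nodup_append]
      refine ⟨h₁.nodup, h₂.nodup, ?_⟩
      rintro a ha b hb rfl
      have h2 := Finset.mem_erase.1 ((h₂.mem a).1 hb)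
      exact h2.1 (hi' a (Finset.mem_erase.1 ((h₁.mem a).1 ha)).2 h2.2)
    · intro y
      rw [hp.mem_iff, List.mem_append, h₁.mem, h₂.mem, ← hu]
      simp only [Finset.mem_erase, Finset.mem_union]
      constructor
      · rintro (h | h)
        · exact ⟨h.1, Or.inl h.2⟩
        · exact ⟨by rintro rfl; exact hcv (hi' y hc h.2), Or.inr h.2⟩
      · rintro ⟨h, h' | h'⟩
        · exact Or.inl ⟨h, h'⟩
        · by_cases hy : y = v
          · subst hy; exact Or.inl ⟨h, hv.1⟩
          · exact Or.inr ⟨hy, h'⟩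
    · intro e he
      have key : e ∈ e₁ ++ e₂ → e.OK G S := by
        intro he
        have he' : e ∈ e₁ ++ E :: e₂ := by
          rcases List.mem_append.1 he with h | h <;> simp [h]
        refine (h₁.ok e he').mono s₁ fun x hx => n₁ x (h₁.notMem he' hx).1 ?_
        rintro rfl
        rcases List.mem_append.1 he with h | h
        · exact hnd2.2.2 x (mem_evVerts.2 ⟨e, h, hx⟩) x (by simp [hvE]) rfl
        · exact hnd2.2.1.2.2 x hvE x (mem_evVerts.2 ⟨e, h, hx⟩) rfl
      rw [List.mem_append, List.mem_append] at he
      rcases he with (he | he) | he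
      exacts [key (by simp [he]), hok e he, key (by simp [he])]
  have ok₂ : ∀ e ∈ E₂, e.OK G S := fun e he =>
    (h₂.ok e he).mono s₂ fun x hx => n₂ x (h₂.notMem he hx).1 (h₂.notMem he hx).2
  -- the ports of `v` in `S` are those in `S₁` and those in `S₂`
  have ports : ∀ L : List V, L.Nodup → (∀ y, y ∈ L ↔ G.Adj v y ∧ y ∈ S₁) → (L ++ L₂).Nodup ∧
      ∀ y, y ∈ L ++ L₂ ↔ G.Adj v y ∧ y ∈ S := by
    intro L hL hmem
    constructor
    · rw [List.nodup_append]
      refine ⟨hL, h₂.outs_nodup, ?_⟩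
      rintro a ha b hb rfl
      have h1 := (hmem a).1 ha
      exact h1.1.ne (hi' a h1.2 ((h₂.mem_outs a).1 hb).2).symm
    · intro y
      rw [List.mem_append, hmem, h₂.mem_outs, ← hu, Finset.mem_union]; tauto
  have hEok := h₁.ok E hE
  cases E with
  | vert w ins outs =>
    obtain rfl : v = w := by simpa [Ev.verts] using hvE
    obtain ⟨h1, h2, h3, h4⟩ := hEok
    have hp := ports _ h3 h4
    refine ⟨.vert v ins (outs ++ L₂) :: E₂, ⟨[], [], by simp [Ev.dom], ?_⟩, ?_, ?_⟩
    · have := h₂.run.context (outs.map fun y => (v, y)) []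
      simpa [Ev.cod] using this
    · exact List.Perm.refl _
    · intro f hf
      rcases List.mem_cons.1 hf with rfl | hf
      · exact ⟨h1, Or.inl (by simp [hL₂]), by rw [← List.append_assoc]; exact hp.1,
          by rw [← List.append_assoc]; exact hp.2⟩
      · exact ok₂ f hf
  | cap u t insu inst =>
    obtain ⟨h1, h2, h3, ⟨h4, h5⟩, h6, h7⟩ := hEok
    have hut := h1.ne
    have huS : u ∈ S₁ := (h₁.notMem hE (by simp [Ev.verts])).1
    have htS : t ∈ S₁ := (h₁.notMem hE (by simp [Ev.verts])).1
    have widen : ∀ x ∈ S₁, x ≠ v → ∀ L : List V, (∀ y, y ∈ L ↔ G.Adj x y ∧ y ∈ S₁) →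
        ∀ y, y ∈ L ↔ G.Adj x y ∧ y ∈ S := fun x hx hxv L hL y =>
      (hL y).trans ⟨fun h => ⟨h.1, s₁ h.2⟩, fun h => ⟨h.1, n₁ x hx hxv y h.2 h.1⟩⟩
    have hvE : v = u ∨ v = t := by simpa [Ev.verts] using hvE
    rcases hvE with rfl | rfl
    · have hp := ports _ h4 h5
      refine ⟨.vert t inst [v] :: .vert v (insu ++ [t]) L₂ :: E₂,
        ⟨insu.map fun x => (x, v), [], by simp [Ev.dom], [], [], by simp [Ev.dom, Ev.cod], ?_⟩, ?_, ?_⟩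
      · simpa [Ev.cod] using h₂.run
      · simp only [evVerts_cons, Ev.verts, List.cons_append, List.nil_append]
        exact List.Perm.swap _ _ _
      · intro f hf
        rcases List.mem_cons.1 hf with rfl | hf
        · exact ⟨h3, Or.inl (by simp), h6, widen t htS hut.symm _ h7⟩
        · rcases List.mem_cons.1 hf with rfl | hf
          · exact ⟨by simp, Or.inl hL₂, hp.1, hp.2⟩
          · exact ok₂ f hf
    · have hp := ports (u :: inst) ((List.perm_append_singleton u inst).nodup_iff.1 h6)
        fun y => ((List.perm_append_singleton u inst).mem_iff).symm.trans (h7 y)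
      refine ⟨.vert u insu [v] :: .vert v (u :: inst) L₂ :: E₂,
        ⟨[], inst.map fun x => (x, v), by simp [Ev.dom], [], [], by simp [Ev.dom, Ev.cod], ?_⟩, ?_, ?_⟩
      · simpa [Ev.cod] using h₂.run
      · exact List.Perm.refl _
      · intro f hf
        rcases List.mem_cons.1 hf with rfl | hf
        · exact ⟨h2, Or.inl (by simp), h4, widen u huS hut _ h5⟩
        · rcases List.mem_cons.1 hf with rfl | hf
          · exact ⟨by simp, Or.inl hL₂, hp.1, hp.2⟩
          · exact ok₂ f hf

end Main

/-! ### Existence of sweeps -/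

section TwoConnected

variable {V : Type*} [DecidableEq V] {G : SimpleGraph V} {Θ : V → V → ℕ ×ₗ ℝ}

theorem exists_initial {α : Type*} (P : α → Prop) (R : α → α → Prop) (w : List α) (hw : w.Pairwise R)
    (hsep : ∀ a ∈ w, ∀ b ∈ w, ¬ P a → P b → R a b → False) :
    ∃ l r, w = l ++ r ∧ (∀ x ∈ l, P x) ∧ ∀ x ∈ r, ¬ P x := by
  induction w with
  | nil => exact ⟨[], [], by simp⟩
  | cons a w ih =>
    rw [List.pairwise_cons] at hw
    by_cases ha : P a
    · obtain ⟨l, r, rfl, hl, hr⟩ := ih hw.2 fun i hi f hf =>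
        hsep i (List.mem_cons_of_mem _ hi) f (List.mem_cons_of_mem _ hf)
      exact ⟨a :: l, r, by simp, by simpa [ha] using hl, hr⟩
    · refine ⟨[], a :: w, by simp, by simp, ?_⟩
      intro x hx hPx
      rcases List.mem_cons.1 hx with rfl | hx'
      · exact ha hPx
      · exact hsep a (by simp) x hx ha hPx (hw.1 x hx')

theorem exists_heads (w : List (V × V)) (v : V) (h : ∀ e ∈ w, e.2 = v) :
    ∃ ins : List V, w = ins.map fun x => (x, v) := by
  refine ⟨w.map Prod.fst, ?_⟩
  rw [List.map_map]
  conv_lhs => rw [← List.map_id w]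
  exact List.map_congr_left fun e he => by simp [← h e he]

/-- Splitting off the component `K` of `c` in `S \ {u, t}` and sweeping it: the remaining sweep
line consists of strands to `u` followed by strands to `t`. -/
theorem exists_sweep (hR : Rotation G Θ) {S : Finset V} {c u : V} (hcard : 3 ≤ S.card)
    (hcut : ∀ v ∈ S, Conn G (S.erase v)) (hc : c ∈ S) (hu : u ∈ S) (hcu : G.Adj c u) :
    ∃ (t : V) (K : Finset V) (rest us ts : List V) (evs : List (Ev V)),
      G.Adj u t ∧ t ∈ S ∧ K ⊆ S ∧ c ∈ K ∧ u ∉ K ∧ t ∉ K ∧ Conn G (S \ K) ∧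
      (∀ x ∈ K, ∀ y ∈ S, G.Adj x y → y ∈ K ∨ y = u ∨ y = t) ∧
      (u :: rest).Nodup ∧ (∀ y, y ∈ u :: rest ↔ G.Adj c y ∧ y ∈ S) ∧
      Run ((u :: rest).map fun y => (c, y)) evs
        (((c :: us).map fun x => (x, u)) ++ ts.map fun x => (x, t)) ∧
      ((c :: us).Nodup ∧ ∀ y, y ∈ c :: us ↔ G.Adj u y ∧ y ∈ K) ∧
      (ts.Nodup ∧ (∀ y, y ∈ ts ↔ G.Adj t y ∧ y ∈ K) ∧ ts ≠ []) ∧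
      (evVerts evs).Nodup ∧ (∀ v, v ∈ evVerts evs ↔ v ∈ K.erase c) ∧ (∀ e ∈ evs, e.OK G S) := by
  classical
  have huc : u ∈ S.erase c := by simp [hcu.ne.symm, hu]
  obtain ⟨d, hd⟩ : ((S.erase c).erase u).Nonempty := by
    rw [← Finset.card_pos, Finset.card_erase_of_mem huc, Finset.card_erase_of_mem hc]; omega
  have hd' := Finset.mem_erase.1 hd
  obtain ⟨z, hz, huz⟩ := (hcut c hc).exists_adj huc hd'.2 (Ne.symm hd'.1)
  -- `t` follows `c` in the rotation at `u`
  obtain ⟨L, -, hLm, hLp⟩ := exists_cyc_sorted ((S.erase c).filter (G.Adj u)) (Θ u) c (by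
    intro a ha b hb h
    have : ∀ a ∈ insert c ((S.erase c).filter (G.Adj u)), G.Adj u a := by
      intro a ha
      rcases Finset.mem_insert.1 ha with rfl | ha
      · exact hcu.symm
      · exact (Finset.mem_filter.1 ha).2
    exact hR.inj u a b (this a ha) (this b hb) h) (by simp)
  simp only [Finset.mem_filter, Finset.mem_erase] at hLm
  obtain ⟨t, L, rfl⟩ : ∃ t L', L = t :: L' := by
    cases L with
    | nil => exact absurd ((hLm z).2 ⟨Finset.mem_erase.1 hz, huz⟩) (by simp)
    | cons t L => exact ⟨t, L, rfl⟩
  obtain ⟨⟨htc, htS⟩, hut⟩ := (hLm t).1 (by simp)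
  have hfirst : ∀ y ∈ S, y ≠ c → G.Adj u y → y ≠ t → Cyc (Θ u c) (Θ u t) (Θ u y) := by
    intro y hy hyc huy hyt
    have := (hLm y).2 ⟨⟨hyc, hy⟩, huy⟩
    exact (List.pairwise_cons.1 hLp).1 y ((List.mem_cons.1 this).resolve_left hyt)
  obtain ⟨K, hKdef⟩ : ∃ K, K = comp G ((S.erase u).erase t) c := ⟨_, rfl⟩
  have hcS' : c ∈ (S.erase u).erase t := by simp [Ne.symm htc, hcu.ne, hc]
  have hcK : c ∈ K := hKdef ▸ self_mem_comp hcS'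
  have hKsub : ∀ x ∈ K, x ≠ t ∧ x ≠ u ∧ x ∈ S := by
    intro x hx
    have := comp_subset _ _ (hKdef ▸ hx)
    simpa only [Finset.mem_erase] using this
  have hKS : K ⊆ S := fun x hx => (hKsub x hx).2.2
  have huK : u ∉ K := fun h => (hKsub u h).2.1 rfl
  have htK : t ∉ K := fun h => (hKsub t h).1 rfl
  have hnb : ∀ x ∈ K, ∀ y ∈ S, G.Adj x y → y ∈ K ∨ y = u ∨ y = t := by
    intro x hx y hy hxy
    by_contra! hne
    exact hne.1 (hKdef ▸ adj_comp (hKdef ▸ hx) (by simp [hne.2.1, hne.2.2, hy]) hxy)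
  have htZ : t ∈ S \ K := Finset.mem_sdiff.2 ⟨htS, htK⟩
  have huZ : u ∈ S \ K := Finset.mem_sdiff.2 ⟨hu, huK⟩
  have hZ : Conn G (S \ K) := by
    refine Conn.of_joined (a := t) fun b hb => Linked.symm ?_
    by_cases hbu : b = u
    · subst hbu; exact Linked.of_adj huZ htZ hut
    by_contra hbt
    have hbS := Finset.mem_sdiff.1 hb
    obtain ⟨x, y, hx, hy, hxT, hyT, hadj⟩ := (hcut u hu b (by simp [hbu, hbS.1]) t
      (by simp [hut.ne.symm, htS])).boundary {z | Linked G (S \ K) b z} (Linked.refl hb) hbt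
    have hxT : Linked G (S \ K) b x := hxT
    have hxZ := Finset.mem_sdiff.1 hxT.mem_right
    have hx := Finset.mem_erase.1 hx
    have hy := Finset.mem_erase.1 hy
    by_cases hyK : y ∈ K
    · rcases hnb y hyK x hx.2 hadj.symm with h | h | h
      · exact hxZ.2 h
      · exact hx.1 h
      · subst h; exact hbt hxT
    · exact hyT (hxT.trans (Linked.of_adj hxT.mem_right (Finset.mem_sdiff.2 ⟨hy.2, hyK⟩) hadj))
  obtain ⟨rest, hrn, hrm, hinv⟩ := WInv.base hR hc hu hcu (hcut c hc)
  obtain ⟨evs, wK, hrun, hw, hn, hm, hok⟩ := WInv.sweep hR (e₀ := (c, u)) hcut hKS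
    (hKdef ▸ conn_comp _ _) hZ huZ _ {c} _ rfl (by simpa using hcK) hinv
  have hwn := List.nodup_cons.1 hw.nodup
  have hwm : ∀ e ∈ wK, e.1 ∈ K ∧ e.2 ∈ S \ K ∧ G.Adj e.1 e.2 := fun e he =>
    (hw.mem e).1 (List.mem_cons_of_mem _ he)
  have hhead : ∀ e ∈ wK, e.2 = u ∨ e.2 = t := by
    intro e he
    have := hwm e he
    have h2 := Finset.mem_sdiff.1 this.2.1
    exact (hnb e.1 this.1 e.2 h2.1 this.2.2).resolve_left h2.2
  obtain ⟨wu, wt, rfl, hwu, hwt⟩ := exists_initial (fun e : V × V => e.2 = u) _ wK hw.pos (by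
    rintro ⟨y, t'⟩ ha ⟨x, u'⟩ hb h1 h2 h3
    obtain rfl : u' = u := h2
    obtain rfl : t' = t := (hhead _ ha).resolve_left h1
    have ha' := hwm _ ha
    have hb' := hwm _ hb
    have hxc : x ≠ c := by rintro rfl; exact hwn.1 hb
    have hxt : x ≠ t' := fun e => htK (e ▸ hb'.1)
    refine no_both hR (Finset.disjoint_sdiff (s := K) (t := S)) h3 ⟨u', .nil, .cons hut .nil, .nil,
      ⟨hcu.symm, ha'.2.2.symm, hb'.2.2.symm, by simp, by simp [hut.ne], by simp, ?_, ?_, ?_, ?_, ?_, ?_⟩,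
      hfirst x (hKS hb'.1) hxc hb'.2.2.symm hxt⟩
    · intro z hz; obtain rfl : z = u' := by simpa using hz
      exact huZ
    · intro z hz
      have : z = u' ∨ z = t' := by simpa using hz
      rcases this with rfl | rfl
      exacts [huZ, htZ]
    · intro z hz; obtain rfl : z = u' := by simpa using hz
      exact huZ
    · intro z hz _; simpa using hz
    · intro z hz _; simpa using hz
    · intro z _ hz; simpa using hz)
  obtain ⟨us, rfl⟩ := exists_heads wu u hwu
  obtain ⟨ts, rfl⟩ := exists_heads wt t fun e he =>
    (hhead e (List.mem_append_right _ he)).resolve_left (hwt e he)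
  have hus : ∀ y, y ∈ c :: us ↔ G.Adj u y ∧ y ∈ K := by
    intro y
    have := hw.mem (y, u)
    have h1 : (y, u) ∈ List.map (fun x => (x, t)) ts ↔ False := by simp [hut.ne.symm]
    rw [List.mem_cons, List.mem_append, h1, or_false, List.mem_map] at this
    simp only [Prod.mk.injEq, and_true, exists_eq_right] at this
    rw [List.mem_cons, this]
    exact ⟨fun h => ⟨h.2.2.symm, h.1⟩, fun h => ⟨h.2, huZ, h.1.symm⟩⟩
  have hts : ∀ y, y ∈ ts ↔ G.Adj t y ∧ y ∈ K := by
    intro y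
    have := hw.mem (y, t)
    have h1 : (y, t) ∈ List.map (fun x => (x, u)) us ↔ False := by simp [hut.ne]
    have h2 : (y, t) = (c, u) ↔ False := by simp [hut.ne.symm]
    rw [List.mem_cons, List.mem_append, h1, h2, false_or, false_or, List.mem_map] at this
    simp only [Prod.mk.injEq, and_true, exists_eq_right] at this
    rw [this]
    exact ⟨fun h => ⟨h.2.2.symm, h.1⟩, fun h => ⟨h.2, htZ, h.1.symm⟩⟩
  have hwn2 := List.nodup_append.1 hwn.2
  refine ⟨t, K, rest, us, ts, evs, hut, htS, hKS, hcK, huK, htK, hZ, hnb, hrn, hrm, ?_, ⟨?_, hus⟩,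
    ⟨List.Nodup.of_map _ hwn2.2.1, hts, ?_⟩, hn, ?_, hok⟩
  · have := hrun.context [(c, u)] []
    simpa using this
  · rw [List.nodup_cons]
    refine ⟨fun h => hwn.1 (by simp [h]), List.Nodup.of_map _ hwn2.1⟩
  · obtain ⟨x, y, hx, hy, hxT, hyT, hadj⟩ := (hcut u hu t (by simp [hut.ne.symm, htS]) c
      (by simp [hcu.ne, hc])).boundary {z | z ∉ K} htK (by simpa using hcK)
    have hyK : y ∈ K := by simpa using hyT
    have hx := Finset.mem_erase.1 hx
    rcases hnb y hyK x hx.2 hadj.symm with h | h | h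
    · exact absurd h hxT
    · exact absurd h hx.1
    · subst h; exact List.ne_nil_of_mem ((hts y).2 ⟨hadj, hyK⟩)
  · intro v; rw [hm, Finset.sdiff_singleton_eq_erase]

/-- Every connected plane graph has a sweep starting at a given vertex `c`, with a given leftmost
edge `(c, x)`. -/
theorem exists_diag (hR : Rotation G Θ) (n : ℕ) : ∀ (S : Finset V) (c x : V), S.card = n → Conn G S →
    c ∈ S → x ∈ S → G.Adj c x → ∃ rest evs, Diag G S c (x :: rest) evs := by
  classical
  induction n using Nat.strong_induction_on with
  | _ n ih =>
  intro S c x hn hS hc hx hcx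
  subst hn
  by_cases hcut : ∃ v ∈ S, ¬ Conn G (S.erase v)
  · obtain ⟨v, hv, hcut⟩ := hcut
    by_cases hvc : v = c
    · subst hvc
      obtain ⟨S₁, S₂, hun, hi, C₁, C₂, hx₁, l₁, l₂, ⟨x₂, hx₂, hadj₂⟩, n₁, n₂⟩ := exists_split hS hv
        (a := x) (by simp [hx, hcx.ne.symm]) hcut
      have hv' : v ∈ S₁ ∩ S₂ := by rw [hi]; simp
      rw [Finset.mem_inter] at hv'
      obtain ⟨r₁, E₁, D₁⟩ := ih _ l₁ S₁ v x rfl C₁ hv'.1 hx₁ hcx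
      obtain ⟨r₂, E₂, D₂⟩ := ih _ l₂ S₂ v x₂ rfl C₂ hv'.2 hx₂ hadj₂
      exact ⟨_, _, D₁.join D₂ hun hi n₁ n₂⟩
    · obtain ⟨S₁, S₂, hun, hi, C₁, C₂, hc₁, l₁, l₂, ⟨x₂, hx₂, hadj₂⟩, n₁, n₂⟩ := exists_split hS hv
        (a := c) (by simp [hc, Ne.symm hvc]) hcut
      have hv' : v ∈ S₁ ∩ S₂ := by rw [hi]; simp
      rw [Finset.mem_inter] at hv'
      obtain ⟨r₁, E₁, D₁⟩ := ih _ l₁ S₁ c x rfl C₁ hc₁ (n₁ c hc₁ (Ne.symm hvc) x hx hcx) hcx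
      obtain ⟨r₂, E₂, D₂⟩ := ih _ l₂ S₂ v x₂ rfl C₂ hv'.2 hx₂ hadj₂
      obtain ⟨E, D⟩ := D₁.graft D₂ hun hi hc₁ (Ne.symm hvc) (by simp) n₁ n₂
      exact ⟨_, _, D⟩
  · push Not at hcut
    by_cases hcard : 3 ≤ S.card
    swap
    · have hS2 : S = {c, x} := by
        symm
        apply Finset.eq_of_subset_of_card_le
        · intro y hy; simp at hy; rcases hy with rfl | rfl <;> assumption
        · rw [Finset.card_pair hcx.ne]; omega
      subst hS2
      refine ⟨[], [.vert x [c] []], ⟨⟨[], [], by simp [Ev.dom], by simp [Run, Ev.cod]⟩, by simp, ?_,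
        by simp [evVerts, Ev.verts], ?_, ?_⟩⟩
      · intro y; simp only [List.mem_singleton, Finset.mem_insert, Finset.mem_singleton]
        constructor
        · rintro rfl; exact ⟨hcx, Or.inr rfl⟩
        · rintro ⟨h, rfl | rfl⟩
          · exact absurd h (G.loopless.irrefl _)
          · rfl
      · intro y; simp only [evVerts, Ev.verts, List.flatMap_cons, List.flatMap_nil, List.append_nil,
          List.mem_singleton, Finset.mem_erase, Finset.mem_insert, Finset.mem_singleton]
        constructor
        · rintro rfl; exact ⟨hcx.ne.symm, Or.inr rfl⟩
        · tauto
      · intro e he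
        obtain rfl := List.mem_singleton.1 he
        refine ⟨by simp, Or.inr rfl, by simp, ?_⟩
        intro y
        simp only [List.append_nil, List.mem_singleton, Finset.mem_insert, Finset.mem_singleton]
        constructor
        · rintro rfl; exact ⟨hcx.symm, Or.inl rfl⟩
        · rintro ⟨h, rfl | rfl⟩
          · rfl
          · exact absurd h (G.loopless.irrefl _)
    · obtain ⟨t, K, rest, us, ts, evs, hut, htS, hKS, hcK, huK, htK, hZ, hnb, hrn, hrm, hrun,
        ⟨hun, hum⟩, ⟨htn, htm, hts⟩, hen, hem, hok⟩ := exists_sweep hR hcard hcut hc hx hcx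
      have hcu : c ≠ x := hcx.ne
      have hct : c ≠ t := fun e => htK (e ▸ hcK)
      by_cases hD : ∃ d ∈ S, d ∉ K ∧ d ≠ x ∧ d ≠ t
      · -- the rest of the graph is swept recursively, with `x` as its root
        have hxZ : x ∈ S \ K := Finset.mem_sdiff.2 ⟨hx, huK⟩
        have htZ : t ∈ S \ K := Finset.mem_sdiff.2 ⟨htS, htK⟩
        obtain ⟨d, hdS, hdK, hdx, hdt⟩ := hD
        obtain ⟨r₂, E₂, D₂⟩ := ih (S \ K).card (Finset.card_lt_card (by
          rw [Finset.ssubset_iff_of_subset Finset.sdiff_subset]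
          exact ⟨c, hc, by simp [hcK]⟩)) (S \ K) x t rfl hZ hxZ htZ hut
        have hrun2 := D₂.run.mirror
        have ok2 : ∀ e ∈ E₂.map Ev.mirror, e.OK G (S \ K) := by
          intro e he
          obtain ⟨f, hf, rfl⟩ := List.mem_map.1 he
          exact (D₂.ok f hf).mirror
        have hperm := evVerts_mirror E₂
        rw [List.map_cons, List.reverse_cons, List.reverse_nil, ← List.map_reverse] at hrun2
        obtain ⟨e₁, E, e₂, hE, hEt, hrun3⟩ := hrun2.tail ok2
        rw [hE] at ok2 hperm
        have hperm' : (evVerts (e₁ ++ E.app ts :: e₂)).Perm (evVerts E₂) := by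
          rw [evVerts_append, evVerts_cons, Ev.verts_app, ← evVerts_cons, ← evVerts_append]
          exact hperm
        have hnd2 : (evVerts (e₁ ++ E :: e₂)).Nodup := hperm.nodup_iff.2 D₂.nodup
        have hmem2 : ∀ e ∈ e₁ ++ E :: e₂, ∀ v ∈ e.verts, v ∈ S \ K ∧ v ≠ x := by
          intro e he v hv
          have := (D₂.mem v).1 (hperm.mem_iff.1 (mem_evVerts.2 ⟨e, he, hv⟩))
          exact (Finset.mem_erase.1 this).symm
        have htE : t ∈ E.verts := by rw [← hEt]; cases E <;> simp [Ev.verts, Ev.last]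
        rw [evVerts_append, evVerts_cons, List.nodup_append, List.nodup_append] at hnd2
        have hD' : ∀ v ∈ S \ K, v ≠ x → v ≠ t → ∀ y ∈ S, G.Adj v y → y ∈ S \ K := by
          intro v hv hvx hvt y hy hvy
          refine Finset.mem_sdiff.2 ⟨hy, fun hyK => ?_⟩
          have hv := Finset.mem_sdiff.1 hv
          rcases hnb y hyK v hv.1 hvy.symm with h | h | h
          exacts [hv.2 h, hvx h, hvt h]
        refine ⟨rest, evs ++ .vert x (c :: us) (r₂.reverse ++ [t]) :: (e₁ ++ E.app ts :: e₂),
          ⟨hrun.append ⟨[], ts.map fun y => (y, t), by simp [Ev.dom], ?_⟩, hrn, hrm, ?_, ?_, ?_⟩⟩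
        · have := hrun3 ts
          simpa [Ev.cod] using this
        · rw [evVerts_append, evVerts_cons, List.nodup_append, List.nodup_append]
          refine ⟨hen, ⟨by simp [Ev.verts], hperm'.nodup_iff.2 D₂.nodup, ?_⟩, ?_⟩
          · rintro a ha b hb rfl
            obtain rfl : a = x := by simpa [Ev.verts] using ha
            simpa using (D₂.mem a).1 (hperm'.mem_iff.1 hb)
          · rintro a ha b hb rfl
            have haK := Finset.mem_of_mem_erase ((hem a).1 ha)
            rcases List.mem_append.1 hb with hb | hb
            · obtain rfl : a = x := by simpa [Ev.verts] using hb
              exact huK haK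
            · have := Finset.mem_of_mem_erase ((D₂.mem a).1 (hperm'.mem_iff.1 hb))
              exact (Finset.mem_sdiff.1 this).2 haK
        · intro v
          rw [evVerts_append, evVerts_cons, List.mem_append, List.mem_append, hem, hperm'.mem_iff,
            D₂.mem]
          simp only [Ev.verts, List.mem_singleton, Finset.mem_erase, Finset.mem_sdiff]
          constructor
          · rintro (h | rfl | h)
            · exact ⟨h.1, hKS h.2⟩
            · exact ⟨hcu.symm, hx⟩
            · exact ⟨by rintro rfl; exact h.2.2 hcK, h.2.1⟩
          · tauto
        · intro e he
          rw [List.mem_append, List.mem_cons, List.mem_append, List.mem_cons] at he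
          have key : e ∈ e₁ ∨ e ∈ e₂ → e.OK G S := by
            clear he
            intro he
            have he' : e ∈ e₁ ++ E :: e₂ := by rcases he with h | h <;> simp [h]
            refine (ok2 e he').mono Finset.sdiff_subset fun v hv =>
              hD' v (hmem2 e he' v hv).1 (hmem2 e he' v hv).2 ?_
            rintro rfl
            rcases he with h | h
            · exact hnd2.2.2 v (mem_evVerts.2 ⟨e, h, hv⟩) v (by simp [htE]) rfl
            · exact hnd2.2.1.2.2 v htE v (mem_evVerts.2 ⟨e, h, hv⟩) rfl
          rcases he with he | rfl | he | rfl | he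
          · exact hok e he
          · refine ⟨by simp, Or.inl (by simp), ?_, ?_⟩
            · rw [List.nodup_append]
              have : r₂.reverse ++ [t] = (t :: r₂).reverse := by simp
              rw [this, List.nodup_reverse]
              refine ⟨hun, D₂.outs_nodup, ?_⟩
              rintro a ha b hb rfl
              exact (Finset.mem_sdiff.1 ((D₂.mem_outs a).1 (List.mem_reverse.1 hb)).2).2
                ((hum a).1 ha).2
            · intro y
              have : y ∈ r₂.reverse ++ [t] ↔ y ∈ t :: r₂ := by simp [or_comm]
              rw [List.mem_append, hum, this, D₂.mem_outs, Finset.mem_sdiff]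
              constructor
              · rintro (h | h)
                · exact ⟨h.1, hKS h.2⟩
                · exact ⟨h.1, h.2.1⟩
              · tauto
          · exact key (Or.inl he)
          · -- the neighbours of `t` in `K` join its move
            have hEok := ok2 E (by simp)
            have ports : ∀ L : List V, L.Nodup → (∀ y, y ∈ L ↔ G.Adj t y ∧ y ∈ S \ K) →
                (L ++ ts).Nodup ∧ ∀ y, y ∈ L ++ ts ↔ G.Adj t y ∧ y ∈ S := by
              intro L hL hmem
              constructor
              · rw [List.nodup_append]
                refine ⟨hL, htn, ?_⟩
                rintro a ha b hb rfl
                exact (Finset.mem_sdiff.1 ((hmem a).1 ha).2).2 ((htm a).1 hb).2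
              · intro y
                rw [List.mem_append, hmem, htm, Finset.mem_sdiff]
                constructor
                · rintro (h | h)
                  · exact ⟨h.1, h.2.1⟩
                  · exact ⟨h.1, hKS h.2⟩
                · tauto
            cases E with
            | vert v ins outs =>
              obtain rfl : v = t := hEt
              obtain ⟨h1, h2, h3, h4⟩ := hEok
              have hp := ports _ h3 h4
              have hpm : (ins ++ ts ++ outs).Perm (ins ++ outs ++ ts) := by
                rw [List.append_assoc, List.append_assoc]
                exact List.Perm.append_left _ List.perm_append_comm
              refine ⟨by simp [h1], Or.inl ?_, hpm.nodup_iff.2 hp.1, fun y =>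
                hpm.mem_iff.trans (hp.2 y)⟩
              rintro rfl
              obtain ⟨a, rfl⟩ := List.length_eq_one_iff.1 (h2.resolve_left (by simp))
              have hxa : x = a := by simpa using (h4 x).2 ⟨hut.symm, hxZ⟩
              -- `v` has a neighbour besides `x` outside `K`
              obtain ⟨y, z, hy, hz, hyT, hzT, hadj⟩ := (hcut x hx d (by simp [hdx, hdS]) v
                (by simp [hut.ne.symm, htS])).boundary {z | z ∉ K ∧ z ≠ v} ⟨hdK, hdt⟩ (by simp)
              have hy := Finset.mem_erase.1 hy
              have hz' : z = v := by
                by_contra hzv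
                have hzK : z ∈ K := by
                  by_contra hzK
                  exact hzT ⟨hzK, hzv⟩
                rcases hnb z hzK y hy.2 hadj.symm with h | h | h
                exacts [hyT.1 h, hy.1 h, hyT.2 h]
              subst hz'
              have hya : y = a := by
                simpa using (h4 y).2 ⟨hadj.symm, Finset.mem_sdiff.2 ⟨hy.2, hyT.1⟩⟩
              exact hy.1 (hya.trans hxa.symm)
            | cap a b insu inst =>
              obtain rfl : b = t := hEt
              obtain ⟨h1, h2, h3, ⟨h4, h5⟩, h6, h7⟩ := hEok
              have hp := ports _ h6 h7
              have hpm : (inst ++ ts ++ [a]).Perm (inst ++ [a] ++ ts) := by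
                rw [List.append_assoc, List.append_assoc]
                exact List.Perm.append_left _ List.perm_append_comm
              have ha := hmem2 (.cap a b insu inst) (by simp) a (by simp [Ev.verts])
              refine ⟨h1, h2, by simp [h3], ⟨h4, fun y => (h5 y).trans ?_⟩, hpm.nodup_iff.2 hp.1,
                fun y => hpm.mem_iff.trans (hp.2 y)⟩
              exact ⟨fun h => ⟨h.1, (Finset.mem_sdiff.1 h.2).1⟩,
                fun h => ⟨h.1, hD' a ha.1 ha.2 h1.ne y h.2 h.1⟩⟩
          · exact key (Or.inr he)
      · push Not at hD
        refine ⟨rest, evs ++ [.cap x t (c :: us) ts], ⟨hrun.append ⟨[], [], by simp [Ev.dom],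
          by simp [Run, Ev.cod]⟩, hrn, hrm, ?_, ?_, ?_⟩⟩
        · rw [evVerts_append, List.nodup_append]
          refine ⟨hen, by simp [evVerts, Ev.verts, hut.ne], ?_⟩
          rintro a ha b hb rfl
          have haK := Finset.mem_of_mem_erase ((hem a).1 ha)
          have : a = x ∨ a = t := by simpa [evVerts, Ev.verts] using hb
          rcases this with rfl | rfl
          exacts [huK haK, htK haK]
        · intro v
          have : v ∈ evVerts [Ev.cap x t (c :: us) ts] ↔ v = x ∨ v = t := by simp [evVerts, Ev.verts]
          rw [evVerts_append, List.mem_append, hem, this, Finset.mem_erase, Finset.mem_erase]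
          constructor
          · rintro (h | rfl | rfl)
            · exact ⟨h.1, hKS h.2⟩
            · exact ⟨hcu.symm, hx⟩
            · exact ⟨hct.symm, htS⟩
          · rintro ⟨h1, h2⟩
            by_cases hvK : v ∈ K
            · exact Or.inl ⟨h1, hvK⟩
            · by_cases hvx : v = x
              · exact Or.inr (Or.inl hvx)
              · exact Or.inr (Or.inr (hD v h2 hvK hvx))
        · intro e he
          rcases List.mem_append.1 he with he | he
          · exact hok e he
          obtain rfl := List.mem_singleton.1 he
          have hZ2 : ∀ y ∈ S, y ∈ K ∨ y = x ∨ y = t := by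
            intro y hy
            by_contra! h
            exact h.2.2 (hD y hy h.1 h.2.1)
          refine ⟨hut, by simp, hts, ⟨?_, ?_⟩, ?_, ?_⟩
          · rw [List.nodup_append]
            refine ⟨hun, by simp, ?_⟩
            rintro a ha b hb rfl
            obtain rfl := List.mem_singleton.1 hb
            exact htK ((hum a).1 ha).2
          · intro y
            rw [List.mem_append, hum, List.mem_singleton]
            constructor
            · rintro (h | rfl)
              · exact ⟨h.1, hKS h.2⟩
              · exact ⟨hut, htS⟩
            · rintro ⟨h, hy⟩
              rcases hZ2 y hy with h' | rfl | rfl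
              · exact Or.inl ⟨h, h'⟩
              · exact absurd rfl h.ne
              · exact Or.inr rfl
          · rw [List.nodup_append]
            refine ⟨htn, by simp, ?_⟩
            rintro a ha b hb rfl
            obtain rfl := List.mem_singleton.1 hb
            exact huK ((htm a).1 ha).2
          · intro y
            rw [List.mem_append, htm, List.mem_singleton]
            constructor
            · rintro (h | rfl)
              · exact ⟨h.1, hKS h.2⟩
              · exact ⟨hut.symm, hx⟩
            · rintro ⟨h, hy⟩
              rcases hZ2 y hy with h' | rfl | rfl
              · exact Or.inl ⟨h, h'⟩
              · exact Or.inr rfl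
              · exact absurd rfl h.ne

end TwoConnected

/-! ### Starting at a vertex of degree at most seven -/

section LowDegree

variable {V : Type*} [DecidableEq V] {G : SimpleGraph V} {Θ : V → V → ℕ ×ₗ ℝ}

/-- The number of neighbouring strands with the same tail. -/
def twins : List (V × V) → ℕ
  | [] => 0
  | [_] => 0
  | a :: b :: w => (if a.1 = b.1 then 1 else 0) + twins (b :: w)

theorem twins_cons_le (a : V × V) (w : List (V × V)) :
    twins w ≤ twins (a :: w) ∧ twins (a :: w) ≤ twins w + 1 := by
  cases w with
  | nil => simp [twins]
  | cons b w => simp only [twins]; split_ifs <;> omega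

theorem twins_append (l r : List (V × V)) :
    twins l + twins r ≤ twins (l ++ r) ∧ twins (l ++ r) ≤ twins l + twins r + 1 := by
  induction l with
  | nil => simp [twins]
  | cons a l ih =>
    cases l with
    | nil => have := twins_cons_le a r; simp only [List.singleton_append, twins]; omega
    | cons b l =>
      simp only [List.cons_append, twins] at ih ⊢
      split_ifs <;> omega

theorem twins_ins (v : V) (L : List V) (h : L.Nodup) : twins (L.map fun x => (x, v)) = 0 := by
  induction L with
  | nil => rfl
  | cons a L ih =>
    cases L with
    | nil => rfl
    | cons b L =>
      have hab : a ≠ b := by rintro rfl; simp at h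
      have := ih (List.nodup_cons.1 h).2
      simp only [List.map_cons, twins, if_neg hab] at this ⊢
      omega

theorem twins_outs (v : V) (L : List V) : L.length ≤ twins (L.map fun y => (v, y)) + 1 := by
  induction L with
  | nil => simp
  | cons a L ih =>
    cases L with
    | nil => simp
    | cons b L => simp only [List.map_cons, twins, List.length_cons, if_true] at ih ⊢; omega

/-- The vertices passed by the move have at least eight ports. -/
def Ev.Big : Ev V → Prop
  | .vert _ ins outs => 8 ≤ (ins ++ outs).length
  | .cap u t insu inst => 8 ≤ (insu ++ [t]).length ∧ 8 ≤ (inst ++ [u]).length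

/-- If all vertices to come have degree at least eight, there are at most half as many twins as
strands: a move at such a vertex consumes strands without twins among them, and so the difference
`2 * twins w - w.length` never decreases along the sweep, at the end of which it is `0`. -/
theorem Run.twins_le {S : Finset V} {w : List (V × V)} {evs : List (Ev V)} (h : Run w evs [])
    (hok : ∀ e ∈ evs, e.OK G S) (hbig : ∀ e ∈ evs, e.Big) : 2 * twins w ≤ w.length := by
  induction evs generalizing w with
  | nil => cases h; simp [twins]
  | cons e evs ih =>
    obtain ⟨l, r, rfl, h⟩ := h
    have h1 := ih h (fun e he => hok e (by simp [he])) fun e he => hbig e (by simp [he])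
    have o := hok e (by simp)
    have b := hbig e (by simp)
    have a1 := twins_append (l ++ e.dom) r
    have a2 := twins_append l e.dom
    have a3 := twins_append (l ++ e.cod) r
    have a4 := twins_append l e.cod
    cases e with
    | vert v ins outs =>
      have t1 := twins_ins v ins (List.nodup_append.1 o.2.2.1).1
      have t2 := twins_outs v outs
      simp only [Ev.dom, Ev.cod, Ev.Big, List.length_append, List.length_map] at *
      omega
    | cap u t insu inst =>
      have t1 := twins_ins u insu (List.nodup_append.1 o.2.2.2.1.1).1
      have t2 := twins_ins t inst (List.nodup_append.1 o.2.2.2.2.1).1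
      have a5 := twins_append (insu.map fun x => (x, u)) (inst.map fun x => (x, t))
      simp only [Ev.dom, Ev.cod, Ev.Big, List.length_append, List.length_map, List.length_cons,
        List.length_nil, twins] at *
      omega

theorem length_eq_of_mem_iff {L L' : List V} (h : L.Nodup) (h' : L'.Nodup) (hm : ∀ y, y ∈ L ↔ y ∈ L') :
    L.length = L'.length := ((List.perm_ext_iff_of_nodup h h').2 hm).length_eq

/-- Every connected plane graph has a sweep starting at a vertex of degree at most seven. -/
theorem exists_low_diag (hR : Rotation G Θ) {S : Finset V} (hS : Conn G S) (hne : S.Nonempty) :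
    ∃ c outs evs, c ∈ S ∧ Diag G S c outs evs ∧ outs.length ≤ 7 := by
  obtain ⟨c, hc⟩ := hne
  by_cases hx : ∃ x ∈ S, x ≠ c
  · obtain ⟨x, hx, hxc⟩ := hx
    obtain ⟨y, hy, hcy⟩ := hS.exists_adj hc hx (Ne.symm hxc)
    by_contra! hall
    have big : ∀ v ∈ S, ∀ L : List V, L ≠ [] → L.Nodup → (∀ y, y ∈ L ↔ G.Adj v y ∧ y ∈ S) →
        8 ≤ L.length := by
      intro v hv L hL hn hm
      obtain ⟨z, hz⟩ := List.exists_mem_of_ne_nil L hL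
      have hz' := (hm z).1 hz
      obtain ⟨rest, evs, D⟩ := exists_diag hR _ S v z rfl hS hv hz'.2 hz'.1
      rw [length_eq_of_mem_iff hn D.outs_nodup fun y => (hm y).trans (D.mem_outs y).symm]
      exact hall v _ evs hv D
    obtain ⟨rest, evs, D⟩ := exists_diag hR _ S c y rfl hS hc hy hcy
    have h8 := hall c _ evs hc D
    have ht := D.run.twins_le D.ok (by
      intro e he
      have hok := D.ok e he
      cases e with
      | vert v ins outs =>
        exact big v (D.notMem he (by simp [Ev.verts])).1 _ (by simp [hok.1]) hok.2.2.1 hok.2.2.2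
      | cap u t insu inst =>
        exact ⟨big u (D.notMem he (by simp [Ev.verts])).1 _ (by simp) hok.2.2.2.1.1 hok.2.2.2.1.2,
          big t (D.notMem he (by simp [Ev.verts])).1 _ (by simp) hok.2.2.2.2.1 hok.2.2.2.2.2⟩)
    have hl := twins_outs c (y :: rest)
    rw [List.length_map] at ht
    omega
  · push Not at hx
    refine ⟨c, [], [], hc, ⟨rfl, by simp, ?_, by simp [evVerts], ?_, by simp⟩, by simp⟩
    · intro y
      simp only [List.not_mem_nil, false_iff, not_and]
      intro h hy
      exact h.ne (hx y hy).symm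
    · intro v
      simp only [evVerts, List.flatMap_nil, List.not_mem_nil, Finset.mem_erase, false_iff, not_and]
      exact fun h h' => h (hx v h')

/-- The ports of a move agree with `G`. There are at most eight of them at a vertex, and at most seven
if they are all below or all above, as one of the two vertical directions is then not used. -/
def Ev.Fit (G : SimpleGraph V) : Ev V → Prop
  | .vert v ins outs => ((ins ++ outs).Nodup ∧ ∀ y, y ∈ ins ++ outs ↔ G.Adj v y) ∧
      (ins ++ outs).length ≤ 8 ∧ (ins = [] → outs.length ≤ 7) ∧ (outs = [] → ins.length ≤ 7)
  | .cap u t insu inst => ((insu ++ [t]).Nodup ∧ ∀ y, y ∈ insu ++ [t] ↔ G.Adj u y) ∧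
      ((inst ++ [u]).Nodup ∧ ∀ y, y ∈ inst ++ [u] ↔ G.Adj t y) ∧
      (insu ++ [t]).length ≤ 8 ∧ (inst ++ [u]).length ≤ 8 ∧ insu ≠ [] ∧ inst ≠ []

/-- A sweep over the whole graph: the components are swept one after the other. -/
theorem exists_run [Finite V] (hR : Rotation G Θ) (hdeg : MaxDegLE G 8) :
    ∃ evs : List (Ev V), Run [] evs [] ∧ (evVerts evs).Nodup ∧ (∀ v, v ∈ evVerts evs) ∧
      ∀ e ∈ evs, e.Fit G := by
  classical
  have := Fintype.ofFinite V
  have hlen : ∀ (v : V) (L : List V), L.Nodup → (∀ y, y ∈ L ↔ G.Adj v y) → L.length ≤ 8 := by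
    intro v L hn hm
    have h := hdeg v
    have hs : G.neighborSet v = (L.toFinset : Set V) := by ext y; simp [hm]
    rw [hs, Set.ncard_coe_finset, List.toFinset_card_of_nodup hn] at h
    exact h
  suffices ∀ (n : ℕ) (T : Finset V), T.card = n → (∀ x ∈ T, ∀ y, G.Adj x y → y ∈ T) →
      ∃ evs : List (Ev V), Run [] evs [] ∧ (evVerts evs).Nodup ∧ (∀ v, v ∈ evVerts evs ↔ v ∈ T) ∧
      ∀ e ∈ evs, e.Fit G by
    obtain ⟨evs, h1, h2, h3, h4⟩ := this _ Finset.univ rfl (by simp)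
    exact ⟨evs, h1, h2, by simpa using h3, h4⟩
  intro n
  induction n using Nat.strong_induction_on with
  | _ n ih =>
  intro T hn hT
  rcases T.eq_empty_or_nonempty with rfl | ⟨a, ha⟩
  · exact ⟨[], rfl, by simp [evVerts], by simp [evVerts], by simp⟩
  have haC := self_mem_comp (G := G) ha
  have hC : ∀ x ∈ comp G T a, ∀ y, G.Adj x y → y ∈ comp G T a := fun x hx y hxy =>
    adj_comp hx (hT x (comp_subset _ _ hx) y hxy) hxy
  obtain ⟨c, outs, E₁, hc, D, h7⟩ := exists_low_diag hR (conn_comp T a) ⟨a, haC⟩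
  obtain ⟨E₂, r2, n2, m2, f2⟩ := ih (T \ comp G T a).card (by
    rw [← hn]
    apply Finset.card_lt_card
    rw [Finset.ssubset_iff_of_subset Finset.sdiff_subset]
    exact ⟨a, ha, by simp [haC]⟩) _ rfl (by
      intro x hx y hxy
      have hx := Finset.mem_sdiff.1 hx
      exact Finset.mem_sdiff.2 ⟨hT x hx.1 y hxy, fun hy => hx.2 (hC y hy x hxy.symm)⟩)
  have hport : ∀ v ∈ comp G T a, ∀ L : List V, (∀ y, y ∈ L ↔ G.Adj v y ∧ y ∈ comp G T a) →
      ∀ y, y ∈ L ↔ G.Adj v y := fun v hv L hL y =>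
    (hL y).trans ⟨fun h => h.1, fun h => ⟨h, hC v hv y h⟩⟩
  refine ⟨(.vert c [] outs :: E₁) ++ E₂, Run.append (w' := []) ⟨[], [], by simp [Ev.dom], ?_⟩ r2, ?_,
    ?_, ?_⟩
  · simpa [Ev.cod] using D.run
  · rw [evVerts_append, evVerts_cons, List.nodup_append, List.nodup_append]
    refine ⟨⟨by simp [Ev.verts], D.nodup, ?_⟩, n2, ?_⟩
    · rintro x hx y hy rfl
      obtain rfl : x = c := by simpa [Ev.verts] using hx
      simpa using (D.mem x).1 hy
    · rintro x hx y hy rfl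
      refine (Finset.mem_sdiff.1 ((m2 x).1 hy)).2 ?_
      rcases List.mem_append.1 hx with hx | hx
      · obtain rfl : x = c := by simpa [Ev.verts] using hx
        exact hc
      · exact Finset.mem_of_mem_erase ((D.mem x).1 hx)
  · intro v
    rw [evVerts_append, evVerts_cons, List.mem_append, List.mem_append, m2, D.mem]
    simp only [Ev.verts, List.mem_singleton, Finset.mem_erase, Finset.mem_sdiff]
    have h1 : v ∈ comp G T a → v ∈ T := fun h => comp_subset _ _ h
    constructor
    · rintro ((rfl | h) | h)
      exacts [h1 hc, h1 h.2, h.1]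
    · tauto
  · intro e he
    rw [List.cons_append, List.mem_cons, List.mem_append] at he
    rcases he with rfl | he | he
    · have hm := hport c hc outs D.mem_outs
      refine ⟨⟨by simpa using D.outs_nodup, by simpa using hm⟩, ?_, fun _ => h7, fun _ => by simp⟩
      simpa using hlen c outs D.outs_nodup hm
    · have hok := D.ok e he
      cases e with
      | vert v ins outs =>
        obtain ⟨h1, h2, h3, h4⟩ := hok
        have hm := hport v (D.notMem he (by simp [Ev.verts])).1 _ h4
        refine ⟨⟨h3, hm⟩, hlen v _ h3 hm, fun h => absurd h h1, fun h => ?_⟩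
        have := h2.resolve_left (by simpa using h)
        omega
      | cap u t insu inst =>
        obtain ⟨h1, h2, h3, ⟨h4, h5⟩, h6, h7⟩ := hok
        have hm1 := hport u (D.notMem he (by simp [Ev.verts])).1 _ h5
        have hm2 := hport t (D.notMem he (by simp [Ev.verts])).1 _ h7
        exact ⟨⟨h4, hm1⟩, ⟨h6, hm2⟩, hlen u _ h4 hm1, hlen t _ h6 hm2, h2, h3⟩
    · exact f2 e he

end LowDegree

/-! ### Columns along a sweep -/

section Columns

variable {W : Type*} [DecidableEq W]

/-- An upward sweep all of whose moves `(v, ins, outs)` pass one vertex. -/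
def Sweep : List (W × W) → List (W × List W × List W) → Prop
  | w, [] => w = []
  | w, (v, ins, outs) :: es => ∃ l r, w = l ++ (ins.map fun a => (a, v)) ++ r ∧
      Sweep (l ++ (outs.map fun b => (v, b)) ++ r) es

/-- Local condition on a move that leaves room for eight ports at a vertex. -/
def Room (e : W × List W × List W) : Prop :=
  (e.2.1 ++ e.2.2).Nodup ∧ (e.2.1 ++ e.2.2).length ≤ 8 ∧ (e.2.1 = [] → e.2.2.length ≤ 7) ∧
    (e.2.2 = [] → e.2.1.length ≤ 7)

/-- The columns `c` of the strands and `x` of the vertices respect the left-to-right order of the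
sweep, at most three strands at a vertex lie on either side of it, and a vertex lies in the column
of one of its lower and one of its upper strands. -/
def Good (c : W × W → ℚ) (x : W → ℚ) : List (W × W) → List (W × List W × List W) → Prop
  | w, [] => w = []
  | w, (v, ins, outs) :: es => ∃ l r, w = l ++ (ins.map fun a => (a, v)) ++ r ∧
      w.Pairwise (fun p q => c p < c q) ∧
      (l ++ (outs.map fun b => (v, b)) ++ r).Pairwise (fun p q => c p < c q) ∧
      (∀ p ∈ l, c p < x v) ∧ (∀ p ∈ r, x v < c p) ∧
      (∃ F : Finset W, F.card ≤ 3 ∧ (∀ y ∈ ins, c (y, v) < x v → y ∈ F) ∧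
        ∀ y ∈ outs, c (v, y) < x v → y ∈ F) ∧
      (∃ F : Finset W, F.card ≤ 3 ∧ (∀ y ∈ ins, x v < c (y, v) → y ∈ F) ∧
        ∀ y ∈ outs, x v < c (v, y) → y ∈ F) ∧
      (ins ≠ [] → ∃ y ∈ ins, c (y, v) = x v) ∧ (outs ≠ [] → ∃ y ∈ outs, c (v, y) = x v) ∧
      Good c x (l ++ (outs.map fun b => (v, b)) ++ r) es

theorem exists_between_lists {α : Type*} (f : α → ℚ) (l r : List α)
    (h : ∀ p ∈ l, ∀ q ∈ r, f p < f q) : ∃ m, (∀ p ∈ l, f p < m) ∧ ∀ q ∈ r, m < f q := by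
  obtain ⟨m, h1, h2⟩ := Order.exists_between_finsets (lo := (l.map f).toFinset)
    (hi := (r.map f).toFinset) (by simpa using h)
  exact ⟨m, by simpa using h1, by simpa using h2⟩

theorem exists_increasing (A : List W) (hA : A.Nodup) {a b : ℚ} (h : a < b) :
    ∃ f : W → ℚ, A.Pairwise (fun p q => f p < f q) ∧ ∀ y ∈ A, a < f y ∧ f y < b := by
  induction A generalizing a with
  | nil => exact ⟨fun _ => 0, by simp, by simp⟩
  | cons y A ih =>
    obtain ⟨m, hm1, hm2⟩ := exists_between h
    obtain ⟨hy, hA⟩ := List.nodup_cons.1 hA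
    obtain ⟨f, h1, h2⟩ := ih hA hm2
    have hne : ∀ z ∈ A, z ≠ y := fun z hz e => hy (e ▸ hz)
    refine ⟨Function.update f y m, ?_, ?_⟩
    · rw [List.pairwise_cons]
      refine ⟨fun z hz => ?_, h1.imp_of_mem fun {p q} hp hq hpq => ?_⟩
      · simpa [Function.update_of_ne (hne z hz)] using (h2 z hz).1
      · simpa [Function.update_of_ne (hne p hp), Function.update_of_ne (hne q hq)] using hpq
    · intro z hz
      rcases List.mem_cons.1 hz with rfl | hz
      · simpa using ⟨hm1, hm2⟩
      · rw [Function.update_of_ne (hne z hz)]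
        exact ⟨hm1.trans (h2 z hz).1, (h2 z hz).2⟩

/-- New columns for the strands leaving a vertex upwards, the middle one straight above it. -/
theorem exists_increasing_through (A O B : List W) (hO : O.length ≤ 1) (h : (A ++ O ++ B).Nodup)
    {a q b : ℚ} (ha : a < q) (hb : q < b) :
    ∃ f : W → ℚ, (A ++ O ++ B).Pairwise (fun p q => f p < f q) ∧
      (∀ y ∈ A, a < f y ∧ f y < q) ∧ (∀ y ∈ O, f y = q) ∧ ∀ y ∈ B, q < f y ∧ f y < b := by
  rw [List.append_assoc, List.nodup_append] at h
  obtain ⟨hA, hOB, hd1⟩ := h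
  rw [List.nodup_append] at hOB
  obtain ⟨-, hB, hd2⟩ := hOB
  obtain ⟨f, f1, f2⟩ := exists_increasing A hA ha
  obtain ⟨g, g1, g2⟩ := exists_increasing B hB hb
  set k : W → ℚ := fun y => if y ∈ A then f y else if y ∈ B then g y else q with hk
  have kA : ∀ y ∈ A, k y = f y := fun y hy => by simp [hk, hy]
  have kB : ∀ y ∈ B, k y = g y := fun y hy => by
    have : y ∉ A := fun h => hd1 y h y (List.mem_append_right _ hy) rfl
    simp [hk, hy, this]
  have kO : ∀ y ∈ O, k y = q := fun y hy => by
    have h1 : y ∉ A := fun h => hd1 y h y (List.mem_append_left _ hy) rfl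
    have h2 : y ∉ B := fun h => hd2 y hy y h rfl
    simp [hk, h1, h2]
  have k1 : ∀ y ∈ A, a < k y ∧ k y < q := fun y hy => by rw [kA y hy]; exact f2 y hy
  have k2 : ∀ y ∈ B, q < k y ∧ k y < b := fun y hy => by rw [kB y hy]; exact g2 y hy
  refine ⟨k, ?_, k1, kO, k2⟩
  rw [List.append_assoc, List.pairwise_append, List.pairwise_append]
  refine ⟨f1.imp_of_mem fun {y z} hy hz h => by rw [kA y hy, kA z hz]; exact h, ⟨?_,
    g1.imp_of_mem fun {y z} hy hz h => by rw [kB y hy, kB z hz]; exact h, ?_⟩, ?_⟩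
  · match O, hO with
    | [], _ => simp
    | [_], _ => simp
  · intro y hy z hz
    rw [kO y hy]; exact (k2 z hz).1
  · intro y hy z hz
    rcases List.mem_append.1 hz with hz | hz
    · rw [kO z hz]; exact (k1 y hy).2
    · exact (k1 y hy).2.trans (k2 z hz).1

/-- A list is cut before and after the entry in position `i`. -/
theorem exists_cut {α : Type*} (L : List α) (i : ℕ) (hi : L ≠ [] → i < L.length)
    (hi' : L = [] → i = 0) :
    ∃ A O B, L = A ++ O ++ B ∧ A.length = i ∧ O.length ≤ 1 ∧ (L ≠ [] → O ≠ []) ∧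
      B.length = L.length - 1 - i := by
  rcases eq_or_ne L [] with rfl | h
  · exact ⟨[], [], [], by simp, by simp [hi' rfl], by simp, by simp, by simp⟩
  · have := hi h
    refine ⟨L.take i, [L[i]], L.drop (i + 1), by simp, by simp; omega, by simp, by simp, ?_⟩
    simp; omega

/-- The ports of a vertex are divided into a middle one above, a middle one below, and at most
three on either side. -/
theorem Room.cuts {v : W} {ins outs : List W} (h : Room (v, ins, outs)) :
    ∃ A O B A' O' B', ins = A ++ O ++ B ∧ outs = A' ++ O' ++ B' ∧ O.length ≤ 1 ∧ O'.length ≤ 1 ∧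
      (ins ≠ [] → O ≠ []) ∧ (outs ≠ [] → O' ≠ []) ∧ A.length + A'.length ≤ 3 ∧
      B.length + B'.length ≤ 3 := by
  obtain ⟨-, h8, h1, h2⟩ := h
  simp only [List.length_append] at h8 h1 h2
  obtain ⟨A, O, B, e1, l1, l2, l3, l4⟩ := exists_cut ins (min 3 (ins.length - 1))
    (fun h => by have := List.length_pos_iff.2 h; omega) (fun h => by simp [h])
  obtain ⟨A', O', B', e1', l1', l2', l3', l4'⟩ := exists_cut outs
    (min (3 - min 3 (ins.length - 1)) (outs.length - 1))
    (fun h => by have := List.length_pos_iff.2 h; omega) (fun h => by simp [h])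
  refine ⟨A, O, B, A', O', B', e1, e1', l2, l2', l3, l3', by omega, ?_⟩
  rcases eq_or_ne ins [] with h | h
  · have := h1 h
    have : ins.length = 0 := by simp [h]
    omega
  · have := List.length_pos_iff.2 h
    rcases eq_or_ne outs [] with h' | h'
    · have := h2 h'
      have : outs.length = 0 := by simp [h']
      omega
    · have := List.length_pos_iff.2 h'
      omega

/-- Columns are assigned along the sweep: the strands leaving a vertex get new columns close to
that of the vertex. -/
theorem exists_good {w : List (W × W)} {es : List (W × List W × List W)} (hs : Sweep w es)
    (hr : ∀ e ∈ es, Room e) (hn : (es.map Prod.fst).Nodup)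
    (ht : ∀ p ∈ w, p.1 ∉ es.map Prod.fst) (ξ : W × W → ℚ) (η : W → ℚ)
    (hw : w.Pairwise (fun p q => ξ p < ξ q)) :
    ∃ c x, (∀ p : W × W, p.1 ∉ es.map Prod.fst → c p = ξ p) ∧
      (∀ v, v ∉ es.map Prod.fst → x v = η v) ∧ Good c x w es := by
  induction es generalizing w ξ η with
  | nil => exact ⟨ξ, η, fun _ _ => rfl, fun _ _ => rfl, hs⟩
  | cons e es ih =>
    obtain ⟨v, ins, outs⟩ := e
    obtain ⟨l, r, rfl, hs⟩ := hs
    have hroom := hr _ List.mem_cons_self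
    obtain ⟨hv, hn'⟩ := List.nodup_cons.1 (by simpa using hn :
      (v :: es.map Prod.fst).Nodup)
    have hvt : ∀ p ∈ l ++ (ins.map fun a => (a, v)) ++ r, p.1 ≠ v ∧ p.1 ∉ es.map Prod.fst := by
      intro p hp
      have := ht p hp
      simpa using this
    obtain ⟨A, O, B, A', O', B', rfl, rfl, hO, hO', hO1, hO1', hl3, hr3⟩ := hroom.cuts
    have hnd : (A' ++ O' ++ B').Nodup := (List.nodup_append.1 hroom.1).2.1
    -- the column of the vertex, and the free space around it
    have hq : ∃ q, (∀ p ∈ l, ξ p < q) ∧ (∀ p ∈ r, q < ξ p) ∧ (∀ y ∈ A, ξ (y, v) < q) ∧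
        (∀ y ∈ O, ξ (y, v) = q) ∧ ∀ y ∈ B, q < ξ (y, v) := by
      simp only [List.map_append, List.append_assoc, List.pairwise_append, List.mem_append,
        List.mem_map] at hw
      match O, hO with
      | [], _ =>
        have he : A ++ [] ++ B = [] := by
          by_contra h
          exact hO1 h rfl
        simp only [List.append_nil, List.append_eq_nil_iff] at he
        obtain ⟨rfl, rfl⟩ := he
        obtain ⟨q, h1, h2⟩ := exists_between_lists ξ l r fun p hp q hq => by
          grind
        exact ⟨q, h1, h2, by simp, by simp, by simp⟩
      | [o], _ =>
        obtain ⟨-, ⟨-, ⟨-, -, w3⟩, w4⟩, w5⟩ := hw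
        have ho : ∃ a ∈ [o], (a, v) = (o, v) := ⟨o, by simp, rfl⟩
        exact ⟨ξ (o, v), fun p hp => w5 p hp _ (.inr (.inl ho)),
          fun p hp => w3 _ ho _ (.inr hp), fun y hy => w4 _ ⟨y, hy, rfl⟩ _ (.inl ho),
          by simp, fun y hy => w3 _ ho _ (.inl ⟨y, hy, rfl⟩)⟩
    obtain ⟨q, q1, q2, q3, q4, q5⟩ := hq
    obtain ⟨L, L1, L2⟩ := exists_between_lists (Sum.elim ξ (fun _ => q)) (l.map Sum.inl)
      [Sum.inr ()] (by
        intro p hp q hq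
        obtain ⟨p, hp', rfl⟩ := List.mem_map.1 hp
        obtain rfl := List.mem_singleton.1 hq
        exact q1 p hp')
    obtain ⟨R, R1, R2⟩ := exists_between_lists (Sum.elim ξ (fun _ => q)) [Sum.inr ()]
      (r.map Sum.inl) (by
        intro p hp q hq
        obtain ⟨q, hq', rfl⟩ := List.mem_map.1 hq
        obtain rfl := List.mem_singleton.1 hp
        exact q2 q hq')
    have L1 : ∀ p ∈ l, ξ p < L := fun p hp => L1 (.inl p) (List.mem_map_of_mem hp)
    have R2 : ∀ p ∈ r, R < ξ p := fun p hp => R2 (.inl p) (List.mem_map_of_mem hp)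
    have L2 : L < q := L2 (.inr ()) (by simp)
    have R1 : q < R := R1 (.inr ()) (by simp)
    obtain ⟨f, f1, f2, f3, f4⟩ := exists_increasing_through A' O' B' hO' hnd L2 R1
    have fL : ∀ y ∈ A' ++ O' ++ B', L < f y ∧ f y < R := by
      intro y hy
      simp only [List.mem_append] at hy
      rcases hy with (hy | hy) | hy
      · exact ⟨(f2 y hy).1, (f2 y hy).2.trans R1⟩
      · rw [f3 y hy]; exact ⟨L2, R1⟩
      · exact ⟨L2.trans (f4 y hy).1, (f4 y hy).2⟩
    set ξ' : W × W → ℚ := fun p => if p.1 = v then f p.2 else ξ p with hξ'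
    have e1 : ∀ p ∈ l ++ ((A ++ O ++ B).map fun a => (a, v)) ++ r, ξ' p = ξ p := fun p hp => by
      simp [hξ', (hvt p hp).1]
    have e2 : ∀ y, ξ' (v, y) = f y := fun y => by simp [hξ']
    have hw' : (l ++ ((A' ++ O' ++ B').map fun b => (v, b)) ++ r).Pairwise
        (fun p q => ξ' p < ξ' q) := by
      rw [List.append_assoc, List.pairwise_append] at hw ⊢
      obtain ⟨w1, w2, w3⟩ := hw
      rw [List.pairwise_append] at w2 ⊢
      refine ⟨w1.imp_of_mem fun {p q} hp hq h => ?_, ⟨?_, w2.2.1.imp_of_mem fun {p q} hp hq h => ?_,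
        ?_⟩, ?_⟩
      · rw [e1 p (by simp [hp]), e1 q (by simp [hq])]; exact h
      · rw [List.pairwise_map]
        simpa only [e2] using f1
      · rw [e1 p (by simp [hp]), e1 q (by simp [hq])]; exact h
      · intro p hp q hq
        obtain ⟨y, hy, rfl⟩ := List.mem_map.1 hp
        rw [e2, e1 q (by simp [hq])]
        exact (fL y hy).2.trans (R2 q hq)
      · intro p hp q hq
        rw [e1 p (by simp [hp])]
        rcases List.mem_append.1 hq with hq | hq
        · obtain ⟨y, hy, rfl⟩ := List.mem_map.1 hq
          rw [e2]
          exact (L1 p hp).trans (fL y hy).1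
        · rw [e1 q (by simp [hq])]
          exact w3 p hp q (List.mem_append_right _ hq)
    obtain ⟨c, x, hc, hx, hg⟩ := ih hs (fun e he => hr e (List.mem_cons_of_mem _ he)) hn'
      (by
        intro p hp
        simp only [List.mem_append, List.mem_map] at hp
        rcases hp with (hp | ⟨y, -, rfl⟩) | hp
        · exact (hvt p (by simp [hp])).2
        · exact hv
        · exact (hvt p (by simp [hp])).2) ξ' (Function.update η v q) hw'
    have hxv : x v = q := by rw [hx v hv]; simp
    have c1 : ∀ p ∈ l ++ ((A ++ O ++ B).map fun a => (a, v)) ++ r, c p = ξ p := fun p hp => by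
      rw [hc p (hvt p hp).2, e1 p hp]
    have c2 : ∀ y, c (v, y) = f y := fun y => by rw [hc _ hv, e2]
    have c3 : ∀ y ∈ A ++ O ++ B, c (y, v) = ξ (y, v) := fun y hy => c1 _ (by
      simp only [List.mem_append] at hy
      simp only [List.mem_append, List.mem_map]
      exact .inl (.inr ⟨y, hy, rfl⟩))
    refine ⟨c, x, ?_, ?_, l, r, rfl, ?_, ?_, ?_, ?_, ?_, ?_, ?_, ?_, hg⟩
    · intro p hp
      simp only [List.map_cons, List.mem_cons, not_or] at hp
      rw [hc p hp.2]
      simp [hξ', hp.1]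
    · intro y hy
      simp only [List.map_cons, List.mem_cons, not_or] at hy
      rw [hx y hy.2]
      simp [hy.1]
    · exact hw.imp_of_mem fun {p q} hp hq h => by rw [c1 p hp, c1 q hq]; exact h
    · refine hw'.imp_of_mem fun {p q} hp hq h => ?_
      have : ∀ p ∈ l ++ ((A' ++ O' ++ B').map fun b => (v, b)) ++ r, c p = ξ' p := by
        intro p hp
        apply hc
        simp only [List.mem_append, List.mem_map] at hp
        rcases hp with (hp | ⟨y, -, rfl⟩) | hp
        · exact (hvt p (by simp [hp])).2
        · exact hv
        · exact (hvt p (by simp [hp])).2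
      rw [this p hp, this q hq]; exact h
    · intro p hp
      rw [c1 p (by simp [hp]), hxv]; exact q1 p hp
    · intro p hp
      rw [c1 p (by simp [hp]), hxv]; exact q2 p hp
    · refine ⟨(A ++ A').toFinset, (List.toFinset_card_le _).trans (by simpa using hl3), ?_, ?_⟩
      · intro y hy h
        rw [c3 y hy, hxv] at h
        simp only [List.mem_append] at hy
        rcases hy with (hy | hy) | hy
        · simp [hy]
        · exact absurd (q4 y hy) h.ne
        · exact absurd (q5 y hy) h.asymm
      · intro y hy h
        rw [c2 y, hxv] at h
        simp only [List.mem_append] at hy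
        rcases hy with (hy | hy) | hy
        · simp [hy]
        · exact absurd (f3 y hy) h.ne
        · exact absurd (f4 y hy).1 h.asymm
    · refine ⟨(B ++ B').toFinset, (List.toFinset_card_le _).trans (by simpa using hr3), ?_, ?_⟩
      · intro y hy h
        rw [c3 y hy, hxv] at h
        simp only [List.mem_append] at hy
        rcases hy with (hy | hy) | hy
        · exact absurd (q3 y hy) h.asymm
        · exact absurd (q4 y hy) h.ne'
        · simp [hy]
      · intro y hy h
        rw [c2 y, hxv] at h
        simp only [List.mem_append] at hy
        rcases hy with (hy | hy) | hy
        · exact absurd (f2 y hy).2 h.asymm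
        · exact absurd (f3 y hy) h.ne'
        · simp [hy]
    · intro h
      obtain ⟨o, ho⟩ := List.exists_mem_of_ne_nil _ (hO1 h)
      exact ⟨o, by simp [ho], by rw [c3 o (by simp [ho]), hxv]; exact q4 o ho⟩
    · intro h
      obtain ⟨o, ho⟩ := List.exists_mem_of_ne_nil _ (hO1' h)
      exact ⟨o, by simp [ho], by rw [c2 o, hxv]; exact f3 o ho⟩

end Columns

/-! ### Layouts with rows and columns -/

section LayoutSection

variable {W : Type*} [DecidableEq W]

/-- The combinatorial data of a drawing with one vertical *column* `c a b` for every strand `a → b`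
and one horizontal *row* for every vertex; `x w` is the abscissa of the vertex `w`. Strands that
share a row lie in different columns, a strand passing the row of `w` lies to one side of everything
at `w`, and at most three strands at `w` lie strictly on either side of `w`. Points of `W` in row
`0` do not take part. -/
structure Layout (W : Type*) where
  up : W → W → Prop
  x : W → ℤ
  row : W → ℕ
  c : W → W → ℤ
  row_inj : ∀ a b, 0 < row a → row a = row b → a = b
  row_pos : ∀ a b, up a b → 0 < row a
  row_lt : ∀ a b, up a b → row a < row b
  col_ne : ∀ a b a' b', up a b → up a' b' → row a < row b' → row a' < row b → c a b = c a' b' →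
    a = a' ∧ b = b'
  pass : ∀ a b w, up a b → row a < row w → row w < row b →
    (c a b < x w ∧ (∀ y, up y w → c a b < c y w) ∧ ∀ y, up w y → c a b < c w y) ∨
    (x w < c a b ∧ (∀ y, up y w → c y w < c a b) ∧ ∀ y, up w y → c w y < c a b)
  left : ∀ w, ∃ F : Finset W, F.card ≤ 3 ∧ (∀ y, up y w → c y w < x w → y ∈ F) ∧
    ∀ y, up w y → c w y < x w → y ∈ F
  right : ∀ w, ∃ F : Finset W, F.card ≤ 3 ∧ (∀ y, up y w → x w < c y w → y ∈ F) ∧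
    ∀ y, up w y → x w < c w y → y ∈ F

/-- The position of a vertex among the moves of a sweep, counted from `1`; the row of a vertex that
is not passed is `0`. -/
def rowOf : List (W × List W × List W) → W → ℕ
  | [], _ => 0
  | e :: es, a => if a = e.1 then 1 else if rowOf es a = 0 then 0 else rowOf es a + 1

theorem rowOf_eq_zero {es : List (W × List W × List W)} {a : W} :
    rowOf es a = 0 ↔ a ∉ es.map Prod.fst := by
  induction es with
  | nil => simp [rowOf]
  | cons e es ih =>
    simp only [rowOf, List.map_cons, List.mem_cons, not_or, ← ih]
    split_ifs with h1 h2
    · simp [h1]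
    · simp [h1, h2]
    · simp [h2]

theorem rowOf_tail {e : W × List W × List W} {es : List (W × List W × List W)}
    (hn : ((e :: es).map Prod.fst).Nodup) (a : W) : rowOf es a = rowOf (e :: es) a - 1 := by
  simp only [List.map_cons, List.nodup_cons] at hn
  simp only [rowOf]
  split_ifs with h1 h2
  · rw [h1]; exact rowOf_eq_zero.2 hn.1
  · exact h2
  · simp

theorem rowOf_head (e : W × List W × List W) (es : List (W × List W × List W)) :
    rowOf (e :: es) e.1 = 1 := by simp [rowOf]

theorem rowOf_eq_one {e : W × List W × List W} {es : List (W × List W × List W)} {a : W}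
    (h : rowOf (e :: es) a = 1) : a = e.1 := by
  simp only [rowOf] at h
  split_ifs at h with h1 h2
  · exact h1
  · omega

theorem rowOf_inj {es : List (W × List W × List W)} (hn : (es.map Prod.fst).Nodup) {a b : W}
    (ha : 0 < rowOf es a) (h : rowOf es a = rowOf es b) : a = b := by
  induction es with
  | nil => simp [rowOf] at ha
  | cons e es ih =>
    have h1 := rowOf_tail hn a
    have h2 := rowOf_tail hn b
    by_cases h3 : rowOf (e :: es) a = 1
    · exact (rowOf_eq_one h3).trans (rowOf_eq_one (h.symm.trans h3)).symm
    · exact ih (List.nodup_cons.1 (by simpa using hn)).2 (by omega) (by omega)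

/-- The strands occurring in a sweep: those of the initial word and those leaving a vertex. -/
def Strand (w : List (W × W)) (es : List (W × List W × List W)) (a b : W) : Prop :=
  (a, b) ∈ w ∨ ∃ ins outs, (a, ins, outs) ∈ es ∧ b ∈ outs

theorem Strand.cases {l r : List (W × W)} {v : W} {ins outs : List W}
    {es : List (W × List W × List W)} {a b : W}
    (h : Strand (l ++ (ins.map fun a => (a, v)) ++ r) ((v, ins, outs) :: es) a b) :
    (a ∈ ins ∧ b = v) ∨ Strand (l ++ (outs.map fun b => (v, b)) ++ r) es a b := by
  rcases h with h | ⟨ins', outs', h, hb⟩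
  · simp only [List.mem_append, List.mem_map, Prod.mk.injEq] at h
    rcases h with (h | ⟨y, hy, rfl, rfl⟩) | h
    · exact .inr (.inl (by simp [h]))
    · exact .inl ⟨hy, rfl⟩
    · exact .inr (.inl (by simp [h]))
  · rcases List.mem_cons.1 h with h | h
    · obtain ⟨rfl, rfl, rfl⟩ := by simpa using h
      exact .inr (.inl (by simp [hb]))
    · exact .inr (.inr ⟨_, _, h, hb⟩)

theorem tails_step {l r : List (W × W)} {v : W} {ins outs : List W}
    {es : List (W × List W × List W)}
    (hn : (((v, ins, outs) :: es).map Prod.fst).Nodup)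
    (ht : ∀ p ∈ l ++ (ins.map fun a => (a, v)) ++ r, p.1 ∉ ((v, ins, outs) :: es).map Prod.fst) :
    ∀ p ∈ l ++ (outs.map fun b => (v, b)) ++ r, p.1 ∉ es.map Prod.fst := by
  intro p hp
  have h : ∀ p ∈ l ++ (ins.map fun a => (a, v)) ++ r, p.1 ∉ es.map Prod.fst := fun p hp h =>
    ht p hp (by rw [List.map_cons]; exact List.mem_cons_of_mem _ h)
  simp only [List.mem_append, List.mem_map] at hp
  rcases hp with (hp | ⟨y, -, rfl⟩) | hp
  · exact h p (by simp [hp])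
  · exact (List.nodup_cons.1 (by simpa using hn : (v :: es.map Prod.fst).Nodup)).1
  · exact h p (by simp [hp])

theorem Good.strand_row {c : W × W → ℚ} {x : W → ℚ} {w : List (W × W)}
    {es : List (W × List W × List W)} (h : Good c x w es) (hn : (es.map Prod.fst).Nodup)
    (ht : ∀ p ∈ w, p.1 ∉ es.map Prod.fst) {a b : W} (hab : Strand w es a b) :
    rowOf es a < rowOf es b ∧ ∃ ins outs, (b, ins, outs) ∈ es ∧ a ∈ ins := by
  induction es generalizing w with
  | nil =>
    obtain rfl : w = [] := h
    rcases hab with h | ⟨_, _, h, -⟩ <;> simp at h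
  | cons e es ih =>
    obtain ⟨v, ins, outs⟩ := e
    obtain ⟨l, r, rfl, -, -, -, -, -, -, -, -, h⟩ := h
    rcases hab.cases with ⟨ha, rfl⟩ | hab
    · have h0 : rowOf ((b, ins, outs) :: es) a = 0 := rowOf_eq_zero.2 (ht (a, b) (by simp [ha]))
      have h1 := rowOf_head (b, ins, outs) es
      exact ⟨by simp only at h1; omega, _, _, List.mem_cons_self, ha⟩
    · obtain ⟨h1, _, _, h2, h3⟩ := ih h (List.nodup_cons.1 (by simpa using hn)).2
        (tails_step hn ht) hab
      have ha := rowOf_tail hn a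
      have hb := rowOf_tail hn b
      exact ⟨by omega, _, _, List.mem_cons_of_mem _ h2, h3⟩

theorem Good.strand_of_mem {c : W × W → ℚ} {x : W → ℚ} {w : List (W × W)}
    {es : List (W × List W × List W)} (h : Good c x w es) {a b : W} {ins outs : List W}
    (hb : (b, ins, outs) ∈ es) (ha : a ∈ ins) : Strand w es a b := by
  induction es generalizing w with
  | nil => simp at hb
  | cons e es ih =>
    obtain ⟨v, ins', outs'⟩ := e
    obtain ⟨l, r, rfl, -, -, -, -, -, -, -, -, h⟩ := h
    rcases List.mem_cons.1 hb with hb | hb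
    · obtain ⟨rfl, rfl, rfl⟩ := by simpa using hb
      exact .inl (by simp [ha])
    · rcases ih h hb with h | ⟨i, o, h1, h2⟩
      · simp only [List.mem_append, List.mem_map, Prod.mk.injEq] at h
        rcases h with (h | ⟨y, hy, rfl, rfl⟩) | h
        · exact .inl (by simp [h])
        · exact .inr ⟨_, _, List.mem_cons_self, hy⟩
        · exact .inl (by simp [h])
      · exact .inr ⟨i, o, List.mem_cons_of_mem _ h1, h2⟩

theorem eq_of_pairwise_lt {α : Type*} {f : α → ℚ} {l : List α}
    (h : l.Pairwise (fun p q => f p < f q)) {p q : α} (hp : p ∈ l) (hq : q ∈ l) (e : f p = f q) :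
    p = q := by
  induction l with
  | nil => simp at hp
  | cons a l ih =>
    rw [List.pairwise_cons] at h
    rcases List.mem_cons.1 hp with rfl | hp' <;> rcases List.mem_cons.1 hq with rfl | hq'
    · rfl
    · exact absurd e (h.1 _ hq').ne
    · exact absurd e (h.1 _ hp').ne'
    · exact ih h.2 hp' hq'

theorem Good.col_ne {c : W × W → ℚ} {x : W → ℚ} {w : List (W × W)}
    {es : List (W × List W × List W)} (h : Good c x w es) (hn : (es.map Prod.fst).Nodup)
    (ht : ∀ p ∈ w, p.1 ∉ es.map Prod.fst) {a b a' b' : W} (hab : Strand w es a b)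
    (hab' : Strand w es a' b') (h1 : rowOf es a < rowOf es b') (h2 : rowOf es a' < rowOf es b)
    (he : c (a, b) = c (a', b')) : a = a' ∧ b = b' := by
  induction es generalizing w with
  | nil => simp [rowOf] at h1
  | cons e es ih =>
    have hr := (h.strand_row hn ht hab).1
    have hr' := (h.strand_row hn ht hab').1
    obtain ⟨v, ins, outs⟩ := e
    obtain ⟨l, r, rfl, hw, -, -, -, -, -, -, -, h⟩ := h
    by_cases h0 : rowOf ((v, ins, outs) :: es) a = 0 ∧ rowOf ((v, ins, outs) :: es) a' = 0
    · have key : ∀ {a b}, Strand (l ++ (ins.map fun a => (a, v)) ++ r) ((v, ins, outs) :: es) a b →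
          rowOf ((v, ins, outs) :: es) a = 0 → (a, b) ∈ l ++ (ins.map fun a => (a, v)) ++ r := by
        intro a b hab h0
        rcases hab with h | ⟨i, o, h, -⟩
        · exact h
        · exact absurd (List.mem_map_of_mem (f := Prod.fst) h) (rowOf_eq_zero.1 h0)
      simpa using eq_of_pairwise_lt hw (key hab h0.1) (key hab' h0.2) he
    · have ea := rowOf_tail hn a
      have eb := rowOf_tail hn b
      have ea' := rowOf_tail hn a'
      have eb' := rowOf_tail hn b'
      have hv : rowOf ((v, ins, outs) :: es) v = 1 := rowOf_head (v, ins, outs) es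
      refine ih h (List.nodup_cons.1 (by simpa using hn)).2 (tails_step hn ht)
        (hab.cases.resolve_left ?_) (hab'.cases.resolve_left ?_) (by omega) (by omega)
      · rintro ⟨-, rfl⟩
        omega
      · rintro ⟨-, rfl⟩
        omega

theorem Good.pass {c : W × W → ℚ} {x : W → ℚ} {w : List (W × W)}
    {es : List (W × List W × List W)} (h : Good c x w es) (hn : (es.map Prod.fst).Nodup)
    (ht : ∀ p ∈ w, p.1 ∉ es.map Prod.fst) {a b v : W} {ins outs : List W} (hab : Strand w es a b)
    (hv : (v, ins, outs) ∈ es) (h1 : rowOf es a < rowOf es v) (h2 : rowOf es v < rowOf es b) :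
    (c (a, b) < x v ∧ (∀ y ∈ ins, c (a, b) < c (y, v)) ∧ ∀ y ∈ outs, c (a, b) < c (v, y)) ∨
    (x v < c (a, b) ∧ (∀ y ∈ ins, c (y, v) < c (a, b)) ∧ ∀ y ∈ outs, c (v, y) < c (a, b)) := by
  induction es generalizing w with
  | nil => simp at hv
  | cons e es ih =>
    have hr := (h.strand_row hn ht hab).1
    obtain ⟨v', ins', outs'⟩ := e
    obtain ⟨l, r, rfl, hw, hw', hl, hrr, -, -, -, -, h⟩ := h
    have hv' : rowOf ((v', ins', outs') :: es) v' = 1 := rowOf_head (v', ins', outs') es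
    have ea := rowOf_tail hn a
    have eb := rowOf_tail hn b
    have ev := rowOf_tail hn v
    have hab' := hab.cases.resolve_left (by rintro ⟨-, rfl⟩; omega)
    rcases List.mem_cons.1 hv with hv | hv
    · obtain ⟨rfl, rfl, rfl⟩ := by simpa using hv
      have hbv : b ≠ v := by rintro rfl; omega
      have ha : rowOf ((v, ins, outs) :: es) a = 0 := by omega
      have hm : (a, b) ∈ l ∨ (a, b) ∈ r := by
        rcases hab with h | ⟨i, o, h, -⟩
        · simp only [List.mem_append, List.mem_map, Prod.mk.injEq] at h
          rcases h with (h | ⟨y, hy, rfl, rfl⟩) | h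
          · exact .inl h
          · exact absurd rfl hbv
          · exact .inr h
        · exact absurd (List.mem_map_of_mem (f := Prod.fst) h) (rowOf_eq_zero.1 ha)
      simp only [List.append_assoc, List.pairwise_append, List.mem_append, List.mem_map] at hw hw'
      rcases hm with hm | hm
      · exact .inl ⟨hl _ hm, fun y hy => hw.2.2 _ hm _ (.inl ⟨y, hy, rfl⟩),
          fun y hy => hw'.2.2 _ hm _ (.inl ⟨y, hy, rfl⟩)⟩
      · exact .inr ⟨hrr _ hm, fun y hy => hw.2.1.2.2 _ ⟨y, hy, rfl⟩ _ hm,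
          fun y hy => hw'.2.1.2.2 _ ⟨y, hy, rfl⟩ _ hm⟩
    · have hvv : 0 < rowOf es v := by
        rw [Nat.pos_iff_ne_zero, Ne, rowOf_eq_zero, not_not]
        exact List.mem_map_of_mem (f := Prod.fst) hv
      exact ih h (List.nodup_cons.1 (by simpa using hn)).2 (tails_step hn ht) hab' hv
        (by omega) (by omega)

theorem Good.sides {c : W × W → ℚ} {x : W → ℚ} {w : List (W × W)}
    {es : List (W × List W × List W)} (h : Good c x w es) {v : W} {ins outs : List W}
    (hv : (v, ins, outs) ∈ es) :
    (∃ F : Finset W, F.card ≤ 3 ∧ (∀ y ∈ ins, c (y, v) < x v → y ∈ F) ∧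
        ∀ y ∈ outs, c (v, y) < x v → y ∈ F) ∧
      (∃ F : Finset W, F.card ≤ 3 ∧ (∀ y ∈ ins, x v < c (y, v) → y ∈ F) ∧
        ∀ y ∈ outs, x v < c (v, y) → y ∈ F) ∧
      (ins ≠ [] → ∃ y ∈ ins, c (y, v) = x v) ∧ (outs ≠ [] → ∃ y ∈ outs, c (v, y) = x v) := by
  induction es generalizing w with
  | nil => simp at hv
  | cons e es ih =>
    obtain ⟨v', ins', outs'⟩ := e
    obtain ⟨l, r, rfl, -, -, -, -, h1, h2, h3, h4, h⟩ := h
    rcases List.mem_cons.1 hv with hv | hv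
    · obtain ⟨rfl, rfl, rfl⟩ := by simpa using hv
      exact ⟨h1, h2, h3, h4⟩
    · exact ih h hv

theorem mem_unique {es : List (W × List W × List W)} (hn : (es.map Prod.fst).Nodup) {v : W}
    {i o i' o' : List W} (h : (v, i, o) ∈ es) (h' : (v, i', o') ∈ es) : i = i' ∧ o = o' := by
  have := List.inj_on_of_nodup_map hn h h' rfl
  simpa using this

/-- A finite set of rational numbers can be moved to integers by an order-preserving map. -/
theorem exists_rank (S : Set ℚ) (hS : S.Finite) :
    ∃ ρ : ℚ → ℤ, ∀ a ∈ S, ∀ b ∈ S, (ρ a < ρ b ↔ a < b) ∧ (ρ a = ρ b ↔ a = b) := by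
  classical
  have key : ∀ a ∈ S, ∀ b ∈ S, a < b → ((hS.toFinset.filter (· < a)).card : ℤ) <
      ((hS.toFinset.filter (· < b)).card : ℤ) := by
    intro a ha b hb h
    have : (hS.toFinset.filter (· < a)) ⊂ (hS.toFinset.filter (· < b)) := by
      rw [Finset.ssubset_iff_of_subset]
      · exact ⟨a, by simp [ha, h], by simp⟩
      · intro t ht
        simp only [Finset.mem_filter] at ht ⊢
        exact ⟨ht.1, ht.2.trans h⟩
    exact_mod_cast Finset.card_lt_card this
  refine ⟨fun a => (hS.toFinset.filter (· < a)).card, fun a ha b hb => ?_⟩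
  rcases lt_trichotomy a b with h | rfl | h
  · have := key a ha b hb h
    exact ⟨by simp only [this, h], by simp only [this.ne, h.ne]⟩
  · simp
  · have := key b hb a ha h
    exact ⟨by simp only [this.asymm, h.asymm], by simp only [this.ne', h.ne']⟩

/-- Rows are the positions in the sweep; rational columns are turned into integers by their rank. -/
theorem exists_layout [Finite W] {es : List (W × List W × List W)} (hs : Sweep [] es)
    (hr : ∀ e ∈ es, Room e) (hn : (es.map Prod.fst).Nodup) :
    ∃ L : Layout W, (∀ a b, L.up a b ↔ ∃ ins outs, (a, ins, outs) ∈ es ∧ b ∈ outs) ∧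
      (∀ a b, L.up a b ↔ ∃ ins outs, (b, ins, outs) ∈ es ∧ a ∈ ins) ∧
      (∀ v, 0 < L.row v ↔ v ∈ es.map Prod.fst) ∧
      ∀ v ins outs, (v, ins, outs) ∈ es → (ins ≠ [] → ∃ y ∈ ins, L.c y v = L.x v) ∧
        (outs ≠ [] → ∃ y ∈ outs, L.c v y = L.x v) := by
  obtain ⟨c, x, -, -, hg⟩ := exists_good hs hr hn (by simp) (fun _ => 0) (fun _ => 0) (by simp)
  have ht : ∀ p ∈ ([] : List (W × W)), p.1 ∉ es.map Prod.fst := by simp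
  obtain ⟨ρ, hρ⟩ := exists_rank (Set.range c ∪ Set.range x) ((Set.finite_range c).union
    (Set.finite_range x))
  have mc : ∀ p, c p ∈ Set.range c ∪ Set.range x := fun p => .inl ⟨p, rfl⟩
  have mx : ∀ v, x v ∈ Set.range c ∪ Set.range x := fun v => .inr ⟨v, rfl⟩
  have cc : ∀ p q, ρ (c p) < ρ (c q) ↔ c p < c q := fun p q => (hρ _ (mc p) _ (mc q)).1
  have cx : ∀ p q, ρ (c p) < ρ (x q) ↔ c p < x q := fun p q => (hρ _ (mc p) _ (mx q)).1
  have xc : ∀ p q, ρ (x p) < ρ (c q) ↔ x p < c q := fun p q => (hρ _ (mx p) _ (mc q)).1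
  have ecc : ∀ p q, ρ (c p) = ρ (c q) ↔ c p = c q := fun p q => (hρ _ (mc p) _ (mc q)).2
  have pos : ∀ v, 0 < rowOf es v ↔ v ∈ es.map Prod.fst := fun v => by
    rw [Nat.pos_iff_ne_zero, Ne, rowOf_eq_zero, not_not]
  have inn : ∀ a b, Strand [] es a b ↔ ∃ ins outs, (b, ins, outs) ∈ es ∧ a ∈ ins := fun a b =>
    ⟨fun h => (hg.strand_row hn ht h).2, fun ⟨i, o, h1, h2⟩ => hg.strand_of_mem h1 h2⟩
  have out : ∀ a b, Strand [] es a b ↔ ∃ ins outs, (a, ins, outs) ∈ es ∧ b ∈ outs := fun a b => by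
    simp [Strand]
  have mem_in : ∀ {y w i o}, (w, i, o) ∈ es → Strand [] es y w → y ∈ i := by
    intro y w i o h hy
    obtain ⟨i', o', h1, h2⟩ := (inn _ _).1 hy
    rwa [(mem_unique hn h h1).1]
  have mem_out : ∀ {y w i o}, (w, i, o) ∈ es → Strand [] es w y → y ∈ o := by
    intro y w i o h hy
    obtain ⟨i', o', h1, h2⟩ := (out _ _).1 hy
    rwa [(mem_unique hn h h1).2]
  have hrow : ∀ a b, Strand [] es a b → 0 < rowOf es a := fun a b h => by
    obtain ⟨i, o, h1, -⟩ := (out _ _).1 h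
    exact (pos a).2 (List.mem_map_of_mem (f := Prod.fst) h1)
  have hev : ∀ {w}, 0 < rowOf es w → ∃ i o, (w, i, o) ∈ es := by
    intro w hw
    obtain ⟨⟨_, i, o⟩, h, rfl⟩ := List.mem_map.1 ((pos w).1 hw)
    exact ⟨i, o, h⟩
  refine ⟨{
    up := Strand [] es
    x := fun v => ρ (x v)
    row := rowOf es
    c := fun a b => ρ (c (a, b))
    row_inj := fun a b ha h => rowOf_inj hn ha h
    row_pos := hrow
    row_lt := fun a b h => (hg.strand_row hn ht h).1
    col_ne := fun a b a' b' h h' h1 h2 he => hg.col_ne hn ht h h' h1 h2 ((ecc _ _).1 he)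
    pass := ?_
    left := ?_
    right := ?_ }, out, inn, pos, ?_⟩
  · intro a b w h h1 h2
    obtain ⟨i, o, hw⟩ := hev (Nat.zero_lt_of_lt h1)
    simp only [cc, cx, xc]
    rcases hg.pass hn ht h hw h1 h2 with ⟨p1, p2, p3⟩ | ⟨p1, p2, p3⟩
    · exact .inl ⟨p1, fun y hy => p2 y (mem_in hw hy), fun y hy => p3 y (mem_out hw hy)⟩
    · exact .inr ⟨p1, fun y hy => p2 y (mem_in hw hy), fun y hy => p3 y (mem_out hw hy)⟩
  · intro w
    simp only [cx]
    by_cases hw : 0 < rowOf es w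
    · obtain ⟨i, o, hw⟩ := hev hw
      obtain ⟨⟨F, F1, F2, F3⟩, -⟩ := hg.sides hw
      exact ⟨F, F1, fun y hy => F2 y (mem_in hw hy), fun y hy => F3 y (mem_out hw hy)⟩
    · exact ⟨∅, by simp, fun y hy => absurd (Nat.zero_lt_of_lt (hg.strand_row hn ht hy).1) hw,
        fun y hy => absurd (hrow _ _ hy) hw⟩
  · intro w
    simp only [xc]
    by_cases hw : 0 < rowOf es w
    · obtain ⟨i, o, hw⟩ := hev hw
      obtain ⟨-, ⟨F, F1, F2, F3⟩, -⟩ := hg.sides hw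
      exact ⟨F, F1, fun y hy => F2 y (mem_in hw hy), fun y hy => F3 y (mem_out hw hy)⟩
    · exact ⟨∅, by simp, fun y hy => absurd (Nat.zero_lt_of_lt (hg.strand_row hn ht hy).1) hw,
        fun y hy => absurd (hrow _ _ hy) hw⟩
  · intro v i o hv
    obtain ⟨-, -, h1, h2⟩ := hg.sides hv
    refine ⟨fun h => ?_, fun h => ?_⟩
    · obtain ⟨y, hy, e⟩ := h1 h
      exact ⟨y, hy, by simp only [e]⟩
    · obtain ⟨y, hy, e⟩ := h2 h
      exact ⟨y, hy, by simp only [e]⟩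

end LayoutSection

/-! ### Phantom vertices on caps -/

section Phantom

variable {V : Type*} [DecidableEq V] {G : SimpleGraph V}

/-- A move of the upward sweep, with the edge of a `cap u t` subdivided at a phantom vertex
`Sum.inr u`, becomes one or three moves that pass one vertex each. -/
def Ev.split : Ev V → List ((V ⊕ V) × List (V ⊕ V) × List (V ⊕ V))
  | .vert v ins outs => [(.inl v, ins.map .inl, outs.map .inl)]
  | .cap u t insu inst => [(.inl u, insu.map .inl, [.inr u]), (.inl t, inst.map .inl, [.inr u]),
      (.inr u, [.inl u, .inl t], [])]

theorem Run.sweep {w : List (V × V)} {es : List (Ev V)} (h : Run w es []) :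
    Sweep (w.map (Prod.map Sum.inl Sum.inl)) (es.flatMap Ev.split) := by
  induction es generalizing w with
  | nil => cases h; rfl
  | cons e es ih =>
    obtain ⟨l, r, rfl, h⟩ := h
    have := ih h
    cases e with
    | vert v ins outs =>
      refine ⟨l.map (Prod.map Sum.inl Sum.inl), r.map (Prod.map Sum.inl Sum.inl), ?_, ?_⟩
      · simp [Ev.dom, Function.comp_def]
      · simpa [Ev.cod, Function.comp_def, List.flatMap_def] using this
    | cap u t insu inst =>
      refine ⟨l.map (Prod.map Sum.inl Sum.inl),
        (inst.map fun a => (.inl a, .inl t)) ++ r.map (Prod.map Sum.inl Sum.inl), ?_, ?_⟩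
      · simp [Ev.dom, Function.comp_def]
      refine ⟨l.map (Prod.map Sum.inl Sum.inl) ++ [(.inl u, .inr u)],
        r.map (Prod.map Sum.inl Sum.inl), ?_, ?_⟩
      · simp [Function.comp_def]
      refine ⟨l.map (Prod.map Sum.inl Sum.inl), r.map (Prod.map Sum.inl Sum.inl), ?_, ?_⟩
      · simp
      · simpa [Ev.cod, List.flatMap_def] using this

theorem mem_split {e : Ev V} {a : V ⊕ V} (h : a ∈ e.split.map Prod.fst) :
    ∃ v ∈ e.verts, a = .inl v ∨ a = .inr v := by
  cases e with
  | vert v ins outs => simpa [Ev.split, Ev.verts] using Or.inl h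
  | cap u t insu inst =>
    simp only [Ev.split, List.map_cons, List.map_nil, List.mem_cons, List.not_mem_nil,
      or_false] at h
    rcases h with rfl | rfl | rfl <;> simp [Ev.verts]

theorem nodup_split {es : List (Ev V)} (h : (evVerts es).Nodup) :
    ((es.flatMap Ev.split).map Prod.fst).Nodup := by
  induction es with
  | nil => simp
  | cons e es ih =>
    rw [evVerts_cons, List.nodup_append] at h
    rw [List.flatMap_cons, List.map_append, List.nodup_append]
    refine ⟨?_, ih h.2.1, ?_⟩
    · cases e with
      | vert v ins outs => simp [Ev.split]
      | cap u t insu inst => simpa [Ev.split, Ev.verts] using h.1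
    · rintro a ha _ hb rfl
      obtain ⟨v, hv, hav⟩ := mem_split ha
      rw [List.map_flatMap, List.mem_flatMap] at hb
      obtain ⟨e', he', hb⟩ := hb
      obtain ⟨v', hv', hav'⟩ := mem_split hb
      obtain rfl : v = v' := by
        rcases hav with rfl | rfl <;> rcases hav' with hav' | hav' <;> cases hav' <;> rfl
      exact h.2.2 v hv v (mem_evVerts.2 ⟨e', he', hv'⟩) rfl

theorem Ev.Fit.room {e : Ev V} (h : e.Fit G) : ∀ s ∈ e.split, Room s := by
  cases e with
  | vert v ins outs =>
    intro s hs
    obtain rfl := List.mem_singleton.1 hs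
    obtain ⟨⟨h1, -⟩, h2, h3, h4⟩ := h
    refine ⟨?_, by simpa using h2, by simpa using h3, by simpa using h4⟩
    rw [← List.map_append]
    exact h1.map Sum.inl_injective
  | cap u t insu inst =>
    obtain ⟨⟨h1, h2⟩, ⟨h3, h4⟩, h5, h6, h7, h8⟩ := h
    have hut : u ≠ t := ((h2 t).1 (by simp)).ne
    have key : ∀ (w t : V) (l : List V), (l ++ [t]).Nodup → (l ++ [t]).length ≤ 8 →
        Room ((.inl w, l.map .inl, [.inr u]) : (V ⊕ V) × List (V ⊕ V) × List (V ⊕ V)) := by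
      intro w t l h1 h2
      refine ⟨?_, by simpa using h2, by simp, by simp⟩
      simp only [List.nodup_append] at h1 ⊢
      exact ⟨h1.1.map Sum.inl_injective, by simp, by simp⟩
    intro s hs
    simp only [Ev.split, List.mem_cons, List.not_mem_nil, or_false] at hs
    rcases hs with rfl | rfl | rfl
    · exact key _ _ _ h1 h5
    · exact key _ _ _ h3 h6
    · exact ⟨by simpa using hut, by simp, by simp, by simp⟩

/-- The edge `u t` is represented by two strands that meet at the phantom vertex `h`. -/
structure Layout.Cap (L : Layout (V ⊕ V)) (h u t : V) : Prop where
  up_left : L.up (.inl u) (.inr h)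
  up_right : L.up (.inl t) (.inr h)
  col_left : L.c (.inl u) (.inr h) = L.x (.inl u)
  col_right : L.c (.inl t) (.inr h) = L.x (.inl t)
  mid : L.x (.inr h) = L.x (.inl u) ∨ L.x (.inr h) = L.x (.inl t)
  only : ∀ y, L.up y (.inr h) → y = .inl u ∨ y = .inl t
  ne : u ≠ t

/-- Every planar graph of maximum degree at most eight has a layout, possibly with some edges
subdivided by phantom vertices. -/
theorem exists_plan [Finite V] (hp : GraphPlanar G) (hd : MaxDegLE G 8) :
    ∃ L : Layout (V ⊕ V), (∀ v, 0 < L.row (.inl v)) ∧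
      (∀ h y, ¬ L.up (.inr h) y) ∧
      ∀ u v, G.Adj u v → L.up (.inl u) (.inl v) ∨ L.up (.inl v) (.inl u) ∨
        (∃ h, L.Cap h u v) ∨ ∃ h, L.Cap h v u := by
  obtain ⟨Θ, hR⟩ := exists_rotation hp
  obtain ⟨evs, h1, h2, h3, h4⟩ := exists_run hR hd
  obtain ⟨L, l1, l2, l3, l4⟩ := exists_layout h1.sweep (fun s hs => by
    obtain ⟨e, he, hs⟩ := List.mem_flatMap.1 hs
    exact (h4 e he).room s hs) (nodup_split h2)
  have hn := nodup_split h2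
  have hmem : ∀ {e s}, e ∈ evs → s ∈ e.split → s ∈ evs.flatMap Ev.split := fun he hs =>
    List.mem_flatMap.2 ⟨_, he, hs⟩
  -- the phantom vertex of a cap, and the properties of its two strands
  have hcap : ∀ {u t insu inst}, Ev.cap u t insu inst ∈ evs → L.Cap u u t := by
    intro u t insu inst he
    have m1 := hmem (s := (.inl u, insu.map .inl, [.inr u])) he (by simp [Ev.split])
    have m2 := hmem (s := (.inl t, inst.map .inl, [.inr u])) he (by simp [Ev.split])
    have m3 := hmem (s := (.inr u, [.inl u, .inl t], [])) he (by simp [Ev.split])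
    refine ⟨(l1 _ _).2 ⟨_, _, m1, by simp⟩, (l1 _ _).2 ⟨_, _, m2, by simp⟩, ?_, ?_, ?_, ?_, ?_⟩
    · obtain ⟨y, hy, e⟩ := (l4 _ _ _ m1).2 (by simp)
      rwa [List.mem_singleton.1 hy] at e
    · obtain ⟨y, hy, e⟩ := (l4 _ _ _ m2).2 (by simp)
      rwa [List.mem_singleton.1 hy] at e
    · obtain ⟨y, hy, e⟩ := (l4 _ _ _ m3).1 (by simp)
      have c1 : L.c (.inl u) (.inr u) = L.x (.inl u) := by
        obtain ⟨y, hy, e⟩ := (l4 _ _ _ m1).2 (by simp)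
        rwa [List.mem_singleton.1 hy] at e
      have c2 : L.c (.inl t) (.inr u) = L.x (.inl t) := by
        obtain ⟨y, hy, e⟩ := (l4 _ _ _ m2).2 (by simp)
        rwa [List.mem_singleton.1 hy] at e
      simp only [List.mem_cons, List.not_mem_nil, or_false] at hy
      rcases hy with rfl | rfl
      · exact .inl (e.symm.trans c1)
      · exact .inr (e.symm.trans c2)
    · intro y hy
      obtain ⟨i, o, m, hy⟩ := (l2 _ _).1 hy
      rw [(mem_unique hn m m3).1] at hy
      simpa using hy
    · exact (((h4 _ he).1.2 t).1 (by simp)).ne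
  refine ⟨L, ?_, ?_, ?_⟩
  · intro v
    rw [l3]
    obtain ⟨e, he, hv⟩ := mem_evVerts.1 (h3 v)
    cases e with
    | vert v' ins outs =>
      obtain rfl : v = v' := by simpa [Ev.verts] using hv
      exact List.mem_map_of_mem (f := Prod.fst)
        (hmem (s := (.inl v, ins.map .inl, outs.map .inl)) he (by simp [Ev.split]))
    | cap u t insu inst =>
      simp only [Ev.verts, List.mem_cons, List.not_mem_nil, or_false] at hv
      rcases hv with rfl | rfl
      · exact List.mem_map_of_mem (f := Prod.fst)
          (hmem (s := (.inl v, insu.map .inl, [.inr v])) he (by simp [Ev.split]))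
      · exact List.mem_map_of_mem (f := Prod.fst)
          (hmem (s := (.inl v, inst.map .inl, [.inr u])) he (by simp [Ev.split]))
  · intro h y hy
    obtain ⟨i, o, m, ho⟩ := (l1 _ _).1 hy
    obtain ⟨e, he, m⟩ := List.mem_flatMap.1 m
    cases e with
    | vert v' ins outs => simp [Ev.split] at m
    | cap u t insu inst =>
      simp only [Ev.split, List.mem_cons, List.not_mem_nil, or_false, Prod.mk.injEq, reduceCtorEq,
        false_and, false_or] at m
      simp [m.2.2] at ho
  · intro u v huv
    obtain ⟨e, he, hv⟩ := mem_evVerts.1 (h3 u)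
    cases e with
    | vert v' ins outs =>
      obtain rfl : u = v' := by simpa [Ev.verts] using hv
      have m := hmem (s := (.inl u, ins.map .inl, outs.map .inl)) he (by simp [Ev.split])
      rcases List.mem_append.1 (((h4 _ he).1.2 v).2 huv) with h | h
      · exact .inr (.inl ((l2 _ _).2 ⟨_, _, m, by simpa using h⟩))
      · exact .inl ((l1 _ _).2 ⟨_, _, m, by simpa using h⟩)
    | cap u' t insu inst =>
      simp only [Ev.verts, List.mem_cons, List.not_mem_nil, or_false] at hv
      rcases hv with rfl | rfl
      · rcases List.mem_append.1 (((h4 _ he).1.2 v).2 huv) with h | h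
        · have m := hmem (s := (.inl u, insu.map .inl, [.inr u])) he (by simp [Ev.split])
          exact .inr (.inl ((l2 _ _).2 ⟨_, _, m, by simpa using h⟩))
        · obtain rfl := List.mem_singleton.1 h
          exact .inr (.inr (.inl ⟨_, hcap he⟩))
      · rcases List.mem_append.1 (((h4 _ he).2.1.2 v).2 huv) with h | h
        · have m := hmem (s := (.inl u, inst.map .inl, [.inr u'])) he (by simp [Ev.split])
          exact .inr (.inl ((l2 _ _).2 ⟨_, _, m, by simpa using h⟩))
        · obtain rfl := List.mem_singleton.1 h
          exact .inr (.inr (.inr ⟨_, hcap he⟩))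

end Phantom

/-! ### Simple polylines with three segments -/

section Poly

/-- Twice the signed area of the triangle `P Q R`. -/
def area (P Q R : ℝ × ℝ) : ℝ := (Q.1 - P.1) * (R.2 - P.2) - (Q.2 - P.2) * (R.1 - P.1)

theorem not_collinear_of_area {P Q R : ℝ × ℝ} (h : area P Q R ≠ 0) :
    ¬ Collinear ℝ ({P, Q, R} : Set (ℝ × ℝ)) := by
  intro hc
  obtain ⟨v, hv⟩ := (collinear_iff_of_mem (p₀ := P) (by simp)).1 hc
  obtain ⟨r, hr⟩ := hv Q (by simp)
  obtain ⟨s, hs⟩ := hv R (by simp)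
  apply h
  rw [hr, hs]
  simp only [area, vadd_eq_add, Prod.fst_add, Prod.snd_add, Prod.smul_fst, Prod.smul_snd,
    smul_eq_mul]
  ring

theorem eq_of_mem_segments {P Q R z : ℝ × ℝ} (h : area P Q R ≠ 0) (h1 : z ∈ segment ℝ P Q)
    (h2 : z ∈ segment ℝ Q R) : z = Q := by
  rw [segment_eq_image'] at h1 h2
  obtain ⟨s, -, hs⟩ := h1
  obtain ⟨t, -, ht⟩ := h2
  have e1 := congrArg Prod.fst (hs.trans ht.symm)
  have e2 := congrArg Prod.snd (hs.trans ht.symm)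
  simp only [Prod.fst_add, Prod.snd_add, Prod.smul_fst, Prod.smul_snd, smul_eq_mul, Prod.fst_sub,
    Prod.snd_sub] at e1 e2
  have ht0 : t * area P Q R = 0 := by
    simp only [area]
    linear_combination (Q.2 - P.2) * e1 - (Q.1 - P.1) * e2
  have : t = 0 := by simpa [h] using ht0
  rw [← ht, this]
  simp

namespace Polyline

theorem simple_of {P : Polyline} (h0 : ∀ i < P.len, P.pt i ≠ P.pt (i + 1))
    (h1 : ∀ i, i + 1 < P.len → ∀ z, z ∈ segment ℝ (P.pt i) (P.pt (i + 1)) →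
      z ∈ segment ℝ (P.pt (i + 1)) (P.pt (i + 2)) → z = P.pt (i + 1))
    (h2 : ∀ i j, i + 1 < j → j < P.len → ∀ z, z ∈ segment ℝ (P.pt i) (P.pt (i + 1)) →
      z ∉ segment ℝ (P.pt j) (P.pt (j + 1))) : P.Simple := by
  have hseg : ∀ (i : ℕ) (t : ℝ), 0 ≤ t → t ≤ 1 →
      P.param (i + t) ∈ segment ℝ (P.pt i) (P.pt (i + 1)) := fun i t a b => by
    rw [mem_segment_iff]; exact ⟨t, a, b, rfl⟩
  have hinj : ∀ i < P.len, ∀ t t' : ℝ, 0 ≤ t → t ≤ 1 → 0 ≤ t' → t' ≤ 1 →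
      P.param (i + t) = P.param (i + t') → t = t' := by
    intro i hi t t' a b a' b' e
    rw [param_add P i a b, param_add P i a' b'] at e
    have e' : (t - t') • (P.pt (i + 1) - P.pt i) = 0 := by
      rw [sub_smul, sub_eq_zero]
      exact add_left_cancel e
    rcases smul_eq_zero.1 e' with h | h
    · exact sub_eq_zero.1 h
    · exact absurd (sub_eq_zero.1 h).symm (h0 i hi)
  have hdec : ∀ s ∈ Set.Icc (0 : ℝ) P.len, ∃ i < P.len, ∃ t : ℝ, 0 ≤ t ∧ t ≤ 1 ∧ s = i + t := by
    rintro s ⟨a, b⟩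
    have hp := P.len_pos
    rcases b.lt_or_eq with b | rfl
    · refine ⟨⌊s⌋₊, (Nat.floor_lt a).2 b, s - ⌊s⌋₊, by linarith [Nat.floor_le a],
        by linarith [Nat.lt_floor_add_one s], by ring⟩
    · refine ⟨P.len - 1, by omega, 1, zero_le_one, le_rfl, ?_⟩
      have : ((P.len - 1 + 1 : ℕ) : ℝ) = P.len := by congr 1; omega
      rw [← this]; push_cast; ring
  have key : ∀ i j : ℕ, i ≤ j → i < P.len → j < P.len → ∀ t t' : ℝ, 0 ≤ t → t ≤ 1 → 0 ≤ t' →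
      t' ≤ 1 → P.param (i + t) = P.param (j + t') → (i : ℝ) + t = j + t' := by
    intro i j hij hi hj t t' a b a' b' e
    rcases hij.eq_or_lt with rfl | hij
    · rw [hinj i hi t t' a b a' b' e]
    rcases (Nat.succ_le_of_lt hij).eq_or_lt with h | h
    · obtain rfl : j = i + 1 := h.symm
      have hz := h1 i hj _ (hseg i t a b) (e ▸ hseg (i + 1) t' a' b')
      have t1 : t = 1 := hinj i hi t 1 a b zero_le_one le_rfl (by
        rw [hz, ← param_nat]; push_cast; rfl)
      have t0 : t' = 0 := hinj (i + 1) hj t' 0 a' b' le_rfl zero_le_one (by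
        rw [← e, hz, ← param_nat, add_zero])
      rw [t1, t0]; push_cast; ring
    · exact absurd (e ▸ hseg j t' a' b') (h2 i j h hj _ (hseg i t a b))
  intro s hs s' hs' e
  obtain ⟨i, hi, t, a, b, rfl⟩ := hdec s hs
  obtain ⟨j, hj, t', a', b', rfl⟩ := hdec s' hs'
  rcases le_total i j with h | h
  · exact key i j h hi hj t t' a b a' b' e
  · exact (key j i h hj hi t' t a' b' a b e.symm).symm

/-- The polyline through the points of a list. -/
noncomputable def ofList (l : List (ℝ × ℝ)) (h : 2 ≤ l.length) : Polyline where
  len := l.length - 1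
  len_pos := by omega
  pt := fun i => l.getD i 0

end Polyline

/-- An octilinear polyline with at most two bends through four points, the first two and the last
two of which may coincide. -/
theorem exists_polyline {P Q R S : ℝ × ℝ} (hQR : Q ≠ R) (o1 : Polyline.OctiSeg P Q)
    (o2 : Polyline.OctiSeg Q R) (o3 : Polyline.OctiSeg R S) (a1 : P = Q ∨ area P Q R ≠ 0)
    (a2 : R = S ∨ area Q R S ≠ 0)
    (hd : ∀ z, z ∈ segment ℝ P Q → z ∉ segment ℝ R S) :
    ∃ p : Polyline, p.Octilinear ∧ p.Simple ∧ p.bends ≤ 2 ∧ p.pt 0 = P ∧ p.pt p.len = S ∧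
      ∀ z ∈ p.image, z ∈ segment ℝ P Q ∨ z ∈ segment ℝ Q R ∨ z ∈ segment ℝ R S := by
  have ne1 : area P Q R ≠ 0 → P ≠ Q := by
    rintro h rfl; apply h; simp [area]
  have ne2 : area Q R S ≠ 0 → R ≠ S := by
    rintro h rfl; apply h; simp only [area]; ring
  have build : ∀ p : Polyline, p.bends ≤ 2 → p.pt 0 = P → p.pt p.len = S →
      (∀ i < p.len, p.pt i ≠ p.pt (i + 1)) →
      (∀ i < p.len, Polyline.OctiSeg (p.pt i) (p.pt (i + 1))) →
      (∀ i, i + 1 < p.len → area (p.pt i) (p.pt (i + 1)) (p.pt (i + 2)) ≠ 0) →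
      (∀ i j, i + 1 < j → j < p.len → p.pt i = P ∧ p.pt (i + 1) = Q ∧ p.pt j = R ∧
        p.pt (j + 1) = S) →
      (∀ i < p.len, ∀ z, z ∈ segment ℝ (p.pt i) (p.pt (i + 1)) →
        z ∈ segment ℝ P Q ∨ z ∈ segment ℝ Q R ∨ z ∈ segment ℝ R S) →
      ∃ p : Polyline, p.Octilinear ∧ p.Simple ∧ p.bends ≤ 2 ∧ p.pt 0 = P ∧ p.pt p.len = S ∧
        ∀ z ∈ p.image, z ∈ segment ℝ P Q ∨ z ∈ segment ℝ Q R ∨ z ∈ segment ℝ R S := by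
    intro p h1 h2 h3 h4 h5 h6 h7 h8
    refine ⟨p, ⟨⟨h4, fun i hi => not_collinear_of_area (h6 i hi)⟩, h5⟩, ?_, h1, h2, h3, ?_⟩
    · refine Polyline.simple_of h4 (fun i hi z hz hz' => eq_of_mem_segments (h6 i hi) hz hz') ?_
      intro i j hij hj z hz
      obtain ⟨e1, e2, e3, e4⟩ := h7 i j hij hj
      rw [e3, e4]
      rw [e1, e2] at hz
      exact hd z hz
    · intro z hz
      obtain ⟨i, hi, hz⟩ := (Polyline.mem_image_iff p z).1 hz
      exact h8 i hi z hz
  rcases a1 with rfl | a1 <;> rcases a2 with rfl | a2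
  · refine build (Polyline.ofList [P, R] (by simp)) (by simp [Polyline.ofList, Polyline.bends])
      rfl rfl ?_ ?_ ?_ ?_ ?_
    · intro i (hi : i < 1)
      interval_cases i
      exact hQR
    · intro i (hi : i < 1)
      interval_cases i
      exact o2
    · intro i (hi : i + 1 < 1)
      omega
    · intro i j hij (hj : j < 1)
      omega
    · intro i (hi : i < 1) z hz
      interval_cases i
      exact .inr (.inl hz)
  · refine build (Polyline.ofList [P, R, S] (by simp)) (by simp [Polyline.ofList, Polyline.bends])
      rfl rfl ?_ ?_ ?_ ?_ ?_
    · intro i (hi : i < 2)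
      interval_cases i
      exacts [hQR, ne2 a2]
    · intro i (hi : i < 2)
      interval_cases i
      exacts [o2, o3]
    · intro i (hi : i + 1 < 2)
      obtain rfl : i = 0 := by omega
      exact a2
    · intro i j hij (hj : j < 2)
      omega
    · intro i (hi : i < 2) z hz
      interval_cases i
      exacts [.inr (.inl hz), .inr (.inr hz)]
  · refine build (Polyline.ofList [P, Q, R] (by simp)) (by simp [Polyline.ofList, Polyline.bends])
      rfl rfl ?_ ?_ ?_ ?_ ?_
    · intro i (hi : i < 2)
      interval_cases i
      exacts [ne1 a1, hQR]
    · intro i (hi : i < 2)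
      interval_cases i
      exacts [o1, o2]
    · intro i (hi : i + 1 < 2)
      obtain rfl : i = 0 := by omega
      exact a1
    · intro i j hij (hj : j < 2)
      omega
    · intro i (hi : i < 2) z hz
      interval_cases i
      exacts [.inl hz, .inr (.inl hz)]
  · refine build (Polyline.ofList [P, Q, R, S] (by simp))
      (by simp [Polyline.ofList, Polyline.bends]) rfl rfl ?_ ?_ ?_ ?_ ?_
    · intro i (hi : i < 3)
      interval_cases i
      exacts [ne1 a1, hQR, ne2 a2]
    · intro i (hi : i < 3)
      interval_cases i
      exacts [o1, o2, o3]
    · intro i (hi : i + 1 < 3)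
      obtain rfl | rfl : i = 0 ∨ i = 1 := by omega
      exacts [a1, a2]
    · intro i j hij (hj : j < 3)
      obtain ⟨rfl, rfl⟩ : i = 0 ∧ j = 2 := by omega
      exact ⟨rfl, rfl, rfl, rfl⟩
    · intro i (hi : i < 3) z hz
      interval_cases i
      exacts [.inl hz, .inr (.inl hz), .inr (.inr hz)]

end Poly

/-! ### Ports at a vertex -/

section Arms

/-- The order of the ports on one side of a vertex, from bottom to top. Ports are given by whether
they lead upwards and by the signed distance of their column. A lower strand close to the vertex must
leave below one that is farther away, and an upper strand above it. -/
def Before (i : Bool) (d : ℤ) (i' : Bool) (d' : ℤ) : Prop :=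
  ((0 < d ∧ 0 < d') ∨ (d < 0 ∧ d' < 0)) ∧
    ((i = false ∧ i' = false ∧ d.natAbs < d'.natAbs) ∨ (i = false ∧ i' = true) ∨
      (i = true ∧ i' = true ∧ d'.natAbs < d.natAbs))

theorem Before.trans {i i' i'' : Bool} {d d' d'' : ℤ} (h : Before i d i' d')
    (h' : Before i' d' i'' d'') : Before i d i'' d'' := by
  obtain ⟨h1, h2⟩ := h
  obtain ⟨h1', h2'⟩ := h'
  refine ⟨by omega, ?_⟩
  rcases h2 with ⟨rfl, rfl, h2⟩ | ⟨rfl, rfl⟩ | ⟨rfl, rfl, h2⟩ <;>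
    rcases h2' with ⟨h, rfl, h2'⟩ | ⟨h, rfl⟩ | ⟨h, rfl, h2'⟩ <;> simp_all <;> omega

theorem Before.irrefl {i : Bool} {d : ℤ} : ¬ Before i d i d := by
  rintro ⟨-, h⟩
  rcases h with ⟨rfl, h, h2⟩ | ⟨rfl, h⟩ | ⟨rfl, h, h2⟩ <;> simp_all

/-- The part of a strand near one of its ends, in coordinates centred at that end: a port of slope
`s` (away from the vertex) as far as the column at distance `d`, followed by the column, upwards or
downwards according to `i`. -/
def InArm (i : Bool) (d s : ℤ) (a b : ℝ) : Prop :=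
  (((0 ≤ a ∧ a ≤ d) ∨ (d ≤ a ∧ a ≤ 0)) ∧ b = s * |a|) ∨
    (a = d ∧ ((i = true ∧ s * |(d : ℝ)| ≤ b) ∨ (i = false ∧ b ≤ s * |(d : ℝ)|)))

theorem InArm.between {i : Bool} {d s : ℤ} {a b : ℝ} (h : InArm i d s a b) :
    (0 ≤ a ∧ a ≤ d) ∨ (d ≤ a ∧ a ≤ 0) := by
  rcases h with ⟨h, -⟩ | ⟨rfl, -⟩
  · exact h
  · rcases le_total 0 (d : ℝ) with h | h
    · exact .inl ⟨h, le_rfl⟩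
    · exact .inr ⟨le_rfl, h⟩

theorem InArm.at_zero {i : Bool} {d s : ℤ} {b : ℝ} (h : InArm i d s 0 b) (hd : d ≠ 0) : b = 0 := by
  rcases h with ⟨-, h⟩ | ⟨h, -⟩
  · simpa using h
  · exact absurd (by exact_mod_cast h.symm) hd

theorem InArm.meet_of_before {i i' : Bool} {d d' s s' : ℤ} {a b : ℝ} (h : InArm i d s a b)
    (h' : InArm i' d' s' a b) (hb : Before i d i' d') (hs : s < s') : a = 0 ∧ b = 0 := by
  have hs' : (s : ℝ) < s' := by exact_mod_cast hs
  obtain ⟨hd, ho⟩ := hb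
  have hd0 : d ≠ 0 := by omega
  have hd0' : d' ≠ 0 := by omega
  have p : 0 < |(d : ℝ)| := abs_pos.2 (by exact_mod_cast hd0)
  have p' : 0 < |(d' : ℝ)| := abs_pos.2 (by exact_mod_cast hd0')
  have nat : ∀ e f : ℤ, e.natAbs < f.natAbs → |(e : ℝ)| < |(f : ℝ)| := by
    intro e f h
    have : |e| < |f| := by rw [Int.abs_eq_natAbs, Int.abs_eq_natAbs]; exact_mod_cast h
    exact_mod_cast this
  have btw : ∀ {e : ℤ} {a : ℝ}, ((0 ≤ a ∧ a ≤ e) ∨ (e ≤ a ∧ a ≤ 0)) → |a| ≤ |(e : ℝ)| := by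
    rintro e a (⟨h1, h2⟩ | ⟨h1, h2⟩)
    · rwa [abs_of_nonneg h1, abs_of_nonneg (h1.trans h2)]
    · rw [abs_of_nonpos h2, abs_of_nonpos (h1.trans h2)]; linarith
  have B := btw h.between
  have B' := btw h'.between
  rcases h with ⟨-, hb⟩ | ⟨ha, hb⟩ <;> rcases h' with ⟨-, hb'⟩ | ⟨ha', hb'⟩
  · have : a = 0 := by
      by_contra h0
      have := mul_lt_mul_of_pos_right hs' (abs_pos.2 h0)
      linarith
    exact ⟨this, by rw [hb, this]; simp⟩
  · exfalso
    rw [ha'] at hb B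
    have := mul_lt_mul_of_pos_right hs' p'
    rcases hb' with ⟨rfl, hb'⟩ | ⟨rfl, hb'⟩
    · linarith
    · rcases ho with ⟨-, -, ho⟩ | ⟨-, ho⟩ | ⟨-, ho, -⟩
      · linarith [nat _ _ ho]
      · simp at ho
      · simp at ho
  · exfalso
    rw [ha] at hb' B'
    have := mul_lt_mul_of_pos_right hs' p
    rcases hb with ⟨rfl, hb⟩ | ⟨rfl, hb⟩
    · rcases ho with ⟨ho, -⟩ | ⟨ho, -⟩ | ⟨-, -, ho⟩
      · simp at ho
      · simp at ho
      · linarith [nat _ _ ho]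
    · linarith
  · exfalso
    have hdd : (d : ℝ) = d' := ha.symm.trans ha'
    have := mul_lt_mul_of_pos_right hs' p
    rcases ho with ⟨-, -, ho⟩ | ⟨rfl, rfl⟩ | ⟨-, -, ho⟩
    · have := nat _ _ ho
      rw [hdd] at this
      exact lt_irrefl _ this
    · rw [← hdd] at hb'
      simp only [Bool.false_eq_true, false_and, false_or, true_and, Bool.true_eq_false,
        or_false] at hb hb'
      linarith
    · have := nat _ _ ho
      rw [hdd] at this
      exact lt_irrefl _ this

theorem InArm.meet {i i' : Bool} {d d' s s' : ℤ} {a b : ℝ} (h : InArm i d s a b)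
    (h' : InArm i' d' s' a b) (hne : i = i' → d ≠ d') (h1 : Before i d i' d' → s < s')
    (h2 : Before i' d' i d → s' < s) : a = 0 ∧ b = 0 := by
  by_cases hs : (0 < d ∧ 0 < d') ∨ (d < 0 ∧ d' < 0)
  · have : Before i d i' d' ∨ Before i' d' i d := by
      cases i <;> cases i'
      · have := hne rfl
        rcases lt_or_ge d.natAbs d'.natAbs with h | h
        · exact .inl ⟨hs, .inl ⟨rfl, rfl, h⟩⟩
        · exact .inr ⟨by omega, .inl ⟨rfl, rfl, by omega⟩⟩
      · exact .inl ⟨hs, .inr (.inl ⟨rfl, rfl⟩)⟩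
      · exact .inr ⟨by omega, .inr (.inl ⟨rfl, rfl⟩)⟩
      · have := hne rfl
        rcases lt_or_ge d.natAbs d'.natAbs with h | h
        · exact .inr ⟨by omega, .inr (.inr ⟨rfl, rfl, h⟩)⟩
        · exact .inl ⟨hs, .inr (.inr ⟨rfl, rfl, by omega⟩)⟩
    rcases this with hb | hb
    · exact h.meet_of_before h' hb (h1 hb)
    · exact h'.meet_of_before h hb (h2 hb)
  · have ha : a = 0 := by
      have B := h.between
      have B' := h'.between
      rcases le_or_gt d 0 with hd | hd
      · have c1 : (d : ℝ) ≤ 0 := by exact_mod_cast hd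
        rcases lt_or_ge d' 0 with hd' | hd'
        · have : d = 0 := by omega
          have : (d : ℝ) = 0 := by exact_mod_cast this
          grind
        · have c2 : (0 : ℝ) ≤ d' := by exact_mod_cast hd'
          grind
      · have c1 : (0 : ℝ) < d := by exact_mod_cast hd
        have c2 : (d' : ℝ) ≤ 0 := by
          have : d' ≤ 0 := by omega
          exact_mod_cast this
        grind
    subst ha
    refine ⟨rfl, ?_⟩
    by_cases hd : d = 0
    · by_cases hd' : d' = 0
      · subst hd hd'
        simp only [InArm, abs_zero, mul_zero, Int.cast_zero, le_refl, and_self, true_and,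
          or_self] at h h'
        cases i <;> cases i' <;> simp at h h' hne
        all_goals grind
      · exact h'.at_zero hd'
    · exact h.at_zero hd

end Arms

/-! ### Slopes, and crossings of strands -/

section Slopes

variable {W : Type*}

/-- The strands at a vertex `w`: `true` marks those that leave `w` upwards. -/
def Layout.Arm (L : Layout W) (w : W) : Bool → W → Prop
  | true, y => L.up w y
  | false, y => L.up y w

/-- The column of a strand at `w`. -/
def Layout.colAt (L : Layout W) (w : W) : Bool → W → ℤ
  | true, y => L.c w y
  | false, y => L.c y w

theorem Layout.Arm.unique {L : Layout W} {w y : W} {i i' : Bool} (h : L.Arm w i y)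
    (h' : L.Arm w i' y) : i = i' := by
  cases i <;> cases i'
  · rfl
  · exact absurd (L.row_lt _ _ h) (L.row_lt _ _ h').asymm
  · exact absurd (L.row_lt _ _ h) (L.row_lt _ _ h').asymm
  · rfl

/-- Every strand gets one of the slopes `-1`, `0`, `1` at each of its ends, in the order of the ports
on either side of the vertex. -/
theorem Layout.exists_slopes [Finite W] (L : Layout W) : ∃ s : W → Bool → W → ℤ,
    (∀ w i y, L.Arm w i y → -1 ≤ s w i y ∧ s w i y ≤ 1) ∧
    ∀ w i y i' y', L.Arm w i y → L.Arm w i' y' →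
      Before i (L.colAt w i y - L.x w) i' (L.colAt w i' y' - L.x w) → s w i y < s w i' y' := by
  classical
  set T : W → Bool → W → Set W := fun w i y => {y' | ∃ i', L.Arm w i' y' ∧
    Before i' (L.colAt w i' y' - L.x w) i (L.colAt w i y - L.x w)} with hT
  have hself : ∀ w i y, L.Arm w i y → y ∉ T w i y := by
    rintro w i y h ⟨i', h', hb⟩
    obtain rfl := h.unique h'
    exact hb.irrefl
  have hcard : ∀ w i y, L.Arm w i y → (T w i y).ncard ≤ 2 := by
    intro w i y h
    have side : ∃ F : Finset W, F.card ≤ 3 ∧ (T w i y = ∅ ∨ y ∈ F ∧ T w i y ⊆ F) := by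
      rcases lt_trichotomy (L.colAt w i y) (L.x w) with hlt | heq | hgt
      · obtain ⟨F, h1, h2, h3⟩ := L.left w
        have key : ∀ i' y', L.Arm w i' y' → L.colAt w i' y' < L.x w → y' ∈ F := by
          rintro (_ | _) y' h' h''
          · exact h2 y' h' h''
          · exact h3 y' h' h''
        refine ⟨F, h1, .inr ⟨key i y h hlt, ?_⟩⟩
        rintro y' ⟨i', h', hb, -⟩
        exact key i' y' h' (by omega)
      · refine ⟨∅, by simp, .inl ?_⟩
        ext y'
        simp only [hT, Set.mem_ofPred_eq, Set.mem_empty_iff_false, iff_false]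
        rintro ⟨i', -, hb, -⟩
        omega
      · obtain ⟨F, h1, h2, h3⟩ := L.right w
        have key : ∀ i' y', L.Arm w i' y' → L.x w < L.colAt w i' y' → y' ∈ F := by
          rintro (_ | _) y' h' h''
          · exact h2 y' h' h''
          · exact h3 y' h' h''
        refine ⟨F, h1, .inr ⟨key i y h hgt, ?_⟩⟩
        rintro y' ⟨i', h', hb, -⟩
        exact key i' y' h' (by omega)
    obtain ⟨F, hF, h0 | ⟨hy, hs⟩⟩ := side
    · simp [h0]
    · have : T w i y ⊆ (F.erase y : Finset W) := by
        intro y' hy'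
        have hne : y' ≠ y := by
          rintro rfl
          exact hself w i y' h hy'
        simpa [hne] using hs hy'
      have h1 := Set.ncard_le_ncard this (Finset.finite_toSet _)
      rw [Set.ncard_coe_finset, Finset.card_erase_of_mem hy] at h1
      omega
  refine ⟨fun w i y => (T w i y).ncard - 1, fun w i y h => ?_, fun w i y i' y' h h' hb => ?_⟩
  · have := hcard w i y h
    constructor <;> push_cast <;> omega
  · have : T w i y ⊂ T w i' y' := by
      rw [Set.ssubset_iff_of_subset]
      · exact ⟨y, ⟨i, h, hb⟩, hself w i y h⟩
      · rintro z ⟨j, hz, hj⟩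
        exact ⟨j, hz, hj.trans hb⟩
    have := Set.ncard_lt_ncard this (Set.toFinite _)
    simp only
    omega

/-- A layout together with a choice of slopes and a scale: rows are `4 * M` apart, where `M` bounds
the horizontal extent of the ports. -/
structure Frame (W : Type*) extends Layout W where
  s : W → Bool → W → ℤ
  s_abs : ∀ w i y, toLayout.Arm w i y → -1 ≤ s w i y ∧ s w i y ≤ 1
  s_lt : ∀ w i y i' y', toLayout.Arm w i y → toLayout.Arm w i' y' →
    Before i (toLayout.colAt w i y - x w) i' (toLayout.colAt w i' y' - x w) → s w i y < s w i' y'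
  M : ℤ
  M_pos : 0 < M
  le_M : ∀ w i y, |toLayout.colAt w i y - x w| ≤ M

theorem Layout.exists_frame [Finite W] (L : Layout W) : ∃ F : Frame W, F.toLayout = L := by
  obtain ⟨s, h1, h2⟩ := L.exists_slopes
  have hfin : (Set.range fun p : W × Bool × W => |L.colAt p.1 p.2.1 p.2.2 - L.x p.1|).Finite :=
    Set.finite_range _
  obtain ⟨m, hm⟩ := hfin.bddAbove
  exact ⟨{ L with
    s := s
    s_abs := h1
    s_lt := h2
    M := max m 1
    M_pos := by simp
    le_M := fun w i y => (hm ⟨(w, i, y), rfl⟩).trans (le_max_left _ _) }, rfl⟩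

namespace Frame

variable (F : Frame W)

/-- The height of a vertex. -/
def Y (w : W) : ℤ := 4 * F.M * F.row w

/-- The position of a vertex. -/
def pos (w : W) : ℤ × ℤ := (F.x w, F.Y w)

/-- The point where the strand at `w` passes from its port to its column. -/
noncomputable def bend (w : W) (i : Bool) (y : W) : ℝ × ℝ :=
  (F.colAt w i y, F.Y w + F.s w i y * |((F.colAt w i y - F.x w : ℤ) : ℝ)|)

/-- The points of the port of a strand at `w`. -/
def InPort (w : W) (i : Bool) (y : W) (z : ℝ × ℝ) : Prop :=
  ((0 ≤ z.1 - F.x w ∧ z.1 - F.x w ≤ (F.colAt w i y - F.x w : ℤ)) ∨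
    ((F.colAt w i y - F.x w : ℤ) ≤ z.1 - F.x w ∧ z.1 - F.x w ≤ 0)) ∧
    z.2 - F.Y w = F.s w i y * |z.1 - F.x w|

/-- The points of the strand from `a` up to `b`. -/
def InStrand (a b : W) (z : ℝ × ℝ) : Prop :=
  F.InPort a true b z ∨ (z.1 = F.c a b ∧ (F.bend a true b).2 ≤ z.2 ∧ z.2 ≤ (F.bend b false a).2) ∨
    F.InPort b false a z

variable {F}

theorem abs_slope {w y : W} {i : Bool} (h : F.Arm w i y) {d : ℝ} (hd : |d| ≤ F.M) :
    abs ((F.s w i y : ℝ) * |d|) ≤ F.M := by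
  obtain ⟨h1, h2⟩ := F.s_abs w i y h
  have h3 : |(F.s w i y : ℝ)| ≤ 1 := by
    rw [abs_le]; exact ⟨by exact_mod_cast h1, by exact_mod_cast h2⟩
  rw [abs_mul, abs_abs]
  calc |(F.s w i y : ℝ)| * |d| ≤ 1 * |d| := by gcongr
    _ ≤ F.M := by linarith

theorem le_M' (w : W) (i : Bool) (y : W) : |((F.colAt w i y - F.x w : ℤ) : ℝ)| ≤ F.M := by
  exact_mod_cast F.le_M w i y

theorem bend_near {w y : W} {i : Bool} (h : F.Arm w i y) :
    |(F.bend w i y).2 - F.Y w| ≤ F.M := by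
  simp only [bend, add_sub_cancel_left]
  exact abs_slope h (le_M' w i y)

theorem InPort.near {w y : W} {i : Bool} {z : ℝ × ℝ} (h : F.Arm w i y) (hz : F.InPort w i y z) :
    |z.2 - F.Y w| ≤ F.M := by
  rw [hz.2]
  refine abs_slope h (le_trans ?_ (le_M' w i y))
  rcases hz.1 with ⟨h1, h2⟩ | ⟨h1, h2⟩
  · rw [abs_of_nonneg h1, abs_of_nonneg (h1.trans h2)]; exact h2
  · rw [abs_of_nonpos h2, abs_of_nonpos (h1.trans h2)]; linarith

theorem Y_gap {a b : W} (h : F.row a < F.row b) : (F.Y a : ℝ) + 4 * F.M ≤ F.Y b := by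
  have h1 : F.row a + 1 ≤ F.row b := h
  have h2 : (F.row a : ℤ) + 1 ≤ F.row b := by exact_mod_cast h1
  have h3 := F.M_pos
  have : F.Y a + 4 * F.M ≤ F.Y b := by
    simp only [Y]; nlinarith
  exact_mod_cast this

theorem M_pos' : (0 : ℝ) < F.M := by exact_mod_cast F.M_pos

theorem InStrand.range {a b : W} (hab : F.up a b) {z : ℝ × ℝ} (hz : F.InStrand a b z) :
    F.Y a - F.M ≤ z.2 ∧ z.2 ≤ F.Y b + F.M := by
  have g := Y_gap (F.row_lt _ _ hab)
  have m := M_pos' (F := F)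
  have ha : F.Arm a true b := hab
  have hb : F.Arm b false a := hab
  rcases hz with h | ⟨-, h1, h2⟩ | h
  · have := abs_le.1 (h.near ha); constructor <;> linarith
  · have := abs_le.1 (bend_near ha)
    have := abs_le.1 (bend_near hb)
    constructor <;> linarith
  · have := abs_le.1 (h.near hb); constructor <;> linarith

/-- What a strand looks like at the height of a vertex. -/
theorem InStrand.local {a b w : W} (hab : F.up a b) {z : ℝ × ℝ} (hz : F.InStrand a b z)
    (hw : 0 < F.row w) (hzw : |z.2 - F.Y w| ≤ F.M) :
    (∃ i y, F.Arm w i y ∧ (w = a ∧ i = true ∧ y = b ∨ w = b ∧ i = false ∧ y = a) ∧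
      InArm i (F.colAt w i y - F.x w) (F.s w i y) (z.1 - F.x w) (z.2 - F.Y w)) ∨
    (F.row a < F.row w ∧ F.row w < F.row b ∧ z.1 = F.c a b) := by
  have m := M_pos' (F := F)
  have ha : F.Arm a true b := hab
  have hb : F.Arm b false a := hab
  have hrow := F.row_lt _ _ hab
  have g := Y_gap hrow
  rw [abs_le] at hzw
  -- vertices whose bands overlap coincide
  have same : ∀ v, |z.2 - F.Y v| ≤ F.M → w = v := by
    intro v hv
    rw [abs_le] at hv
    refine F.row_inj _ _ hw ?_
    rcases lt_trichotomy (F.row w) (F.row v) with h | h | h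
    · linarith [Y_gap h]
    · exact h
    · linarith [Y_gap h]
  rcases hz with h | ⟨h0, h1, h2⟩ | h
  · obtain rfl := same a (h.near ha)
    exact .inl ⟨true, b, hab, .inl ⟨rfl, rfl, rfl⟩, .inl h⟩
  · have na := abs_le.1 (bend_near ha)
    have nb := abs_le.1 (bend_near hb)
    by_cases hwa : w = a
    · subst hwa
      refine .inl ⟨true, b, hab, .inl ⟨rfl, rfl, rfl⟩, .inr ⟨?_, .inl ⟨rfl, ?_⟩⟩⟩
      · rw [h0]; push_cast; rfl
      · simp only [bend] at h1; linarith
    by_cases hwb : w = b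
    · subst hwb
      refine .inl ⟨false, a, hab, .inr ⟨rfl, rfl, rfl⟩, .inr ⟨?_, .inr ⟨rfl, ?_⟩⟩⟩
      · rw [h0]; push_cast; rfl
      · simp only [bend] at h2; linarith
    refine .inr ⟨?_, ?_, h0⟩
    · rcases lt_trichotomy (F.row w) (F.row a) with h | h | h
      · linarith [Y_gap h]
      · exact absurd (F.row_inj _ _ hw h) hwa
      · exact h
    · rcases lt_trichotomy (F.row w) (F.row b) with h | h | h
      · exact h
      · exact absurd (F.row_inj _ _ hw h) hwb
      · linarith [Y_gap h]
  · obtain rfl := same b (h.near hb)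
    exact .inl ⟨false, a, hab, .inr ⟨rfl, rfl, rfl⟩, .inl h⟩

theorem toR_pos (w : W) : toR (F.pos w) = ((F.x w : ℝ), (F.Y w : ℝ)) := rfl

/-- A strand meets no vertices but its ends. -/
theorem InStrand.vertex {a b w : W} (hab : F.up a b) (hw : 0 < F.row w)
    (hz : F.InStrand a b (toR (F.pos w))) : w = a ∨ w = b := by
  have m := M_pos' (F := F)
  rcases hz.local hab hw (by simp [toR_pos, m.le]) with ⟨i, y, -, h, -⟩ | ⟨h1, h2, h3⟩
  · tauto
  · rw [toR_pos] at h3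
    replace h3 : F.x w = F.c a b := by
      simp only at h3
      exact_mod_cast h3
    rcases F.pass a b w hab h1 h2 with h | h <;> exact absurd h3 (by omega)

theorem meet_near {a b a' b' w : W} (hab : F.up a b) (hab' : F.up a' b') (hne : (a, b) ≠ (a', b'))
    {z : ℝ × ℝ} (hz : F.InStrand a b z) (hz' : F.InStrand a' b' z) (hw : w = a ∨ w = b)
    (hzw : |z.2 - F.Y w| ≤ F.M) :
    ∃ w, (w = a ∨ w = b) ∧ (w = a' ∨ w = b') ∧ z = toR (F.pos w) := by
  have hrow : 0 < F.row w := by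
    have := F.row_lt _ _ hab
    have := F.row_pos _ _ hab
    rcases hw with rfl | rfl <;> omega
  obtain ⟨i, y, h1, h2, h3⟩ := (hz.local hab hrow hzw).resolve_right (by
    rintro ⟨h1, h2, -⟩
    rcases hw with rfl | rfl <;> omega)
  rcases hz'.local hab' hrow hzw with ⟨i', y', h1', h2', h3'⟩ | ⟨p1, p2, p3⟩
  · refine ⟨w, hw, by tauto, ?_⟩
    have hcol : i = i' → F.colAt w i y - F.x w ≠ F.colAt w i' y' - F.x w := by
      rintro rfl e
      have e : F.colAt w i y = F.colAt w i y' := by omega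
      apply hne
      cases i
      · have := F.col_ne y w y' w h1 h1' (F.row_lt _ _ h1) (F.row_lt _ _ h1') e
        simp only [reduceCtorEq, false_and, and_false, false_or, true_and] at h2 h2'
        obtain ⟨rfl, rfl⟩ := h2
        obtain ⟨rfl, rfl⟩ := h2'
        rw [this.1]
      · have := F.col_ne w y w y' h1 h1' (F.row_lt _ _ h1') (F.row_lt _ _ h1) e
        simp only [reduceCtorEq, false_and, and_false, or_false, true_and] at h2 h2'
        obtain ⟨rfl, rfl⟩ := h2
        obtain ⟨rfl, rfl⟩ := h2'
        rw [this.2]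
    obtain ⟨e1, e2⟩ := h3.meet h3' hcol (F.s_lt _ _ _ _ _ h1 h1') (F.s_lt _ _ _ _ _ h1' h1)
    rw [toR_pos]
    exact Prod.ext (sub_eq_zero.1 e1) (sub_eq_zero.1 e2)
  · exfalso
    have hB := h3.between
    rw [p3] at hB
    have hB : (0 ≤ F.c a' b' - F.x w ∧ F.c a' b' ≤ F.colAt w i y) ∨
        (F.colAt w i y ≤ F.c a' b' ∧ F.c a' b' - F.x w ≤ 0) := by
      push_cast at hB
      rcases hB with ⟨q1, q2⟩ | ⟨q1, q2⟩
      · exact .inl ⟨by exact_mod_cast q1, by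
          have : (F.c a' b' : ℝ) ≤ F.colAt w i y := by linarith
          exact_mod_cast this⟩
      · exact .inr ⟨by
          have : (F.colAt w i y : ℝ) ≤ F.c a' b' := by linarith
          exact_mod_cast this, by exact_mod_cast q2⟩
    rcases F.pass a' b' w hab' p1 p2 with ⟨q1, q2, q3⟩ | ⟨q1, q2, q3⟩
    · have : F.c a' b' < F.colAt w i y := by
        cases i
        · exact q2 y h1
        · exact q3 y h1
      omega
    · have : F.colAt w i y < F.c a' b' := by
        cases i
        · exact q2 y h1
        · exact q3 y h1
      omega

/-- Different strands meet only in common ends. -/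
theorem meet {a b a' b' : W} (hab : F.up a b) (hab' : F.up a' b') (hne : (a, b) ≠ (a', b'))
    {z : ℝ × ℝ} (hz : F.InStrand a b z) (hz' : F.InStrand a' b' z) :
    ∃ w, (w = a ∨ w = b) ∧ (w = a' ∨ w = b') ∧ z = toR (F.pos w) := by
  by_cases h : ∃ w, (w = a ∨ w = b) ∧ |z.2 - F.Y w| ≤ F.M
  · obtain ⟨w, hw, h⟩ := h
    exact meet_near hab hab' hne hz hz' hw h
  by_cases h' : ∃ w, (w = a' ∨ w = b') ∧ |z.2 - F.Y w| ≤ F.M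
  · obtain ⟨w, hw, h'⟩ := h'
    obtain ⟨w, h1, h2, h3⟩ := meet_near hab' hab hne.symm hz' hz hw h'
    exact ⟨w, h2, h1, h3⟩
  -- far from all four ends both strands are vertical, in different columns
  exfalso
  push Not at h h'
  have far : ∀ {a b : W}, F.up a b → F.InStrand a b z → (∀ w, w = a ∨ w = b → F.M < |z.2 - F.Y w|) →
      z.1 = F.c a b ∧ F.Y a + F.M < z.2 ∧ z.2 < F.Y b - F.M := by
    intro a b hab hz h
    have ha : F.Arm a true b := hab
    have hb : F.Arm b false a := hab
    have r := hz.range hab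
    have g1 := h a (.inl rfl)
    have g2 := h b (.inr rfl)
    rcases hz with hz | ⟨h0, -, -⟩ | hz
    · exact absurd (hz.near ha) (not_le.2 g1)
    · refine ⟨h0, ?_, ?_⟩
      · rcases lt_abs.1 g1 with g | g <;> linarith
      · rcases lt_abs.1 g2 with g | g <;> linarith
    · exact absurd (hz.near hb) (not_le.2 g2)
  obtain ⟨c1, c2, c3⟩ := far hab hz h
  obtain ⟨c1', c2', c3'⟩ := far hab' hz' h'
  have m := M_pos' (F := F)
  have lt : ∀ {v w : W}, (F.Y v : ℝ) < F.Y w → F.row v < F.row w := by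
    intro v w h
    by_contra hle
    rcases (not_lt.1 hle).eq_or_lt with e | e
    · simp [Y, e] at h
    · linarith [Y_gap e]
  have := F.col_ne a b a' b' hab hab' (lt (by linarith)) (lt (by linarith))
    (by exact_mod_cast c1.symm.trans c1')
  exact hne (by rw [this.1, this.2])

end Frame

end Slopes

/-! ### The octilinear drawing -/

section Drawing

theorem mem_vertical {P Q z : ℝ × ℝ} (h1 : P.1 = Q.1) (h2 : P.2 ≤ Q.2) (hz : z ∈ segment ℝ P Q) :
    z.1 = P.1 ∧ P.2 ≤ z.2 ∧ z.2 ≤ Q.2 := by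
  rw [segment_eq_image'] at hz
  obtain ⟨t, ⟨h0, ht⟩, rfl⟩ := hz
  simp only [Prod.fst_add, Prod.snd_add, Prod.smul_fst, Prod.smul_snd, smul_eq_mul, Prod.fst_sub,
    Prod.snd_sub]
  refine ⟨by rw [h1]; ring, by nlinarith, by nlinarith⟩

theorem Polyline.OctiSeg.symm {P Q : ℝ × ℝ} (h : Polyline.OctiSeg P Q) : Polyline.OctiSeg Q P := by
  rcases h with h | h | h | h
  · exact .inl (by linarith)
  · exact .inr (.inl (by linarith))
  · exact .inr (.inr (.inl (by linarith)))
  · exact .inr (.inr (.inr (by linarith)))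

namespace Frame

variable {W : Type*} {F : Frame W}

theorem octiSeg_port {w y : W} {i : Bool} (h : F.Arm w i y) :
    Polyline.OctiSeg (toR (F.pos w)) (F.bend w i y) := by
  obtain ⟨h1, h2⟩ := F.s_abs w i y h
  have : F.s w i y = -1 ∨ F.s w i y = 0 ∨ F.s w i y = 1 := by omega
  simp only [Polyline.OctiSeg, bend, toR_pos, add_sub_cancel_left]
  push_cast
  rcases this with e | e | e <;> rw [e] <;>
    rcases abs_choice ((F.colAt w i y : ℝ) - F.x w) with e' | e' <;> rw [e'] <;> simp

theorem mem_port {w y : W} {i : Bool} {z : ℝ × ℝ}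
    (hz : z ∈ segment ℝ (toR (F.pos w)) (F.bend w i y)) : F.InPort w i y z := by
  rw [segment_eq_image'] at hz
  obtain ⟨t, ⟨h0, ht⟩, rfl⟩ := hz
  simp only [InPort, bend, toR_pos, Prod.fst_add, Prod.snd_add, Prod.smul_fst, Prod.smul_snd,
    smul_eq_mul, Prod.fst_sub, Prod.snd_sub, add_sub_cancel_left, abs_mul, abs_of_nonneg h0]
  push_cast
  refine ⟨?_, by ring⟩
  rcases le_total 0 ((F.colAt w i y : ℝ) - F.x w) with h | h
  · exact .inl ⟨by positivity, by nlinarith⟩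
  · exact .inr ⟨by nlinarith, by nlinarith⟩

theorem bend_lt {a b : W} (hab : F.up a b) : (F.bend a true b).2 < (F.bend b false a).2 := by
  have ha : F.Arm a true b := hab
  have hb : F.Arm b false a := hab
  have := abs_le.1 (bend_near ha)
  have := abs_le.1 (bend_near hb)
  linarith [Y_gap (F.row_lt _ _ hab), M_pos' (F := F)]

theorem mem_column {a b : W} (hab : F.up a b) {z : ℝ × ℝ}
    (hz : z ∈ segment ℝ (F.bend a true b) (F.bend b false a)) : F.InStrand a b z :=
  .inr (.inl (mem_vertical (P := F.bend a true b) (Q := F.bend b false a) rfl (bend_lt hab).le hz))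

/-- A strand is a polyline with at most two bends. -/
theorem strand_poly {a b : W} (hab : F.up a b) : ∃ p : Polyline, p.Octilinear ∧ p.Simple ∧
    p.bends ≤ 2 ∧ p.pt 0 = toR (F.pos a) ∧ p.pt p.len = toR (F.pos b) ∧
    ∀ z ∈ p.image, F.InStrand a b z := by
  have ha : F.Arm a true b := hab
  have hb : F.Arm b false a := hab
  have hlt := bend_lt hab
  have port : ∀ {w y : W} {i : Bool}, F.colAt w i y = F.x w → toR (F.pos w) = F.bend w i y := by
    intro w y i h
    simp [bend, toR_pos, h]
  have col : ∀ {w y : W} {i : Bool}, F.colAt w i y ≠ F.x w →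
      (F.bend w i y).1 - (toR (F.pos w)).1 ≠ 0 := by
    intro w y i h
    simp only [bend, toR_pos]
    exact sub_ne_zero.2 (by exact_mod_cast h)
  have e : (F.bend b false a).1 = (F.bend a true b).1 := rfl
  obtain ⟨p, h1, h2, h3, h4, h5, h6⟩ := exists_polyline (P := toR (F.pos a)) (Q := F.bend a true b)
    (R := F.bend b false a) (S := toR (F.pos b)) (fun h => hlt.ne (by rw [← h]))
    (octiSeg_port ha) (.inr (.inl (by rw [e, sub_self]))) (octiSeg_port hb).symm
    (by
      by_cases h : F.c a b = F.x a
      · exact .inl (port h)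
      · right
        have : area (toR (F.pos a)) (F.bend a true b) (F.bend b false a) =
            ((F.bend a true b).1 - (toR (F.pos a)).1) *
              ((F.bend b false a).2 - (F.bend a true b).2) := by
          rw [area, e]; ring
        rw [this]
        exact mul_ne_zero (col h) (sub_ne_zero.2 hlt.ne'))
    (by
      by_cases h : F.c a b = F.x b
      · exact .inl (port (w := b) (y := a) (i := false) h).symm
      · right
        have : area (F.bend a true b) (F.bend b false a) (toR (F.pos b)) =
            ((F.bend b false a).1 - (toR (F.pos b)).1) *
              ((F.bend b false a).2 - (F.bend a true b).2) := by
          rw [area, e]; ring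
        rw [this]
        exact mul_ne_zero (col h) (sub_ne_zero.2 hlt.ne'))
    (by
      intro z hz hz'
      rw [segment_symm] at hz'
      have := abs_le.1 ((mem_port hz).near ha)
      have := abs_le.1 ((mem_port hz').near hb)
      linarith [Y_gap (F.row_lt _ _ hab), M_pos' (F := F)])
  refine ⟨p, h1, h2, h3, h4, h5, fun z hz => ?_⟩
  rcases h6 z hz with h | h | h
  · exact .inl (mem_port h)
  · exact mem_column hab h
  · rw [segment_symm] at h
    exact .inr (.inr (mem_port h))

/-- Two strands into a top vertex `h`, both leaving their lower ends vertically and one of them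
entering `h` vertically, form a polyline with two bends. -/
theorem cap_poly {a t h : W} (ha : F.up a h) (ht : F.up t h) (hne : a ≠ t)
    (ca : F.c a h = F.x a) (ct : F.c t h = F.x t) (hx : F.x h = F.x a) :
    ∃ p : Polyline, p.Octilinear ∧ p.Simple ∧
    p.bends ≤ 2 ∧ p.pt 0 = toR (F.pos a) ∧ p.pt p.len = toR (F.pos t) ∧
    ∀ z ∈ p.image, F.InStrand a h z ∨ F.InStrand t h z := by
  have ha' : F.Arm h false t := ht
  have hxt : F.x t ≠ F.x a := by
    intro e
    exact hne (F.col_ne a h t h ha ht (F.row_lt _ _ ha) (F.row_lt _ _ ht) (by omega)).1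
  have hxt' : (F.x t : ℝ) ≠ F.x a := by exact_mod_cast hxt
  have port : ∀ {w y : W} {i : Bool}, F.colAt w i y = F.x w → F.bend w i y = toR (F.pos w) := by
    intro w y i h
    simp [bend, toR_pos, h]
  have b1 : F.bend a true h = toR (F.pos a) := port ca
  have b2 : F.bend h false a = toR (F.pos h) := port (ca.trans hx.symm)
  have b3 : F.bend t true h = toR (F.pos t) := port ct
  have la := bend_lt ha
  have lt := bend_lt ht
  rw [b1, b2] at la
  rw [b3] at lt
  have x1 : (toR (F.pos a)).1 = F.x a := rfl
  have x2 : (toR (F.pos h)).1 = F.x a := by rw [← hx]; rfl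
  have x3 : (F.bend h false t).1 = F.x t := by rw [← ct]; rfl
  have x4 : (toR (F.pos t)).1 = F.x t := rfl
  obtain ⟨p, h1, h2, h3, h4, h5, h6⟩ := exists_polyline (P := toR (F.pos a)) (Q := toR (F.pos h))
    (R := F.bend h false t) (S := toR (F.pos t)) (fun e => hxt' (by rw [← x2, ← x3, e]))
    (.inr (.inl (by rw [x1, x2, sub_self]))) (octiSeg_port ha')
    (.inr (.inl (by rw [x3, x4, sub_self])))
    (by
      right
      have : area (toR (F.pos a)) (toR (F.pos h)) (F.bend h false t) =
          -(((toR (F.pos h)).2 - (toR (F.pos a)).2) * (F.x t - F.x a)) := by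
        rw [area, x1, x2, x3]; ring
      rw [this]
      exact neg_ne_zero.2 (mul_ne_zero (sub_ne_zero.2 la.ne') (sub_ne_zero.2 hxt')))
    (by
      right
      have : area (toR (F.pos h)) (F.bend h false t) (toR (F.pos t)) =
          -(((F.bend h false t).2 - (toR (F.pos t)).2) * (F.x t - F.x a)) := by
        rw [area, x2, x3, x4]; ring
      rw [this]
      exact neg_ne_zero.2 (mul_ne_zero (sub_ne_zero.2 lt.ne') (sub_ne_zero.2 hxt')))
    (by
      intro z hz hz'
      rw [segment_symm] at hz'
      have e1 := (mem_vertical (x1.trans x2.symm) la.le hz).1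
      have e2 := (mem_vertical (x4.trans x3.symm) lt.le hz').1
      exact hxt' (by rw [← x4, ← x1, ← e1, ← e2]))
  refine ⟨p, h1, h2, h3, h4, h5, fun z hz => ?_⟩
  rcases h6 z hz with h | h | h
  · exact .inl (mem_column ha (by rwa [b1, b2]))
  · exact .inr (.inr (.inr (mem_port h)))
  · rw [segment_symm] at h
    exact .inr (mem_column ht (by rwa [b3]))

end Frame

variable {V : Type*} {G : SimpleGraph V}

/-- The edge `e` of `G` runs along the strand from `a` to `b`. A strand that ends in a phantom
vertex is one half of a cap. -/
def Along (L : Layout (V ⊕ V)) (e : Sym2 V) (a b : V ⊕ V) : Prop :=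
  L.up a b ∧ ∃ u, a = .inl u ∧ ((∃ v, e = s(u, v) ∧ b = .inl v) ∨
    ∃ h t, b = .inr h ∧ e = s(u, t) ∧ (L.Cap h u t ∨ L.Cap h t u))

theorem Along.mem {L : Layout (V ⊕ V)} {e : Sym2 V} {a b : V ⊕ V} (h : Along L e a b) {w : V}
    (hw : .inl w = a ∨ .inl w = b) : w ∈ e := by
  obtain ⟨-, u, rfl, ⟨v, rfl, rfl⟩ | ⟨k, t, rfl, rfl, -⟩⟩ := h
  · simpa using hw
  · simp only [Sum.inl.injEq, reduceCtorEq, or_false] at hw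
    simp [hw]

theorem Along.top {L : Layout (V ⊕ V)} {e e' : Sym2 V} {a a' : V ⊕ V} {k : V}
    (h : Along L e a (.inr k)) (h' : Along L e' a' (.inr k)) : e = e' := by
  obtain ⟨hu, u, rfl, ⟨v, -, hv⟩ | ⟨k, t, hk, rfl, hc⟩⟩ := h
  · cases hv
  obtain ⟨hu', u', rfl, ⟨v, -, hv⟩ | ⟨k', t', hk', rfl, hc'⟩⟩ := h'
  · cases hv
  cases hk
  cases hk'
  have key : ∀ {p q p' q' : V}, L.Cap k p q → L.Cap k p' q' → s(p, q) = s(p', q') := by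
    intro p q p' q' c c'
    have h1 := c.only _ c'.up_left
    have h2 := c.only _ c'.up_right
    have h3 := c'.ne
    simp only [Sum.inl.injEq] at h1 h2
    rw [Sym2.eq_iff]
    rcases h1 with rfl | rfl <;> rcases h2 with rfl | rfl <;> simp_all
  rcases hc with hc | hc <;> rcases hc' with hc' | hc'
  · exact key hc hc'
  · exact (key hc hc').trans Sym2.eq_swap
  · exact Sym2.eq_swap.trans (key hc hc')
  · exact Sym2.eq_swap.trans ((key hc hc').trans Sym2.eq_swap)

theorem Along.unique {L : Layout (V ⊕ V)} {e e' : Sym2 V} {a b : V ⊕ V}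
    (h : Along L e a b) (h' : Along L e' a b) : e = e' := by
  cases b with
  | inr k => exact h.top h'
  | inl w =>
    obtain ⟨-, u, rfl, ⟨v, rfl, hv⟩ | ⟨k, t, hk, -⟩⟩ := h
    · obtain ⟨-, u', hu, ⟨v', rfl, hv'⟩ | ⟨k, t, hk, -⟩⟩ := h'
      · cases hu; cases hv; cases hv'; rfl
      · cases hk
    · cases hk

/-- Every edge is drawn by a polyline with at most two bends that stays on the strands of the edge. -/
theorem exists_edge_poly (F : Frame (V ⊕ V))
    (hG : ∀ u v, G.Adj u v → F.up (.inl u) (.inl v) ∨ F.up (.inl v) (.inl u) ∨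
      (∃ h, F.Cap h u v) ∨ ∃ h, F.Cap h v u) {e : Sym2 V} (he : e ∈ G.edgeSet) :
    ∃ p : Polyline, p.Octilinear ∧ p.Simple ∧ p.bends ≤ 2 ∧
      (∃ u v, e = s(u, v) ∧ p.pt 0 = toR (F.pos (.inl u)) ∧
        p.pt p.len = toR (F.pos (.inl v))) ∧
      ∀ z ∈ p.image, ∃ a b, Along F.toLayout e a b ∧ F.InStrand a b z := by
  have hstrand : ∀ u v, F.up (.inl u) (.inl v) → ∃ p : Polyline, p.Octilinear ∧ p.Simple ∧
      p.bends ≤ 2 ∧ (∃ u' v', s(u, v) = s(u', v') ∧ p.pt 0 = toR (F.pos (.inl u')) ∧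
        p.pt p.len = toR (F.pos (.inl v'))) ∧
      ∀ z ∈ p.image, ∃ a b, Along F.toLayout s(u, v) a b ∧ F.InStrand a b z := by
    intro u v h
    obtain ⟨p, h1, h2, h3, h4, h5, h6⟩ := F.strand_poly h
    exact ⟨p, h1, h2, h3, ⟨u, v, rfl, h4, h5⟩,
      fun z hz => ⟨_, _, ⟨h, u, rfl, .inl ⟨v, rfl, rfl⟩⟩, h6 z hz⟩⟩
  have hcap : ∀ k u v, F.Cap k u v → ∃ p : Polyline, p.Octilinear ∧ p.Simple ∧
      p.bends ≤ 2 ∧ (∃ u' v', s(u, v) = s(u', v') ∧ p.pt 0 = toR (F.pos (.inl u')) ∧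
        p.pt p.len = toR (F.pos (.inl v'))) ∧
      ∀ z ∈ p.image, ∃ a b, Along F.toLayout s(u, v) a b ∧ F.InStrand a b z := by
    intro k u v h
    have al : Along F.toLayout s(u, v) (.inl u) (.inr k) :=
      ⟨h.up_left, u, rfl, .inr ⟨k, v, rfl, rfl, .inl h⟩⟩
    have ar : Along F.toLayout s(u, v) (.inl v) (.inr k) :=
      ⟨h.up_right, v, rfl, .inr ⟨k, u, rfl, Sym2.eq_swap, .inr h⟩⟩
    rcases h.mid with hm | hm
    · obtain ⟨p, h1, h2, h3, h4, h5, h6⟩ := F.cap_poly h.up_left h.up_right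
        (by simpa using h.ne) h.col_left h.col_right hm
      exact ⟨p, h1, h2, h3, ⟨u, v, rfl, h4, h5⟩,
        fun z hz => (h6 z hz).elim (fun hz => ⟨_, _, al, hz⟩) fun hz => ⟨_, _, ar, hz⟩⟩
    · obtain ⟨p, h1, h2, h3, h4, h5, h6⟩ := F.cap_poly h.up_right h.up_left
        (by simpa using h.ne.symm) h.col_right h.col_left hm
      exact ⟨p, h1, h2, h3, ⟨v, u, Sym2.eq_swap, h4, h5⟩,
        fun z hz => (h6 z hz).elim (fun hz => ⟨_, _, ar, hz⟩) fun hz => ⟨_, _, al, hz⟩⟩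
  induction e with
  | h u v =>
    rcases hG u v he with h | h | ⟨k, h⟩ | ⟨k, h⟩
    · exact hstrand u v h
    · rw [Sym2.eq_swap]; exact hstrand v u h
    · exact hcap k u v h
    · rw [Sym2.eq_swap]; exact hcap k v u h

theorem exists_drawing (F : Frame (V ⊕ V)) (hrow : ∀ v, 0 < F.row (.inl v))
    (htop : ∀ h y, ¬ F.up (.inr h) y)
    (hG : ∀ u v, G.Adj u v → F.up (.inl u) (.inl v) ∨ F.up (.inl v) (.inl u) ∨
      (∃ h, F.Cap h u v) ∨ ∃ h, F.Cap h v u) :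
    ∃ D : OctiDrawing G, D.IsPlanar ∧ ∀ e ∈ G.edgeSet, (D.poly e).bends ≤ 2 := by
  have hall : ∀ e : Sym2 V, ∃ p : Polyline, e ∈ G.edgeSet → p.Octilinear ∧ p.Simple ∧
      p.bends ≤ 2 ∧ (∃ u v, e = s(u, v) ∧ p.pt 0 = toR (F.pos (.inl u)) ∧
        p.pt p.len = toR (F.pos (.inl v))) ∧
      ∀ z ∈ p.image, ∃ a b, Along F.toLayout e a b ∧ F.InStrand a b z := by
    intro e
    by_cases he : e ∈ G.edgeSet
    · obtain ⟨p, hp⟩ := exists_edge_poly F hG he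
      exact ⟨p, fun _ => hp⟩
    · exact ⟨⟨1, le_rfl, fun _ => 0⟩, fun h => absurd h he⟩
  choose poly h1 h2 h3 h4 h5 using hall
  have ends : ∀ u v, G.Adj u v →
      ({(poly s(u, v)).pt 0, (poly s(u, v)).pt (poly s(u, v)).len} : Set (ℝ × ℝ)) =
        {toR (F.pos (.inl u)), toR (F.pos (.inl v))} := by
    intro u v h
    obtain ⟨u', v', e, e1, e2⟩ := h4 s(u, v) h
    rw [e1, e2]
    rcases Sym2.eq_iff.1 e with ⟨rfl, rfl⟩ | ⟨rfl, rfl⟩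
    · rfl
    · exact Set.pair_comm _ _
  have inj : Function.Injective fun v : V => F.pos (.inl v) := by
    intro u v h
    have e : 4 * F.M * (F.row (.inl u) : ℤ) = 4 * F.M * F.row (.inl v) := congrArg Prod.snd h
    have := F.M_pos
    have e := mul_left_cancel₀ (by positivity) e
    exact Sum.inl.inj (F.row_inj _ _ (hrow u) (by exact_mod_cast e))
  refine ⟨⟨fun v => F.pos (.inl v), inj, poly, ends, h1⟩, ⟨h2, ?_, ?_⟩, h3⟩
  · intro u v h
    apply Set.Subset.antisymm
    · rintro _ ⟨hz, w, rfl⟩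
      obtain ⟨a, b, ha, hs⟩ := h5 _ h _ hz
      have := ha.mem (hs.vertex ha.1 (hrow w))
      rcases Sym2.mem_iff.1 this with rfl | rfl <;> simp
    · intro z hz
      refine ⟨?_, ?_⟩
      · have hz' : z ∈ ({(poly s(u, v)).pt 0, (poly s(u, v)).pt (poly s(u, v)).len} :
            Set (ℝ × ℝ)) := by rw [ends u v h]; exact hz
        rcases hz' with rfl | rfl
        · exact (poly s(u, v)).pt_mem_image (Nat.zero_le _)
        · exact (poly s(u, v)).pt_mem_image le_rfl
      · rcases hz with rfl | rfl
        · exact ⟨u, rfl⟩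
        · exact ⟨v, rfl⟩
  · rintro e he e' he' hne z ⟨hz, hz'⟩
    obtain ⟨a, b, ha, hs⟩ := h5 e he z hz
    obtain ⟨a', b', ha', hs'⟩ := h5 e' he' z hz'
    have hab : (a, b) ≠ (a', b') := by
      intro h
      cases h
      exact hne (ha.unique ha')
    obtain ⟨w, hw, hw', rfl⟩ := F.meet ha.1 ha'.1 hab hs hs'
    cases w with
    | inl w => exact ⟨w, ⟨ha.mem hw, ha'.mem hw'⟩, rfl⟩
    | inr k =>
      -- a phantom vertex has no strands above it, so both edges would be the cap through it
      exfalso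
      rcases hw with rfl | rfl
      · exact htop _ _ ha.1
      rcases hw' with rfl | rfl
      · exact htop _ _ ha'.1
      exact hne (ha.top ha')

end Drawing

/-- Every planar simple graph with maximum degree at most `8` admits a
planar octilinear drawing in which every edge has at most two bends. -/
theorem octilinear_two_bends_of_deg8 {V : Type*} [Fintype V]
    (G : SimpleGraph V) (hp : GraphPlanar G) (hd : MaxDegLE G 8) :
    ∃ D : OctiDrawing G, D.IsPlanar ∧ ∀ e ∈ G.edgeSet, (D.poly e).bends ≤ 2 := by
  classical
  obtain ⟨L, hrow, htop, hG⟩ := exists_plan hp hd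
  obtain ⟨F, rfl⟩ := L.exists_frame
  exact exists_drawing F hrow htop hG
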